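/- arXiv:1901.09752 — 4 statements merged into one kernel-verified Lean document; each statement's English description precedes it below -/
import Mathlib

section
/- (Nitsche criterion) Let F : [0,∞) → ℝ be of class C² with F'(w) > 0 and F'(w) + 2w·F''(w) > 0 for all w ≥ 0 (so that ∫_{ℝ²} F(|Du|²) dx is a regular variational integral). Set λ(w) := 2·F''(w)/F'(w). If the integral ∫₁^∞ ((1 + w·λ(w)) / (2 + w·λ(w))) · (dw/w) diverges, then there exists a C² function u : ℝ² → ℝ, not affine linear, satisfying the Euler–Lagrange equation F'(|Du|²)·(u_xx + u_yy) + 2·F''(|Du|²)·(u_x²·u_xx + 2·u_x·u_y·u_xy + u_y²·u_yy) = 0 at every point of ℝ². -/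
open Filter

/-- First partial derivative in the `x`-direction. -/
noncomputable def ux (u : ℝ × ℝ → ℝ) (p : ℝ × ℝ) : ℝ := fderiv ℝ u p (1, 0)

/-- First partial derivative in the `y`-direction. -/
noncomputable def uy (u : ℝ × ℝ → ℝ) (p : ℝ × ℝ) : ℝ := fderiv ℝ u p (0, 1)

/-- Second partial derivative `u_xx`. -/
noncomputable def uxx (u : ℝ × ℝ → ℝ) (p : ℝ × ℝ) : ℝ := fderiv ℝ (ux u) p (1, 0)

/-- Second partial derivative `u_xy`. -/
noncomputable def uxy (u : ℝ × ℝ → ℝ) (p : ℝ × ℝ) : ℝ := fderiv ℝ (ux u) p (0, 1)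

/-- Second partial derivative `u_yy`. -/
noncomputable def uyy (u : ℝ × ℝ → ℝ) (p : ℝ × ℝ) : ℝ := fderiv ℝ (uy u) p (0, 1)

open Topology

lemma inv_deriv (f g : ℝ × ℝ → ℝ × ℝ) (hl : ∀ x, g (f x) = x) (a : ℝ × ℝ) (A B C D : ℝ)
    (hf : HasStrictFDerivAt f
      ((A • ContinuousLinearMap.fst ℝ ℝ ℝ + B • ContinuousLinearMap.snd ℝ ℝ ℝ).prod
        (C • ContinuousLinearMap.fst ℝ ℝ ℝ + D • ContinuousLinearMap.snd ℝ ℝ ℝ)) a)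
    (hJ : A * D - B * C ≠ 0) :
    HasStrictFDerivAt g
      (((D / (A * D - B * C)) • ContinuousLinearMap.fst ℝ ℝ ℝ
          + (-B / (A * D - B * C)) • ContinuousLinearMap.snd ℝ ℝ ℝ).prod
        ((-C / (A * D - B * C)) • ContinuousLinearMap.fst ℝ ℝ ℝ
          + (A / (A * D - B * C)) • ContinuousLinearMap.snd ℝ ℝ ℝ)) (f a) := by
  set M := ((A • ContinuousLinearMap.fst ℝ ℝ ℝ + B • ContinuousLinearMap.snd ℝ ℝ ℝ).prod
        (C • ContinuousLinearMap.fst ℝ ℝ ℝ + D • ContinuousLinearMap.snd ℝ ℝ ℝ)) with hM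
  set N := (((D / (A * D - B * C)) • ContinuousLinearMap.fst ℝ ℝ ℝ
          + (-B / (A * D - B * C)) • ContinuousLinearMap.snd ℝ ℝ ℝ).prod
        ((-C / (A * D - B * C)) • ContinuousLinearMap.fst ℝ ℝ ℝ
          + (A / (A * D - B * C)) • ContinuousLinearMap.snd ℝ ℝ ℝ)) with hN
  have h1 : Function.LeftInverse N M := by
    rintro ⟨x, y⟩
    simp only [hM, hN, ContinuousLinearMap.prod_apply, add_apply,
      smul_apply, ContinuousLinearMap.coe_fst', ContinuousLinearMap.coe_snd',
      smul_eq_mul, Prod.mk.injEq]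
    generalize hj : A * D - B * C = J at hJ
    constructor <;> field_simp <;> rw [← hj] <;> ring
  have h2 : Function.RightInverse N M := by
    rintro ⟨x, y⟩
    simp only [hM, hN, ContinuousLinearMap.prod_apply, add_apply,
      smul_apply, ContinuousLinearMap.coe_fst', ContinuousLinearMap.coe_snd',
      smul_eq_mul, Prod.mk.injEq]
    generalize hj : A * D - B * C = J at hJ
    constructor <;> field_simp <;> rw [← hj] <;> ring
  exact HasStrictFDerivAt.to_local_left_inverse
    (f' := ContinuousLinearEquiv.equivOfInverse M N h1 h2) hf (Eventually.of_forall hl)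

/-- strict differentiability of a function of two variables built from one-variable ones -/
lemma XY_deriv (h k m : ℝ → ℝ) (hm : Continuous m)
    (hh : ∀ t, HasDerivAt h (k t) t)
    (hk : ∀ t, HasDerivAt k (m t * (2 - k t) - k t) t) (a : ℝ × ℝ) :
    HasStrictFDerivAt (fun q : ℝ × ℝ =>
        h q.1 + k q.1 * Real.cos q.2 ^ 2 + Real.sin q.2 ^ 2)
      ((k a.1 + (m a.1 * (2 - k a.1) - k a.1) * Real.cos a.2 ^ 2) • ContinuousLinearMap.fst ℝ ℝ ℝ
        + (-2 * (k a.1 - 1) * Real.sin a.2 * Real.cos a.2) • ContinuousLinearMap.snd ℝ ℝ ℝ) a ∧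
    HasStrictFDerivAt (fun q : ℝ × ℝ =>
        -q.2 + (k q.1 - 1) * (Real.sin q.2 * Real.cos q.2))
      (((m a.1 * (2 - k a.1) - k a.1) * (Real.sin a.2 * Real.cos a.2)) •
          ContinuousLinearMap.fst ℝ ℝ ℝ
        + (-1 + (k a.1 - 1) * (Real.cos a.2 ^ 2 - Real.sin a.2 ^ 2)) •
          ContinuousLinearMap.snd ℝ ℝ ℝ) a := by
  have hkc : Continuous k := continuous_iff_continuousAt.2 fun t => (hk t).continuousAt
  have sh : HasStrictDerivAt h (k a.1) a.1 :=
    hasStrictDerivAt_of_hasDerivAt_of_continuousAt (Eventually.of_forall hh) hkc.continuousAt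
  have sk : HasStrictDerivAt k (m a.1 * (2 - k a.1) - k a.1) a.1 :=
    hasStrictDerivAt_of_hasDerivAt_of_continuousAt (f' := fun t => m t * (2 - k t) - k t)
      (Eventually.of_forall hk) (by fun_prop)
  have f1 : HasStrictFDerivAt (fun q : ℝ × ℝ => q.1) (ContinuousLinearMap.fst ℝ ℝ ℝ) a :=
    hasStrictFDerivAt_fst
  have f2 : HasStrictFDerivAt (fun q : ℝ × ℝ => q.2) (ContinuousLinearMap.snd ℝ ℝ ℝ) a :=
    hasStrictFDerivAt_snd
  have H := sh.comp_hasStrictFDerivAt a f1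
  have K := sk.comp_hasStrictFDerivAt a f1
  have c := (Real.hasStrictDerivAt_cos a.2).comp_hasStrictFDerivAt a f2
  have s := (Real.hasStrictDerivAt_sin a.2).comp_hasStrictFDerivAt a f2
  simp only [Function.comp_def] at H K c s
  constructor
  · have := (H.add (K.mul (c.pow 2))).add (s.pow 2)
    refine this.congr_fderiv ?_
    ext <;> simp <;> ring
  · have := f2.neg.add ((K.sub_const 1).mul (s.mul c))
    refine this.congr_fderiv ?_
    ext <;> simp <;> ring

lemma jac_pos (k m c s : ℝ) (hm : 0 < m) (k0 : 0 < k) (k2 : k < 2) (hcs : s ^ 2 + c ^ 2 = 1) :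
    (k + (m * (2 - k) - k) * c ^ 2) * (-1 + (k - 1) * (c ^ 2 - s ^ 2))
      - (-2 * (k - 1) * s * c) * ((m * (2 - k) - k) * (s * c)) < 0 := by
  have e : (k + (m * (2 - k) - k) * c ^ 2) * (-1 + (k - 1) * (c ^ 2 - s ^ 2))
      - (-2 * (k - 1) * s * c) * ((m * (2 - k) - k) * (s * c))
      = -(k ^ 2 * s ^ 2 + m * (2 - k) ^ 2 * c ^ 2) := by
    have : s ^ 2 = 1 - c ^ 2 := by linarith
    have e2 : (-2 * (k - 1) * s * c) * ((m * (2 - k) - k) * (s * c)) =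
      -2 * (k - 1) * c * c * (m * (2 - k) - k) * s ^ 2 := by ring
    rw [e2, this]; ring
  rw [e]
  have : 0 < m * (2 - k) ^ 2 := by have : 0 < 2 - k := by linarith
                                   positivity
  have h1 : 0 < k ^ 2 := by positivity
  rcases eq_or_ne c 0 with h | h
  · subst h
    nlinarith
  · have : 0 < m * (2 - k) ^ 2 * c ^ 2 := by positivity
    nlinarith [sq_nonneg (k * s)]

lemma yth_neg (k c s : ℝ) (k0 : 0 < k) (k2 : k < 2) (hcs : s ^ 2 + c ^ 2 = 1) :
    -1 + (k - 1) * (c ^ 2 - s ^ 2) < 0 := by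
  have : s ^ 2 = 1 - c ^ 2 := by linarith
  have h1 : -1 + (k - 1) * (c ^ 2 - s ^ 2) = -(k * s ^ 2 + (2 - k) * c ^ 2) := by
    rw [this]; ring
  rw [h1]
  have h2 : 0 < 2 - k := by linarith
  rcases eq_or_ne c 0 with h | h
  · subst h
    nlinarith
  · have : 0 < (2 - k) * c ^ 2 := by positivity
    have : 0 ≤ k * s ^ 2 := by positivity
    linarith

lemma Y_bij (k : ℝ → ℝ) (k0 : ∀ t, 0 < k t) (k2 : ∀ t, k t < 2) (s : ℝ) :
    Function.Bijective (fun θ : ℝ => -θ + (k s - 1) * (Real.sin θ * Real.cos θ)) := by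
  have hd : ∀ θ, HasDerivAt (fun θ : ℝ => -θ + (k s - 1) * (Real.sin θ * Real.cos θ))
      (-1 + (k s - 1) * (Real.cos θ ^ 2 - Real.sin θ ^ 2)) θ := by
    intro θ
    have := (hasDerivAt_id θ).neg.add
      (((Real.hasDerivAt_sin θ).mul (Real.hasDerivAt_cos θ)).const_mul (k s - 1))
    refine (this.congr_deriv ?_)
    ring
  have bd : ∀ θ, |(k s - 1) * (Real.sin θ * Real.cos θ)| ≤ 1 := by
    intro θ
    rw [abs_mul, abs_mul]
    have a1 : |k s - 1| ≤ 1 := by rw [abs_le]; constructor <;> linarith [k0 s, k2 s]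
    have := Real.abs_sin_le_one θ
    have := Real.abs_cos_le_one θ
    have : |Real.sin θ| * |Real.cos θ| ≤ 1 := mul_le_one₀ ‹_› (abs_nonneg _) ‹_›
    exact mul_le_one₀ a1 (by positivity) this
  constructor
  · apply StrictAnti.injective
    apply strictAnti_of_deriv_neg
    intro θ
    rw [(hd θ).deriv]
    exact yth_neg _ _ _ (k0 s) (k2 s) (Real.sin_sq_add_cos_sq θ)
  · refine Continuous.surjective' (by fun_prop) ?_ ?_
    · refine tendsto_atTop_mono (f := fun θ => -θ + -1) (fun θ => ?_)
        (tendsto_atTop_add_const_right _ _ tendsto_neg_atBot_atTop)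
      have := abs_le.1 (bd θ); linarith
    · refine tendsto_atBot_mono (f := fun θ : ℝ => -θ + 1) (fun θ => ?_)
        (tendsto_atBot_add_const_right _ (1:ℝ) tendsto_neg_atTop_atBot)
      have := abs_le.1 (bd θ); linarith

lemma Phi_bij (h k m : ℝ → ℝ) (hm : Continuous m) (m0 : ∀ t, 0 < m t)
    (hh : ∀ t, HasDerivAt h (k t) t)
    (hk : ∀ t, HasDerivAt k (m t * (2 - k t) - k t) t)
    (k0 : ∀ t, 0 < k t) (k2 : ∀ t, k t < 2)
    (htop : Tendsto h atTop atTop) (hbot : Tendsto h atBot atBot) :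
    Function.Bijective (fun q : ℝ × ℝ =>
      (h q.1 + k q.1 * Real.cos q.2 ^ 2 + Real.sin q.2 ^ 2,
        -q.2 + (k q.1 - 1) * (Real.sin q.2 * Real.cos q.2))) := by
  have hY := Y_bij k k0 k2
  choose T hT using fun s => (hY s).2
  -- hT : ∀ s y, Y s (T s y) = y
  have hTu : ∀ s θ, T s (-θ + (k s - 1) * (Real.sin θ * Real.cos θ)) = θ := fun s θ =>
    (hY s).1 (hT s _)
  have dT : ∀ y s, HasDerivAt (fun s => h s + k s * Real.cos (T s y) ^ 2 + Real.sin (T s y) ^ 2)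
      (((k s + (m s * (2 - k s) - k s) * Real.cos (T s y) ^ 2) *
          (-1 + (k s - 1) * (Real.cos (T s y) ^ 2 - Real.sin (T s y) ^ 2))
        - (-2 * (k s - 1) * Real.sin (T s y) * Real.cos (T s y)) *
          ((m s * (2 - k s) - k s) * (Real.sin (T s y) * Real.cos (T s y)))) /
        (-1 + (k s - 1) * (Real.cos (T s y) ^ 2 - Real.sin (T s y) ^ 2))) s := by
    intro y s
    obtain ⟨dX, dY⟩ := XY_deriv h k m hm hh hk (s, T s y)
    have yn := yth_neg (k s) _ _ (k0 s) (k2 s) (Real.sin_sq_add_cos_sq (T s y))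
    have f1 : HasStrictFDerivAt (fun q : ℝ × ℝ => q.1)
        ((1:ℝ) • ContinuousLinearMap.fst ℝ ℝ ℝ + (0:ℝ) • ContinuousLinearMap.snd ℝ ℝ ℝ)
        (s, T s y) := by
      refine hasStrictFDerivAt_fst.congr_fderiv ?_
      ext <;> simp
    have I := inv_deriv _ (fun q : ℝ × ℝ => (q.1, T q.1 q.2)) (by
      rintro ⟨a, b⟩
      simp only [hTu]) (s, T s y) _ _ _ _ (f1.prodMk dY) (by simpa using yn.ne)
    simp only [hT] at I
    have c := I.hasFDerivAt.comp_hasDerivAt s ((hasDerivAt_id s).prodMk (hasDerivAt_const s y))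
    have X := (HasStrictFDerivAt.hasFDerivAt dX).comp_hasDerivAt s c
    simp only [Function.comp_def, id] at X
    refine X.congr_deriv ?_
    simp
    field_simp
  have bX : ∀ y, Function.Bijective
      (fun s => h s + k s * Real.cos (T s y) ^ 2 + Real.sin (T s y) ^ 2) := by
    intro y
    constructor
    · apply StrictMono.injective
      apply strictMono_of_deriv_pos
      intro s
      rw [(dT y s).deriv]
      exact div_pos_of_neg_of_neg
        (jac_pos _ _ _ _ (m0 s) (k0 s) (k2 s) (Real.sin_sq_add_cos_sq _))
        (yth_neg _ _ _ (k0 s) (k2 s) (Real.sin_sq_add_cos_sq _))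
    · have hc : Continuous
        (fun s => h s + k s * Real.cos (T s y) ^ 2 + Real.sin (T s y) ^ 2) :=
        continuous_iff_continuousAt.2 fun s => (dT y s).continuousAt
      refine hc.surjective ?_ ?_
      · refine tendsto_atTop_mono (fun s => ?_) htop
        have := k0 s
        have : 0 ≤ k s * Real.cos (T s y) ^ 2 := by positivity
        have := sq_nonneg (Real.sin (T s y))
        linarith
      · refine tendsto_atBot_mono (f := fun s => h s + 3) (fun s => ?_)
          (tendsto_atBot_add_const_right _ _ hbot)
        have := k0 s
        have := k2 s
        have a1 := Real.sin_sq_le_one (T s y)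
        have a2 := Real.cos_sq_le_one (T s y)
        nlinarith
  constructor
  · rintro ⟨s, θ⟩ ⟨s', θ'⟩ he
    simp only [Prod.mk.injEq] at he
    obtain ⟨e1, e2⟩ := he
    have t1 := hTu s θ
    have t2 := hTu s' θ'
    rw [← e2] at t2
    rw [← t1, ← t2] at e1
    rw [t1] at e1
    have : s = s' := by
      apply (bX (-θ + (k s - 1) * (Real.sin θ * Real.cos θ))).1
      simp only
      rw [t1]
      exact e1
    subst this
    rw [t1] at t2
    rw [t2]
  · rintro ⟨x, y⟩
    obtain ⟨s, hs⟩ := (bX y).2 x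
    refine ⟨(s, T s y), ?_⟩
    simp only [Prod.mk.injEq]
    exact ⟨hs, hT s y⟩

lemma alg1 (k m c s A B C D : ℝ) (hcs : s ^ 2 + c ^ 2 = 1)
    (hA : A = k + (m * (2 - k) - k) * c ^ 2) (hB : B = -2 * (k - 1) * s * c)
    (hC : C = (m * (2 - k) - k) * (s * c)) (hD : D = -1 + (k - 1) * (c ^ 2 - s ^ 2)) :
    (k + (m * (2 - k) - k)) * c * D + k * s * C = c * (A * D - B * C) ∧
    -(k + (m * (2 - k) - k)) * c * B - k * s * A = s * (A * D - B * C) ∧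
    (c * D + s * C) + (-s * B + c * A) + (m - 1) * (c ^ 2 * (c * D + s * C)
      + 2 * c * s * (-c * B - s * A) + s ^ 2 * (-s * B + c * A)) = 0 := by
  subst hA hB hC hD
  refine ⟨?_, ?_, ?_⟩ <;> grind

lemma geo (h k m : ℝ → ℝ) (hm : Continuous m) (m0 : ∀ t, 0 < m t)
    (hh : ∀ t, HasDerivAt h (k t) t)
    (hk : ∀ t, HasDerivAt k (m t * (2 - k t) - k t) t)
    (k0 : ∀ t, 0 < k t) (k2 : ∀ t, k t < 2)
    (htop : Tendsto h atTop atTop) (hbot : Tendsto h atBot atBot) :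
    ∃ u : ℝ × ℝ → ℝ, ContDiff ℝ 2 u ∧
      (¬ ∃ a b c : ℝ, ∀ x y : ℝ, u (x, y) = a * x + b * y + c) ∧
      ∀ p : ℝ × ℝ, ∃ s θ : ℝ, ux u p = Real.exp s * Real.cos θ ∧
        uy u p = Real.exp s * Real.sin θ ∧
        uxx u p + uyy u p + (m s - 1) * (Real.cos θ ^ 2 * uxx u p
          + 2 * Real.cos θ * Real.sin θ * uxy u p + Real.sin θ ^ 2 * uyy u p) = 0 := by
  have hb := Phi_bij h k m hm m0 hh hk k0 k2 htop hbot
  set Φ := (fun q : ℝ × ℝ =>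
      (h q.1 + k q.1 * Real.cos q.2 ^ 2 + Real.sin q.2 ^ 2,
        -q.2 + (k q.1 - 1) * (Real.sin q.2 * Real.cos q.2))) with hΦ
  obtain ⟨G, hl, hr⟩ := Function.bijective_iff_has_inverse.1 hb
  set S : ℝ × ℝ → ℝ := fun p => (G p).1 with hS
  set Θ : ℝ × ℝ → ℝ := fun p => (G p).2 with hΘ
  set A : ℝ × ℝ → ℝ := fun p =>
    k (S p) + (m (S p) * (2 - k (S p)) - k (S p)) * Real.cos (Θ p) ^ 2 with hA
  set B : ℝ × ℝ → ℝ := fun p => -2 * (k (S p) - 1) * Real.sin (Θ p) * Real.cos (Θ p) with hB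
  set C : ℝ × ℝ → ℝ := fun p =>
    (m (S p) * (2 - k (S p)) - k (S p)) * (Real.sin (Θ p) * Real.cos (Θ p)) with hC
  set D : ℝ × ℝ → ℝ := fun p =>
    -1 + (k (S p) - 1) * (Real.cos (Θ p) ^ 2 - Real.sin (Θ p) ^ 2) with hD
  have hJ : ∀ p, A p * D p - B p * C p ≠ 0 := fun p =>
    (jac_pos _ _ _ _ (m0 _) (k0 _) (k2 _) (Real.sin_sq_add_cos_sq (Θ p))).ne
  have dG : ∀ p, HasFDerivAt G
      (((D p / (A p * D p - B p * C p)) • ContinuousLinearMap.fst ℝ ℝ ℝ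
          + (-B p / (A p * D p - B p * C p)) • ContinuousLinearMap.snd ℝ ℝ ℝ).prod
        ((-C p / (A p * D p - B p * C p)) • ContinuousLinearMap.fst ℝ ℝ ℝ
          + (A p / (A p * D p - B p * C p)) • ContinuousLinearMap.snd ℝ ℝ ℝ)) p := by
    intro p
    obtain ⟨dX, dY⟩ := XY_deriv h k m hm hh hk (G p)
    have I := inv_deriv Φ G hl (G p) _ _ _ _ (dX.prodMk dY) (hJ p)
    rw [hr p] at I
    exact I.hasFDerivAt
  have dS : ∀ p, HasFDerivAt S
      ((D p / (A p * D p - B p * C p)) • ContinuousLinearMap.fst ℝ ℝ ℝ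
          + (-B p / (A p * D p - B p * C p)) • ContinuousLinearMap.snd ℝ ℝ ℝ) p :=
    fun p => (dG p).fst
  have dΘ : ∀ p, HasFDerivAt Θ
      ((-C p / (A p * D p - B p * C p)) • ContinuousLinearMap.fst ℝ ℝ ℝ
          + (A p / (A p * D p - B p * C p)) • ContinuousLinearMap.snd ℝ ℝ ℝ) p :=
    fun p => (dG p).snd
  have cS : Continuous S := continuous_iff_continuousAt.2 fun p => (dS p).continuousAt
  have cΘ : Continuous Θ := continuous_iff_continuousAt.2 fun p => (dΘ p).continuousAt
  have ck : Continuous k := continuous_iff_continuousAt.2 fun t => (hk t).continuousAt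
  have cA : Continuous A := by fun_prop
  have cB : Continuous B := by fun_prop
  have cC : Continuous C := by fun_prop
  have cD : Continuous D := by fun_prop
  have S1 : ContDiff ℝ 1 S := contDiff_one_iff_hasFDerivAt.2
    ⟨_, by fun_prop (disch := exact hJ), dS⟩
  have Θ1 : ContDiff ℝ 1 Θ := contDiff_one_iff_hasFDerivAt.2
    ⟨_, by fun_prop (disch := exact hJ), dΘ⟩
  set u : ℝ × ℝ → ℝ := fun p => Real.exp (S p) * k (S p) * Real.cos (Θ p) with hu
  have du : ∀ p, HasFDerivAt u ((Real.exp (S p) * Real.cos (Θ p)) • ContinuousLinearMap.fst ℝ ℝ ℝ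
      + (Real.exp (S p) * Real.sin (Θ p)) • ContinuousLinearMap.snd ℝ ℝ ℝ) p := by
    intro p
    have d1 := ((dS p).exp.mul ((hk (S p)).comp_hasFDerivAt p (dS p))).mul (dΘ p).cos
    refine d1.congr_fderiv ?_
    have hsc := Real.sin_sq_add_cos_sq (Θ p)
    have hj := hJ p
    generalize hJ' : A p * D p - B p * C p = J at hj
    obtain ⟨i1, i2, -⟩ := alg1 (k (S p)) (m (S p)) _ _ (A p) (B p) (C p) (D p) hsc
      rfl rfl rfl rfl
    rw [hJ'] at i1 i2
    clear_value A B C D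
    ext
    · simp
      field_simp
      linear_combination i1
    · simp
      field_simp
      linear_combination i2
  have eux : ux u = fun p => Real.exp (S p) * Real.cos (Θ p) := by
    funext p; simp [ux, (du p).fderiv]
  have euy : uy u = fun p => Real.exp (S p) * Real.sin (Θ p) := by
    funext p; simp [uy, (du p).fderiv]
  refine ⟨u, ?_, ?_, ?_⟩
  · have := (contDiff_succ_iff_hasFDerivAt (𝕜 := ℝ) (f := u) (n := 1)).2 ⟨_, by
      simp only [Nat.cast_one]
      fun_prop, du⟩
    norm_num at this
    exact this
  · rintro ⟨a, b, c, hab⟩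
    have e : u = fun p : ℝ × ℝ => a * p.1 + b * p.2 + c := by
      funext ⟨x, y⟩; exact hab x y
    have d : ∀ p, ux u p = a := by
      intro p
      have : HasFDerivAt u (a • ContinuousLinearMap.fst ℝ ℝ ℝ
        + b • ContinuousLinearMap.snd ℝ ℝ ℝ) p := by
        rw [e]
        exact ((hasFDerivAt_fst.const_mul a).add (hasFDerivAt_snd.const_mul b)).add_const c
      simp [ux, this.fderiv]
    have d0 := d (Φ (0, 0))
    have d1 := d (Φ (1, 0))
    rw [eux] at d0 d1
    have l0 := hl (0, 0)
    have l1 := hl (1, 0)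
    simp only [hS, hΘ, l0, l1] at d0 d1
    simp at d0 d1
    have : Real.exp 1 > 1 := Real.one_lt_exp_iff.2 one_pos
    linarith
  · intro p
    refine ⟨S p, Θ p, by rw [eux], by rw [euy], ?_⟩
    have dP := (dS p).exp.mul (dΘ p).cos
    have dQ := (dS p).exp.mul (dΘ p).sin
    simp only [uxx, uxy, uyy, eux, euy]
    have eP := dP.fderiv
    have eQ := dQ.fderiv
    simp only [Pi.mul_def] at eP eQ
    rw [eP, eQ]
    have hsc := Real.sin_sq_add_cos_sq (Θ p)
    have hj := hJ p
    generalize hJ' : A p * D p - B p * C p = J at hj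
    obtain ⟨-, -, i3⟩ := alg1 (k (S p)) (m (S p)) _ _ (A p) (B p) (C p) (D p) hsc
      rfl rfl rfl rfl
    clear_value A B C D
    simp
    field_simp
    linear_combination Real.exp (S p) * i3

lemma ode (F : ℝ → ℝ) (hF : ContDiffOn ℝ 2 F (Set.Ici 0))
    (F' : ℝ → ℝ) (hF' : F' = derivWithin F (Set.Ici 0))
    (F'' : ℝ → ℝ) (hF'' : F'' = derivWithin F' (Set.Ici 0))
    (hpos : ∀ w : ℝ, 0 ≤ w → 0 < F' w)
    (hreg : ∀ w : ℝ, 0 ≤ w → 0 < F' w + 2 * w * F'' w)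
    (lam : ℝ → ℝ) (hlam : lam = fun w => 2 * F'' w / F' w)
    (hdiv : Tendsto
      (fun T : ℝ => ∫ w in (1:ℝ)..T, (1 + w * lam w) / (2 + w * lam w) * (1 / w))
      atTop atTop) :
    ∃ h k m : ℝ → ℝ, Continuous m ∧ (∀ t, 0 < m t) ∧
    (∀ t, HasDerivAt h (k t) t) ∧
    (∀ t, HasDerivAt k (m t * (2 - k t) - k t) t) ∧
    (∀ t, 0 < k t) ∧ (∀ t, k t < 2) ∧
    Tendsto h atTop atTop ∧ Tendsto h atBot atBot ∧
    ∀ t, m t = 1 + Real.exp (2 * t) * lam (Real.exp (2 * t)) := by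
  have U : UniqueDiffOn ℝ (Set.Ici (0:ℝ)) := uniqueDiffOn_Ici 0
  have hF1 : ContDiffOn ℝ 1 F' (Set.Ici 0) := by
    rw [hF']; exact hF.derivWithin U (by norm_num)
  have cF'' : ContinuousOn F'' (Set.Ici 0) := by
    rw [hF'']; exact hF1.continuousOn_derivWithin U le_rfl
  have cF' : ContinuousOn F' (Set.Ici 0) := hF1.continuousOn
  have cF : ContinuousOn F (Set.Ici 0) := hF.continuousOn
  have dFw : ∀ w, 0 ≤ w → HasDerivWithinAt F (F' w) (Set.Ici 0) w := by
    intro w hw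
    rw [hF']
    exact (hF.differentiableOn (by norm_num) w hw).hasDerivWithinAt
  have dF : ∀ w, 0 < w → HasDerivAt F (F' w) w := fun w hw =>
    (dFw w hw.le).hasDerivAt (Ici_mem_nhds hw)
  have dF' : ∀ w, 0 < w → HasDerivAt F' (F'' w) w := by
    intro w hw
    rw [hF'']
    exact ((hF1.differentiableOn (by norm_num) w hw.le).hasDerivWithinAt).hasDerivAt
      (Ici_mem_nhds hw)
  have Fpos : ∀ w, 0 < w → 0 < F w - F 0 := by
    have : StrictMonoOn F (Set.Ici 0) := by
      apply strictMonoOn_of_deriv_pos (convex_Ici 0) cF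
      intro x hx
      rw [interior_Ici] at hx
      rw [(dF x hx).deriv]
      exact hpos x (le_of_lt hx)
    intro w hw
    have := this Set.self_mem_Ici hw.le hw
    linarith
  have Npos : ∀ w, 0 < w → 0 < 2 * w * F' w - (F w - F 0) := by
    have : StrictMonoOn (fun w => 2 * w * F' w - (F w - F 0)) (Set.Ici 0) := by
      apply strictMonoOn_of_deriv_pos (convex_Ici 0) (by fun_prop)
      intro x hx
      rw [interior_Ici] at hx
      have := (((hasDerivAt_id x).const_mul 2).mul (dF' x hx)).sub ((dF x hx).sub_const (F 0))
      have := this.deriv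
      simp only [id, mul_one] at this
      have e : deriv (fun w => 2 * w * F' w - (F w - F 0)) x = 2 * F' x + 2 * x * F'' x - F' x :=
        this
      rw [e]
      linarith [hreg x (le_of_lt hx)]
    intro w hw
    have := this Set.self_mem_Ici hw.le hw
    simp at this
    linarith
  set m : ℝ → ℝ := fun t => 1 + Real.exp (2 * t) * lam (Real.exp (2 * t)) with hm
  set k : ℝ → ℝ := fun t => 2 - (F (Real.exp (2 * t)) - F 0) /
    (Real.exp (2 * t) * F' (Real.exp (2 * t))) with hk
  have E : ∀ t : ℝ, 0 < Real.exp (2 * t) := fun t => Real.exp_pos _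
  have P : ∀ t : ℝ, 0 < F' (Real.exp (2 * t)) := fun t => hpos _ (E t).le
  have cE : Continuous fun t : ℝ => Real.exp (2 * t) := by fun_prop
  have clam : ContinuousOn lam (Set.Ici 0) := by
    rw [hlam]
    exact (continuousOn_const.mul cF'').div cF' fun w hw => (hpos w hw).ne'
  have mw : ∀ w, 0 ≤ w → 0 < 1 + w * lam w := by
    intro w hw
    have h1 := hpos w hw
    have : 1 + w * lam w = (F' w + 2 * w * F'' w) / F' w := by
      rw [hlam]; field_simp
    rw [this]
    exact div_pos (hreg w hw) h1
  have cm : Continuous m := by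
    have : Continuous fun t : ℝ => lam (Real.exp (2 * t)) :=
      clam.comp_continuous cE fun t => (E t).le
    exact continuous_const.add (cE.mul this)
  have m0 : ∀ t, 0 < m t := fun t => mw _ (E t).le
  have dE : ∀ t : ℝ, HasDerivAt (fun t : ℝ => Real.exp (2 * t)) (Real.exp (2 * t) * 2) t := by
    intro t
    have := ((hasDerivAt_id t).const_mul 2).exp
    simpa using this
  have dk : ∀ t, HasDerivAt k (m t * (2 - k t) - k t) t := by
    intro t
    have a1 := (dF _ (E t)).comp t (dE t)
    have a2 := (dF' _ (E t)).comp t (dE t)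
    have a3 := ((a1.sub_const (F 0)).div ((dE t).mul a2)
      (mul_pos (E t) (P t)).ne').const_sub 2
    refine a3.congr_deriv ?_
    have := (E t).ne'
    have := (P t).ne'
    simp only [hm, hk, hlam, Function.comp_def, Pi.mul_apply]
    field_simp
    ring
  have k0 : ∀ t, 0 < k t := by
    intro t
    have : k t = (2 * Real.exp (2 * t) * F' (Real.exp (2 * t)) - (F (Real.exp (2 * t)) - F 0)) /
       (Real.exp (2 * t) * F' (Real.exp (2 * t))) := by
      have := (E t).ne'
      have := (P t).ne'
      simp only [hk]; field_simp
    rw [this]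
    exact div_pos (Npos _ (E t)) (mul_pos (E t) (P t))
  have k2 : ∀ t, k t < 2 := by
    intro t
    have := div_pos (Fpos _ (E t)) (mul_pos (E t) (P t))
    simp only [hk]
    linarith
  have ck : Continuous k := continuous_iff_continuousAt.2 fun t => (dk t).continuousAt
  set h : ℝ → ℝ := fun t => ∫ x in (0:ℝ)..t, k x with hh
  have dh : ∀ t, HasDerivAt h (k t) t := fun t => (ck.integral_hasStrictDerivAt 0 t).hasDerivAt
  refine ⟨h, k, m, cm, m0, dh, dk, k0, k2, ?_, ?_, fun t => rfl⟩
  · set f : ℝ → ℝ := fun w => (1 + w * lam w) / (2 + w * lam w) * (1 / w) with hf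
    have cf : ContinuousOn f (Set.Ioi 0) := by
      have c1 : ContinuousOn lam (Set.Ioi 0) := clam.mono Set.Ioi_subset_Ici_self
      refine ContinuousOn.mul (ContinuousOn.div (by fun_prop) (by fun_prop) ?_)
        (ContinuousOn.div (by fun_prop) (by fun_prop) ?_)
      · intro x hx
        have := mw x (le_of_lt hx)
        linarith
      · intro x hx
        exact ne_of_gt hx
    have dI : ∀ T, 0 < T → HasDerivAt (fun T => ∫ w in (1:ℝ)..T, f w) (f T) T := by
      intro T hT
      apply intervalIntegral.integral_hasDerivAt_right
      · apply ContinuousOn.intervalIntegrable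
        apply cf.mono
        intro x hx
        exact lt_of_lt_of_le (lt_min one_pos hT) hx.1
      · exact cf.stronglyMeasurableAtFilter isOpen_Ioi T hT
      · exact cf.continuousAt (Ioi_mem_nhds hT)
    set I : ℝ → ℝ := fun t => ∫ w in (1:ℝ)..Real.exp (2 * t), f w with hI
    have dQ : ∀ t, HasDerivAt (fun t => I t - 4 * h t - 2 * k t)
        (2 * (m t / (1 + m t)) - 4 * k t - 2 * (m t * (2 - k t) - k t)) t := by
      intro t
      have := (((dI _ (E t)).comp t (dE t)).sub ((dh t).const_mul 4)).sub ((dk t).const_mul 2)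
      refine this.congr_deriv ?_
      have := (E t).ne'
      have h3 := m0 t
      simp only [hf]
      have e1 : 2 + Real.exp (2 * t) * lam (Real.exp (2 * t)) = 1 + m t := by
        simp only [hm]; ring
      have e2 : 1 + Real.exp (2 * t) * lam (Real.exp (2 * t)) = m t := rfl
      rw [e1, e2]
      field_simp
    have anti : Antitone
        (fun t => I t - 4 * h t - 2 * k t) := by
      apply antitone_of_deriv_nonpos (fun t => (dQ t).differentiableAt)
      intro t
      rw [(dQ t).deriv]
      have h3 := m0 t
      have h4 := k0 t
      have h5 := k2 t
      have b1 : m t / (1 + m t) ≤ 1 := by rw [div_le_one (by linarith)]; linarith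
      have b2 : m t / (1 + m t) ≤ m t := div_le_self h3.le (by linarith)
      have : 0 ≤ m t * (2 - k t) := mul_nonneg h3.le (by linarith)
      rcases le_total 1 (k t) with h6 | h6
      · linarith
      · nlinarith
    have tJ : Tendsto I atTop atTop :=
      hdiv.comp (Real.tendsto_exp_atTop.comp (tendsto_id.const_mul_atTop two_pos))
    have t2 : Tendsto (fun t : ℝ => (1/4 : ℝ) * (I t
       + (-4 - (I 0 - 4 * h 0 - 2 * k 0)))) atTop atTop :=
      (tendsto_atTop_add_const_right _ _ tJ).const_mul_atTop (by norm_num)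
    refine tendsto_atTop_mono' _ ?_ t2
    filter_upwards [eventually_ge_atTop 0] with t ht
    have a1 := anti ht
    simp only at a1
    have := k2 t
    clear_value h k I
    linarith
  · have tE : Tendsto (fun t : ℝ => Real.exp (2 * t)) atBot (𝓝[>] 0) :=
      Real.tendsto_exp_atBot_nhdsGT.comp (tendsto_id.const_mul_atBot two_pos)
    have t1 : Tendsto (fun w => (F w - F 0) / (w * F' w)) (𝓝[>] 0) (𝓝 1) := by
      have s1 := (hasDerivWithinAt_iff_tendsto_slope' (by simp)).1
        ((dFw 0 le_rfl).mono Set.Ioi_subset_Ici_self)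
      have s2 : Tendsto F' (𝓝[>] 0) (𝓝 (F' 0)) :=
        (cF' 0 Set.self_mem_Ici).mono_left (nhdsWithin_mono _ Set.Ioi_subset_Ici_self)
      have s3 := s1.div s2 (hpos 0 le_rfl).ne'
      rw [div_self (hpos 0 le_rfl).ne'] at s3
      refine s3.congr fun w => ?_
      simp [slope_def_field, div_div]
    have t2 : Tendsto k atBot (𝓝 (2 - 1)) := (t1.comp tE).const_sub 2
    have ev : ∀ᶠ t in atBot, (1/2 : ℝ) < k t := t2.eventually (lt_mem_nhds (by norm_num))
    obtain ⟨T, hT⟩ := eventually_atBot.1 ev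
    have mono : MonotoneOn (fun t => h t - (1/2) * t) (Set.Iic T) := by
      have dd : ∀ t, HasDerivAt (fun t => h t - (1/2) * t) (k t - 1/2) t := by
        intro t
        refine ((dh t).sub ((hasDerivAt_id t).const_mul (1/2))).congr_deriv ?_
        ring
      apply monotoneOn_of_deriv_nonneg (convex_Iic T)
        (fun t _ => (dd t).continuousAt.continuousWithinAt)
        (fun t _ => (dd t).differentiableAt.differentiableWithinAt)
      intro t ht
      rw [interior_Iic] at ht
      rw [(dd t).deriv]
      linarith [hT t (le_of_lt ht)]
    have t3 : Tendsto (fun t : ℝ => (1/2 : ℝ) * t + (h T - (1/2) * T)) atBot atBot :=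
      tendsto_atBot_add_const_right _ _ (tendsto_id.const_mul_atBot (by norm_num))
    refine tendsto_atBot_mono' _ ?_ t3
    filter_upwards [eventually_le_atBot T] with t ht
    have := mono (a := t) (b := T) ht (Set.self_mem_Iic) ht
    simp only at this
    linarith

/-- **Nitsche criterion** (J. C. C. Nitsche and J. A. Nitsche): if `F` is `C²` on `[0,∞)`
with `F' > 0` and `F' + 2wF'' > 0` (regular variational integrand), and the integral
`∫₁^∞ (1 + wλ(w))/(2 + wλ(w)) · dw/w` with `λ(w) = 2F''(w)/F'(w)` diverges, then the
Euler–Lagrange equation of `∫_{ℝ²} F(|Du|²) dx` admits an entire non-linear `C²` solution. -/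
theorem nitsche_criterion (F : ℝ → ℝ) (hF : ContDiffOn ℝ 2 F (Set.Ici 0))
    (F' : ℝ → ℝ) (hF' : F' = derivWithin F (Set.Ici 0))
    (F'' : ℝ → ℝ) (hF'' : F'' = derivWithin F' (Set.Ici 0))
    (hpos : ∀ w : ℝ, 0 ≤ w → 0 < F' w)
    (hreg : ∀ w : ℝ, 0 ≤ w → 0 < F' w + 2 * w * F'' w)
    (lam : ℝ → ℝ) (hlam : lam = fun w => 2 * F'' w / F' w)
    (hdiv : Tendsto
      (fun T : ℝ => ∫ w in (1:ℝ)..T, (1 + w * lam w) / (2 + w * lam w) * (1 / w))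
      atTop atTop) :
    ∃ u : ℝ × ℝ → ℝ, ContDiff ℝ 2 u ∧
      (¬ ∃ a b c : ℝ, ∀ x y : ℝ, u (x, y) = a * x + b * y + c) ∧
      ∀ p : ℝ × ℝ,
        F' (ux u p ^ 2 + uy u p ^ 2) * (uxx u p + uyy u p)
          + 2 * F'' (ux u p ^ 2 + uy u p ^ 2) *
            (ux u p ^ 2 * uxx u p + 2 * ux u p * uy u p * uxy u p
              + uy u p ^ 2 * uyy u p) = 0 := by
  obtain ⟨h, k, m, cm, m0, dh, dk, k0, k2, htop, hbot, hm⟩ :=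
    ode F hF F' hF' F'' hF'' hpos hreg lam hlam hdiv
  obtain ⟨u, hu, hna, hE⟩ := geo h k m cm m0 dh dk k0 k2 htop hbot
  refine ⟨u, hu, hna, fun p => ?_⟩
  obtain ⟨s, θ, e1, e2, e3⟩ := hE p
  have hw : ux u p ^ 2 + uy u p ^ 2 = Real.exp (2 * s) := by
    rw [e1, e2, two_mul, Real.exp_add]
    linear_combination Real.exp s ^ 2 * Real.sin_sq_add_cos_sq θ
  have hw2 : Real.exp (2 * s) = Real.exp s ^ 2 := by
    rw [two_mul, Real.exp_add]; ring
  have hP := hpos _ (Real.exp_pos (2 * s)).le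
  have e4 : (m s - 1) * F' (Real.exp (2 * s)) =
      2 * Real.exp s ^ 2 * F'' (Real.exp (2 * s)) := by
    rw [hm, hlam, ← hw2]
    field_simp
    ring
  rw [hw, e1, e2]
  linear_combination F' (Real.exp (2 * s)) * e3 - (Real.cos θ ^ 2 * uxx u p
          + 2 * Real.cos θ * Real.sin θ * uxy u p + Real.sin θ ^ 2 * uyy u p) * e4
end

section
/- The function u : ℝ² → ℝ, u(x,y) := e^{x+y}, is of class C², is not affine linear, and satisfies the equation u_y²·u_xx − 2·u_x·u_y·u_xy + u_x²·u_yy = 0 at every point of ℝ². Hence the equation L_{−1,0}[u] = 0 (corresponding to the 1-Laplace equation div(Du/|Du|) = 0) does not have the Bernstein property. -/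
/-- The function `u(x,y) = e^{x+y}` is a `C²` entire non-linear solution of
`u_y²·u_xx − 2u_xu_yu_xy + u_x²·u_yy = 0`, i.e. of `L_{−1,0}[u] = 0` (the `1`-Laplace
equation `div(Du/|Du|) = 0`); hence this equation does not have the Bernstein property. -/
theorem one_laplace_not_bernstein
    (u : ℝ × ℝ → ℝ) (hu : u = fun p => Real.exp (p.1 + p.2)) :
    ContDiff ℝ 2 u ∧
    (¬ ∃ a b c : ℝ, ∀ x y : ℝ, u (x, y) = a * x + b * y + c) ∧
    ∀ p : ℝ × ℝ,
      uy u p ^ 2 * uxx u p - 2 * ux u p * uy u p * uxy u p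
        + ux u p ^ 2 * uyy u p = 0 := by
  have hf : ∀ p v : ℝ × ℝ, fderiv ℝ u p v = Real.exp (p.1 + p.2) * (v.1 + v.2) := by
    intro p v
    have h : HasFDerivAt u (Real.exp (p.1 + p.2) •
        (ContinuousLinearMap.fst ℝ ℝ ℝ + ContinuousLinearMap.snd ℝ ℝ ℝ)) p := by
      rw [hu]
      exact (hasFDerivAt_fst.add hasFDerivAt_snd).exp
    rw [h.fderiv]
    simp [mul_add]
  have hx : ux u = u := by
    funext p
    rw [ux, hf, hu]
    simp
  have hy : uy u = u := by
    funext p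
    rw [uy, hf, hu]
    simp
  refine ⟨?_, ?_, ?_⟩
  · rw [hu]
    fun_prop
  · rintro ⟨a, b, c, h⟩
    have h0 := h 0 0
    have h1 := h 1 0
    have h2 := h (-1) 0
    simp only [hu, add_zero, Real.exp_zero] at h0 h1 h2
    have h3 := Real.add_one_le_exp (1 : ℝ)
    have h4 := Real.exp_pos (-1 : ℝ)
    linarith
  · intro p
    simp only [uxx, uxy, uyy, hx, hy, hf]
    ring
end

section
/- Let u : ℝⁿ → ℝ be a C² function with |Du(x)| < 1 for all x ∈ ℝⁿ and sup_{x ∈ ℝⁿ} |Du(x)| < 1, satisfying the maximal surface equation div(Du / √(1 − |Du|²)) = 0 at every point of ℝⁿ. Then u is affine linear, i.e. u(x) = ⟨a, x⟩ + c for some a ∈ ℝⁿ with |a| < 1 and c ∈ ℝ. -/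
open scoped RealInnerProductSpace

/-- `j`-th first partial derivative of `u : ℝⁿ → ℝ`. -/
noncomputable def pd {n : ℕ} (u : EuclideanSpace ℝ (Fin n) → ℝ)
    (x : EuclideanSpace ℝ (Fin n)) (j : Fin n) : ℝ :=
  fderiv ℝ u x (EuclideanSpace.single j 1)

/-- Second partial derivative `u_{x_j x_k}` of `u : ℝⁿ → ℝ`. -/
noncomputable def pd2 {n : ℕ} (u : EuclideanSpace ℝ (Fin n) → ℝ)
    (x : EuclideanSpace ℝ (Fin n)) (j k : Fin n) : ℝ :=
  fderiv ℝ (fun y => fderiv ℝ u y (EuclideanSpace.single j 1)) x (EuclideanSpace.single k 1)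

section PartA
open MeasureTheory Set Filter Topology Metric

section PDE
variable {E : Type*} [NormedAddCommGroup E] [InnerProductSpace ℝ E] [FiniteDimensional ℝ E]
  [MeasurableSpace E] [BorelSpace E]

/-- `v` is an entire weak solution of a uniformly elliptic divergence form equation with flux `a`. -/
structure IsSol (l L : ℝ) (v : E → ℝ) (a : E → E) : Prop where
  smooth : ContDiff ℝ 1 v
  cont : Continuous a
  ell : ∀ x, l * ‖fderiv ℝ v x‖ ^ 2 ≤ fderiv ℝ v x (a x)
  bdd : ∀ x, ‖a x‖ ≤ L * ‖fderiv ℝ v x‖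
  weak : ∀ φ : E → ℝ, ContDiff ℝ 1 φ → HasCompactSupport φ → ∫ x, fderiv ℝ φ x (a x) = 0

lemma energy {l L : ℝ} (hl : 0 < l) (hL : 0 ≤ L) {v : E → ℝ} {a : E → E} (h : IsSol l L v a)
    {b : ℝ} (hv : ∀ x, v x ∈ Ioo 0 b) {P P' Y T : ℝ → ℝ}
    (hP : ∀ t ∈ Ioo 0 b, HasDerivAt P (P' t) t) (hP' : ContinuousOn P' (Ioo 0 b))
    (hY : ContinuousOn Y (Ioo 0 b)) (hT : ContinuousOn T (Ioo 0 b))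
    (hT0 : ∀ t ∈ Ioo 0 b, 0 ≤ T t) (hY0 : ∀ t ∈ Ioo 0 b, 0 ≤ Y t)
    (hPY : ∀ t ∈ Ioo 0 b, Y t ^ 2 ≤ P' t) (hPT : ∀ t ∈ Ioo 0 b, |P t| ≤ Y t * T t)
    {η : E → ℝ} (hη : ContDiff ℝ 1 η) (hηc : HasCompactSupport η) :
    ∫ x, η x ^ 2 * (Y (v x) ^ 2 * ‖fderiv ℝ v x‖ ^ 2) ≤
      4 * L ^ 2 / l ^ 2 * ∫ x, T (v x) ^ 2 * ‖fderiv ℝ η x‖ ^ 2 := by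
  have hPc : ContDiff ℝ 1 (fun x => P (v x)) := by
    have h1 : ContDiffOn ℝ 1 P (Ioo 0 b) := by
      have := (contDiffOn_succ_iff_deriv_of_isOpen (𝕜 := ℝ) (n := 0) (f := P)
        (isOpen_Ioo (a := (0:ℝ)) (b := b))).2
      simp only [zero_add] at this
      apply this
      refine ⟨fun t ht => (hP t ht).differentiableAt.differentiableWithinAt, by simp, ?_⟩
      rw [contDiffOn_zero]
      exact hP'.congr fun t ht => (hP t ht).deriv
    rw [← contDiffOn_univ]
    exact h1.comp h.smooth.contDiffOn (fun x _ => hv x)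
  have hvc : Continuous v := h.smooth.continuous
  have hYc : Continuous (fun x => Y (v x)) := by
    rw [← continuousOn_univ]; exact hY.comp hvc.continuousOn (fun x _ => hv x)
  have hTc : Continuous (fun x => T (v x)) := by
    rw [← continuousOn_univ]; exact hT.comp hvc.continuousOn (fun x _ => hv x)
  have hDv : Continuous (fderiv ℝ v) := h.smooth.continuous_fderiv (by norm_num)
  have hDη : Continuous (fderiv ℝ η) := hη.continuous_fderiv (by norm_num)
  set φ : E → ℝ := fun x => η x ^ 2 * P (v x) with hφ
  have hφC : ContDiff ℝ 1 φ := (hη.pow 2).mul hPc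
  have hφc : HasCompactSupport φ := by
    have : HasCompactSupport (fun x => η x ^ 2) := by
      exact hηc.comp_left (g := fun z : ℝ => z ^ 2) (by simp)
    exact this.mul_right
  have hw := h.weak φ hφC hφc
  have hD : ∀ x, fderiv ℝ φ x (a x) =
      2 * η x * P (v x) * fderiv ℝ η x (a x) + η x ^ 2 * P' (v x) * fderiv ℝ v x (a x) := by
    intro x
    have e1 : HasFDerivAt η (fderiv ℝ η x) x := (hη.differentiable (by norm_num) x).hasFDerivAt
    have e2 : HasFDerivAt v (fderiv ℝ v x) x := (h.smooth.differentiable (by norm_num) x).hasFDerivAt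
    have e3 := (hP _ (hv x)).comp_hasFDerivAt x e2
    have e4 := (e1.pow 2).mul e3
    have e5 : HasFDerivAt φ _ x := e4
    rw [e5.fderiv]
    simp
    ring
  have hc1 : HasCompactSupport (fun x => η x ^ 2 * (Y (v x) ^ 2 * ‖fderiv ℝ v x‖ ^ 2)) := by
    have : HasCompactSupport (fun x => η x ^ 2) := by
      exact hηc.comp_left (g := fun z : ℝ => z ^ 2) (by simp)
    exact this.mul_right
  have hc2 : HasCompactSupport (fun x => T (v x) ^ 2 * ‖fderiv ℝ η x‖ ^ 2) := by
    have : HasCompactSupport (fun x => ‖fderiv ℝ η x‖ ^ 2) :=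
      (hηc.fderiv (𝕜 := ℝ)).comp_left (g := fun z => ‖z‖ ^ 2) (by simp)
    exact this.mul_left
  have hi1 : Integrable (fun x => η x ^ 2 * (Y (v x) ^ 2 * ‖fderiv ℝ v x‖ ^ 2)) := by
    refine Continuous.integrable_of_hasCompactSupport ?_ hc1
    exact (hη.continuous.pow 2).mul ((hYc.pow 2).mul (hDv.norm.pow 2))
  have hi2 : Integrable (fun x => T (v x) ^ 2 * ‖fderiv ℝ η x‖ ^ 2) := by
    refine Continuous.integrable_of_hasCompactSupport ?_ hc2
    exact (hTc.pow 2).mul (hDη.norm.pow 2)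
  have hi3 : Integrable (fun x => fderiv ℝ φ x (a x)) := by
    refine Continuous.integrable_of_hasCompactSupport ?_ ?_
    · exact (hφC.continuous_fderiv (by norm_num)).clm_apply h.cont
    · exact (hφc.fderiv (𝕜 := ℝ)).mono (fun x hx => by
        simp only [Function.mem_support] at hx ⊢
        intro h0; apply hx; simp [h0])
  have hpt : ∀ x, l / 2 * (η x ^ 2 * (Y (v x) ^ 2 * ‖fderiv ℝ v x‖ ^ 2)) -
      2 * L ^ 2 / l * (T (v x) ^ 2 * ‖fderiv ℝ η x‖ ^ 2) ≤ fderiv ℝ φ x (a x) := by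
    intro x
    rw [hD]
    have b1 : |fderiv ℝ η x (a x)| ≤ ‖fderiv ℝ η x‖ * (L * ‖fderiv ℝ v x‖) :=
      ((fderiv ℝ η x).le_opNorm (a x)).trans
        (mul_le_mul_of_nonneg_left (h.bdd x) (norm_nonneg _))
    have b2 : |2 * η x * P (v x) * fderiv ℝ η x (a x)| ≤
        2 * |η x| * (Y (v x) * T (v x)) * (‖fderiv ℝ η x‖ * (L * ‖fderiv ℝ v x‖)) := by
      rw [abs_mul, abs_mul, abs_mul, abs_two]
      have := hPT _ (hv x)
      have c1 := hY0 _ (hv x)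
      have c2 := hT0 _ (hv x)
      gcongr
    have b3 : η x ^ 2 * (Y (v x) ^ 2) * (l * ‖fderiv ℝ v x‖ ^ 2) ≤
        η x ^ 2 * P' (v x) * fderiv ℝ v x (a x) := by
      have := hPY _ (hv x)
      have := h.ell x
      gcongr
      exact mul_nonneg (sq_nonneg _) ((sq_nonneg (Y (v x))).trans (hPY _ (hv x)))
    have b4 := neg_le_of_abs_le b2
    set A := |η x| * Y (v x) * ‖fderiv ℝ v x‖ with hA
    set B := T (v x) * ‖fderiv ℝ η x‖ with hB
    have b5 : 2 * L * A * B ≤ l / 2 * A ^ 2 + 2 * L ^ 2 / l * B ^ 2 := by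
      have : l / 2 * A ^ 2 + 2 * L ^ 2 / l * B ^ 2 - 2 * L * A * B = (l * A - 2 * L * B) ^ 2 / (2 * l) := by
        field_simp; ring
      have h2 : 0 ≤ (l * A - 2 * L * B) ^ 2 / (2 * l) := by positivity
      linarith
    have b6 : A ^ 2 = η x ^ 2 * (Y (v x) ^ 2 * ‖fderiv ℝ v x‖ ^ 2) := by
      rw [hA, mul_pow, mul_pow, sq_abs]; ring
    have b7 : B ^ 2 = T (v x) ^ 2 * ‖fderiv ℝ η x‖ ^ 2 := by rw [hB]; ring
    rw [← b6, ← b7]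
    have b8 : η x ^ 2 * (Y (v x) ^ 2) * (l * ‖fderiv ℝ v x‖ ^ 2) = l * A ^ 2 := by rw [b6]; ring
    have b9 : 2 * |η x| * (Y (v x) * T (v x)) * (‖fderiv ℝ η x‖ * (L * ‖fderiv ℝ v x‖)) =
      2 * L * A * B := by rw [hA, hB]; ring
    linarith
  have hIntg := integral_mono ((hi1.const_mul (l/2)).sub (hi2.const_mul (2 * L ^ 2 / l))) hi3 hpt
  simp only [Pi.sub_apply] at hIntg
  rw [hw, integral_sub (hi1.const_mul (l/2)) (hi2.const_mul (2 * L ^ 2 / l)),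
    integral_const_mul, integral_const_mul] at hIntg
  have e : 4 * L ^ 2 / l ^ 2 = (2 / l) * (2 * L ^ 2 / l) := by field_simp; ring
  rw [e, mul_assoc]
  have h3 : l / 2 * ∫ x, η x ^ 2 * (Y (v x) ^ 2 * ‖fderiv ℝ v x‖ ^ 2) ≤
    2 * L ^ 2 / l * ∫ x, T (v x) ^ 2 * ‖fderiv ℝ η x‖ ^ 2 := by linarith
  calc _ = (2 / l) * (l / 2 * ∫ x, η x ^ 2 * (Y (v x) ^ 2 * ‖fderiv ℝ v x‖ ^ 2)) := by
        field_simp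
    _ ≤ _ := by gcongr

end PDE
end PartA

section PartB
open MeasureTheory Set Filter Topology Metric

section PDE
variable {E : Type*} [NormedAddCommGroup E] [InnerProductSpace ℝ E] [FiniteDimensional ℝ E]
  [MeasurableSpace E] [BorelSpace E]

lemma logw_pos {t : ℝ} (ht : t ∈ Ioo (0:ℝ) 3) : 0 < Real.log 4 - Real.log t := by
  have : Real.log t < Real.log 4 := Real.log_lt_log ht.1 (by linarith [ht.2])
  linarith

lemma cacc {l L : ℝ} (hl : 0 < l) (hL : 0 ≤ L) {v : E → ℝ} {a : E → E} (h : IsSol l L v a)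
    (hv : ∀ x, v x ∈ Ioo (0:ℝ) 3) {q : ℝ} (hq : 1 ≤ q)
    {ζ : E → ℝ} (hζ : ContDiff ℝ 1 ζ) (hζc : HasCompactSupport ζ) :
    ∫ x, ζ x ^ 2 * ((q * (Real.log 4 - Real.log (v x)) ^ (q - 1) / v x) ^ 2 * ‖fderiv ℝ v x‖ ^ 2) ≤
      4 * L ^ 2 / l ^ 2 *
        ∫ x, ((Real.log 4 - Real.log (v x)) ^ q) ^ 2 * ‖fderiv ℝ ζ x‖ ^ 2 := by
  have hlog : ContinuousOn (fun t => Real.log 4 - Real.log t) (Ioo (0:ℝ) 3) :=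
    continuousOn_const.sub (Real.continuousOn_log.mono (fun t ht => by
      have := ht.1; simp; linarith))
  have hpw : ∀ r : ℝ, ContinuousOn (fun t => (Real.log 4 - Real.log t) ^ r) (Ioo (0:ℝ) 3) :=
    fun r => hlog.rpow_const (fun t ht => Or.inl (logw_pos ht).ne')
  have hid : ContinuousOn (fun t : ℝ => t) (Ioo (0:ℝ) 3) := continuousOn_id
  have hne : ∀ t ∈ Ioo (0:ℝ) 3, t ≠ 0 := fun t ht => ht.1.ne'
  refine energy hl hL h (b := 3) hv
    (P := fun t => -q * (Real.log 4 - Real.log t) ^ (2 * q - 1) / t)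
    (P' := fun t => q * (2 * q - 1) * (Real.log 4 - Real.log t) ^ (2 * q - 2) / t ^ 2
      + q * (Real.log 4 - Real.log t) ^ (2 * q - 1) / t ^ 2)
    (Y := fun t => q * (Real.log 4 - Real.log t) ^ (q - 1) / t)
    (T := fun t => (Real.log 4 - Real.log t) ^ q) ?_ ?_ ?_ ?_ ?_ ?_ ?_ ?_ hζ hζc
  · intro t ht
    have hw := logw_pos ht
    have ht0 := hne t ht
    have h1 := (Real.hasDerivAt_log ht0).const_sub (Real.log 4)
    have h2 := h1.rpow_const (p := 2 * q - 1) (Or.inl hw.ne')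
    have h3 := (h2.const_mul (-q)).div (hasDerivAt_id t) ht0
    refine h3.congr_deriv ?_
    simp only [id]
    rw [show 2 * q - 1 - 1 = 2 * q - 2 by ring]
    field_simp
    ring
  · refine ContinuousOn.add ?_ ?_
    · exact ((continuousOn_const.mul (hpw _)).div (hid.pow 2) (fun t ht => pow_ne_zero 2 (hne t ht)))
    · exact ((continuousOn_const.mul (hpw _)).div (hid.pow 2) (fun t ht => pow_ne_zero 2 (hne t ht)))
  · exact ((continuousOn_const.mul (hpw _)).div hid hne)
  · exact hpw _
  · intro t ht
    exact Real.rpow_nonneg (logw_pos ht).le _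
  · intro t ht
    have := ht.1
    have := (logw_pos ht)
    positivity
  · intro t ht
    have h0 := ht.1
    have hw := logw_pos ht
    set W := Real.log 4 - Real.log t
    have e1 : (W ^ (q - 1)) ^ 2 = W ^ (2 * q - 2) := by
      rw [← Real.rpow_natCast, ← Real.rpow_mul hw.le]; congr 1; push_cast; ring
    beta_reduce
    rw [div_pow, mul_pow, e1]
    have : q ^ 2 * W ^ (2 * q - 2) / t ^ 2 ≤ q * (2 * q - 1) * W ^ (2 * q - 2) / t ^ 2 := by
      have : q ^ 2 ≤ q * (2 * q - 1) := by nlinarith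
      gcongr
    have h2 : 0 ≤ q * W ^ (2 * q - 1) / t ^ 2 := by positivity
    linarith
  · intro t ht
    have h0 := ht.1
    have hw := logw_pos ht
    set W := Real.log 4 - Real.log t
    have e1 : W ^ (2 * q - 1) = W ^ (q - 1) * W ^ q := by
      rw [← Real.rpow_add hw]; congr 1; ring
    have : 0 ≤ q * W ^ (2 * q - 1) / t := by positivity
    beta_reduce
    rw [neg_mul, neg_div, abs_neg, abs_of_nonneg this, e1]
    apply le_of_eq; ring

lemma wpow_hasFDerivAt {v : E → ℝ} {x : E} (hv : v x ∈ Ioo (0:ℝ) 3) (hd : DifferentiableAt ℝ v x)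
    (q : ℝ) : HasFDerivAt (fun x => (Real.log 4 - Real.log (v x)) ^ q)
      ((-(q * (Real.log 4 - Real.log (v x)) ^ (q - 1) / v x)) • fderiv ℝ v x) x := by
  have h1 := (Real.hasDerivAt_log hv.1.ne').const_sub (Real.log 4)
  have h2 := h1.rpow_const (p := q) (Or.inl (logw_pos hv).ne')
  have h3 := h2.comp_hasFDerivAt x hd.hasFDerivAt
  refine h3.congr_fderiv ?_
  congr 1
  field_simp

lemma wpow_contDiff {v : E → ℝ} (hv : ∀ x, v x ∈ Ioo (0:ℝ) 3) (hd : ContDiff ℝ 1 v)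
    (q : ℝ) : ContDiff ℝ 1 (fun x => (Real.log 4 - Real.log (v x)) ^ q) :=
  (contDiff_const.sub (hd.log (fun x => (hv x).1.ne'))).rpow_const_of_ne
    (fun x => (logw_pos (hv x)).ne')

lemma energy_g {l L : ℝ} (hl : 0 < l) (hL : 0 ≤ L) {v : E → ℝ} {a : E → E} (h : IsSol l L v a)
    (hv : ∀ x, v x ∈ Ioo (0:ℝ) 3) {q : ℝ} (hq : 1 ≤ q)
    {ζ : E → ℝ} (hζ : ContDiff ℝ 1 ζ) (hζc : HasCompactSupport ζ) :
    ∫ x, ‖fderiv ℝ (fun x => (Real.log 4 - Real.log (v x)) ^ q * ζ x) x‖ ^ 2 ≤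
      (8 * L ^ 2 / l ^ 2 + 2) *
        ∫ x, ((Real.log 4 - Real.log (v x)) ^ q) ^ 2 * ‖fderiv ℝ ζ x‖ ^ 2 := by
  have hc := cacc hl hL h hv hq hζ hζc
  have hwq := wpow_contDiff hv h.smooth q
  have hwq1 := wpow_contDiff hv h.smooth (q - 1)
  have hg : ContDiff ℝ 1 (fun x => (Real.log 4 - Real.log (v x)) ^ q * ζ x) := hwq.mul hζ
  have hgc : HasCompactSupport (fun x => (Real.log 4 - Real.log (v x)) ^ q * ζ x) := hζc.mul_left
  have hDv : Continuous (fderiv ℝ v) := h.smooth.continuous_fderiv (by norm_num)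
  have hDζ : Continuous (fderiv ℝ ζ) := hζ.continuous_fderiv (by norm_num)
  have hDg := hg.continuous_fderiv (by norm_num)
  have hi1 : Integrable (fun x => ζ x ^ 2 * ((q * (Real.log 4 - Real.log (v x)) ^ (q - 1) / v x) ^ 2
      * ‖fderiv ℝ v x‖ ^ 2)) := by
    refine Continuous.integrable_of_hasCompactSupport ?_ ?_
    · exact (hζ.continuous.pow 2).mul ((((continuous_const.mul hwq1.continuous).div
        h.smooth.continuous (fun x => (hv x).1.ne')).pow 2).mul (hDv.norm.pow 2))
    · have : HasCompactSupport (fun x => ζ x ^ 2) :=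
        hζc.comp_left (g := fun z : ℝ => z ^ 2) (by simp)
      exact this.mul_right
  have hi2 : Integrable (fun x => ((Real.log 4 - Real.log (v x)) ^ q) ^ 2 * ‖fderiv ℝ ζ x‖ ^ 2) := by
    refine Continuous.integrable_of_hasCompactSupport ?_ ?_
    · exact (hwq.continuous.pow 2).mul (hDζ.norm.pow 2)
    · have : HasCompactSupport (fun x => ‖fderiv ℝ ζ x‖ ^ 2) :=
        (hζc.fderiv (𝕜 := ℝ)).comp_left (g := fun z => ‖z‖ ^ 2) (by simp)
      exact this.mul_left
  have hi3 : Integrable (fun x =>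
      ‖fderiv ℝ (fun x => (Real.log 4 - Real.log (v x)) ^ q * ζ x) x‖ ^ 2) := by
    refine Continuous.integrable_of_hasCompactSupport (hDg.norm.pow 2) ?_
    exact (hgc.fderiv (𝕜 := ℝ)).comp_left (g := fun z => ‖z‖ ^ 2) (by simp)
  have hpt : ∀ x, ‖fderiv ℝ (fun x => (Real.log 4 - Real.log (v x)) ^ q * ζ x) x‖ ^ 2 ≤
      2 * (ζ x ^ 2 * ((q * (Real.log 4 - Real.log (v x)) ^ (q - 1) / v x) ^ 2
      * ‖fderiv ℝ v x‖ ^ 2)) +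
      2 * (((Real.log 4 - Real.log (v x)) ^ q) ^ 2 * ‖fderiv ℝ ζ x‖ ^ 2) := by
    intro x
    have e1 := wpow_hasFDerivAt (hv x) (h.smooth.differentiable (by norm_num) x) q
    have e2 : HasFDerivAt ζ (fderiv ℝ ζ x) x := (hζ.differentiable (by norm_num) x).hasFDerivAt
    have e3 := (e1.mul e2).fderiv
    have e4 : fderiv ℝ (fun x => (Real.log 4 - Real.log (v x)) ^ q * ζ x) x = _ := e3
    rw [e4]
    set A := (Real.log 4 - Real.log (v x)) ^ q • fderiv ℝ ζ x
    set B := ζ x • ((-(q * (Real.log 4 - Real.log (v x)) ^ (q - 1) / v x)) • fderiv ℝ v x)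
    have hA : ‖A‖ ^ 2 = ((Real.log 4 - Real.log (v x)) ^ q) ^ 2 * ‖fderiv ℝ ζ x‖ ^ 2 := by
      rw [norm_smul, mul_pow, Real.norm_eq_abs, sq_abs]
    have hB : ‖B‖ ^ 2 = (ζ x ^ 2 * ((q * (Real.log 4 - Real.log (v x)) ^ (q - 1) / v x) ^ 2
      * ‖fderiv ℝ v x‖ ^ 2)) := by
      rw [norm_smul, norm_smul, mul_pow, mul_pow, Real.norm_eq_abs, Real.norm_eq_abs, sq_abs, sq_abs]
      ring
    rw [← hA, ← hB]
    have := norm_add_le A B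
    have h2 : ‖A + B‖ ^ 2 ≤ (‖A‖ + ‖B‖) ^ 2 := by gcongr
    nlinarith [sq_nonneg (‖A‖ - ‖B‖)]
  have := integral_mono hi3 ((hi1.const_mul 2).add (hi2.const_mul 2)) hpt
  simp only [Pi.add_apply] at this
  rw [integral_add (hi1.const_mul 2) (hi2.const_mul 2), integral_const_mul, integral_const_mul] at this
  refine this.trans ?_
  have e : (8 * L ^ 2 / l ^ 2 + 2) = 2 * (4 * L ^ 2 / l ^ 2) + 2 := by ring
  rw [e, add_mul, mul_assoc]
  gcongr

/-- Sobolev inequality for squares. -/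
lemma sob {κ : ℝ} (hκ : Real.HolderConjugate (Module.finrank ℝ E) κ) :
    ∃ C : ℝ, 0 < C ∧ ∀ g : E → ℝ, ContDiff ℝ 1 g → HasCompactSupport g →
      ∫ x, (g x ^ 2) ^ κ ≤ C * (∫ x, g x ^ 2 + ‖fderiv ℝ g x‖ ^ 2) ^ κ := by
  have hκ0 : 0 < κ := hκ.symm.pos
  refine ⟨lintegralPowLePowLIntegralFDerivConst (volume : Measure E) κ + 1, by positivity, ?_⟩
  intro g hg hgc
  set K := lintegralPowLePowLIntegralFDerivConst (volume : Measure E) κ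
  have hf : ContDiff ℝ 1 (fun x => g x ^ 2) := hg.pow 2
  have hfc : HasCompactSupport (fun x => g x ^ 2) :=
    hgc.comp_left (g := fun z : ℝ => z ^ 2) (by simp)
  have hS := lintegral_pow_le_pow_lintegral_fderiv (volume : Measure E) hf hfc hκ
  have hDg := hg.continuous_fderiv (by norm_num)
  have hi : Integrable (fun x => g x ^ 2 + ‖fderiv ℝ g x‖ ^ 2) := by
    refine Integrable.add (hf.continuous.integrable_of_hasCompactSupport hfc) ?_
    refine Continuous.integrable_of_hasCompactSupport (hDg.norm.pow 2) ?_
    exact (hgc.fderiv (𝕜 := ℝ)).comp_left (g := fun z => ‖z‖ ^ 2) (by simp)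
  have hD : ∀ x, ‖fderiv ℝ (fun x => g x ^ 2) x‖ₑ ≤ ENNReal.ofReal (g x ^ 2 + ‖fderiv ℝ g x‖ ^ 2) := by
    intro x
    have e1 : HasFDerivAt g (fderiv ℝ g x) x := (hg.differentiable (by norm_num) x).hasFDerivAt
    have e2 : fderiv ℝ (fun x => g x ^ 2) x = _ := (e1.pow 2).fderiv
    rw [← ofReal_norm, e2]
    apply ENNReal.ofReal_le_ofReal
    rw [norm_smul]
    simp
    nlinarith [sq_nonneg (|g x| - ‖fderiv ℝ g x‖), sq_abs (g x)]
  have h1 : ∫⁻ x, ‖fderiv ℝ (fun x => g x ^ 2) x‖ₑ ≤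
      ENNReal.ofReal (∫ x, g x ^ 2 + ‖fderiv ℝ g x‖ ^ 2) := by
    rw [ofReal_integral_eq_lintegral_ofReal hi (Eventually.of_forall fun x => by positivity)]
    exact lintegral_mono hD
  have h2 : ∫⁻ x, ‖g x ^ 2‖ₑ ^ κ = ∫⁻ x, ENNReal.ofReal ((g x ^ 2) ^ κ) := by
    refine lintegral_congr fun x => ?_
    rw [← ofReal_norm, ENNReal.ofReal_rpow_of_nonneg (norm_nonneg _) hκ0.le,
      Real.norm_of_nonneg (sq_nonneg _)]
  rw [integral_eq_lintegral_of_nonneg_ae (Eventually.of_forall fun x => by positivity)]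
  swap
  · exact (hf.continuous.rpow_const (fun x => Or.inr hκ0.le)).aestronglyMeasurable
  rw [← h2]
  have hnn : 0 ≤ ∫ x, g x ^ 2 + ‖fderiv ℝ g x‖ ^ 2 := integral_nonneg fun x => by positivity
  apply ENNReal.toReal_le_of_le_ofReal (by positivity)
  refine hS.trans ?_
  rw [ENNReal.ofReal_mul (by positivity), ← ENNReal.ofReal_rpow_of_nonneg hnn hκ0.le]
  gcongr
  rw [ENNReal.ofReal_add (by positivity) (by positivity)]
  simp only [ENNReal.ofReal_coe_nnreal]
  exact le_self_add

end PDE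
end PartB

section PartC
open MeasureTheory Set Filter Topology Metric

section PDE
variable {E : Type*} [NormedAddCommGroup E] [InnerProductSpace ℝ E] [FiniteDimensional ℝ E]
  [MeasurableSpace E] [BorelSpace E]

lemma moser_int {v : E → ℝ} (hv : ∀ x, v x ∈ Ioo (0:ℝ) 3) (hd : ContDiff ℝ 1 v)
    {η : E → ℝ} (hη : ContDiff ℝ 1 η) (hηc : HasCompactSupport η) (r : ℝ) {p : ℝ} (hp : 0 < p) :
    Integrable (fun x => (Real.log 4 - Real.log (v x)) ^ r * η x ^ p) := by
  refine Continuous.integrable_of_hasCompactSupport ?_ ?_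
  · exact (wpow_contDiff hv hd r).continuous.mul (hη.continuous.rpow_const fun x => Or.inr hp.le)
  · have : HasCompactSupport (fun x => η x ^ p) :=
      hηc.comp_left (g := fun z : ℝ => z ^ p) (Real.zero_rpow hp.ne')
    exact this.mul_left

set_option maxHeartbeats 2000000 in
lemma moser_step {l L : ℝ} (hl : 0 < l) (hL : 0 ≤ L) {N κ : ℝ} (hN : N = Module.finrank ℝ E)
    (hκ : Real.HolderConjugate N κ)
    {η : E → ℝ} (hη : ContDiff ℝ 1 η) (hηc : HasCompactSupport η) (hη0 : ∀ x, 0 ≤ η x)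
    (hη1 : ∀ x, η x ≤ 1) {G : ℝ} (hG : ∀ x, ‖fderiv ℝ η x‖ ≤ G) :
    ∃ C : ℝ, 0 < C ∧ ∀ (v : E → ℝ) (a : E → E), IsSol l L v a → (∀ x, v x ∈ Ioo (0:ℝ) 3) →
      ∀ q : ℝ, 1 ≤ q →
      ∫ x, (Real.log 4 - Real.log (v x)) ^ (2 * (κ * q)) * η x ^ (2 * (κ * q) * (N + 1) - 2 * N) ≤
      C * ((1 + (8 * L ^ 2 / l ^ 2 + 2) * ((N + 1) ^ 2 * G ^ 2)) * q ^ 2 *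
        ∫ x, (Real.log 4 - Real.log (v x)) ^ (2 * q) * η x ^ (2 * q * (N + 1) - 2 * N)) ^ κ := by
  have hκ' := hκ
  rw [hN] at hκ'
  obtain ⟨C, hC, hS⟩ := sob (E := E) hκ'
  refine ⟨C, hC, ?_⟩
  intro v a h hv q hq
  have hN1 : 1 < N := hκ.lt
  have hκ0 : 0 < κ := hκ.symm.pos
  have hκN : (N - 1) * κ = N := hκ.sub_one_mul_conj
  have hG0 : 0 ≤ G := (norm_nonneg _).trans (hG 0)
  set s := q * (N + 1) - (N - 1) with hs
  have hs2 : 2 ≤ s := by rw [hs]; nlinarith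
  have hsq : s ≤ q * (N + 1) := by rw [hs]; linarith
  have hζ : ContDiff ℝ 1 (fun x => η x ^ s) := by
    have := ContDiff.rpow_const_of_le (m := 1) (p := s) hη (by push_cast; linarith)
    exact_mod_cast this
  have hζc : HasCompactSupport (fun x => η x ^ s) :=
    hηc.comp_left (g := fun z : ℝ => z ^ s) (Real.zero_rpow (by linarith))
  have hwpos : ∀ x, 0 < Real.log 4 - Real.log (v x) := fun x => logw_pos (hv x)
  have hwq := wpow_contDiff hv h.smooth q
  have hDζ : ∀ x, ‖fderiv ℝ (fun x => η x ^ s) x‖ ^ 2 ≤ s ^ 2 * G ^ 2 * η x ^ (2 * s - 2) := by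
    intro x
    have e1 : HasFDerivAt η (fderiv ℝ η x) x := (hη.differentiable (by norm_num) x).hasFDerivAt
    rw [(e1.rpow_const (p := s) (Or.inr (by linarith))).fderiv, norm_smul, Real.norm_of_nonneg
      (by have := hη0 x; positivity)]
    have : η x ^ (2 * s - 2) = (η x ^ (s - 1)) ^ 2 := by
      rw [← Real.rpow_natCast, ← Real.rpow_mul (hη0 x)]; congr 1; push_cast; ring
    rw [this]
    have h1 := hG x
    have h2 := hη0 x
    calc (s * η x ^ (s - 1) * ‖fderiv ℝ η x‖) ^ 2 ≤ (s * η x ^ (s - 1) * G) ^ 2 := by gcongr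
      _ = _ := by ring
  have hsq2 : ∀ x, ((Real.log 4 - Real.log (v x)) ^ q) ^ 2 = (Real.log 4 - Real.log (v x)) ^ (2 * q) := by
    intro x
    rw [← Real.rpow_natCast, ← Real.rpow_mul (hwpos x).le]; congr 1; push_cast; ring
  have hexp : 2 * q * (N + 1) - 2 * N = 2 * s - 2 := by rw [hs]; ring
  have hexp2 : 2 * (κ * q) * (N + 1) - 2 * N = 2 * s * κ := by
    rw [hs]; linear_combination (2:ℝ) * hκN
  rw [hexp, hexp2]
  set I := ∫ x, (Real.log 4 - Real.log (v x)) ^ (2 * q) * η x ^ (2 * s - 2) with hI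
  have hiI := moser_int hv h.smooth hη hηc (2 * q) (p := 2 * s - 2) (by linarith)
  have hI0 : 0 ≤ I := integral_nonneg fun x => by
    have := hwpos x; have := hη0 x; positivity
  have hE := energy_g hl hL h hv hq hζ hζc
  have hDζc := hζ.continuous_fderiv (by norm_num)
  set g := fun x => (Real.log 4 - Real.log (v x)) ^ q * η x ^ s with hgdef
  have hg : ContDiff ℝ 1 g := hwq.mul hζ
  have hgc : HasCompactSupport g := hζc.mul_left
  have hDg := hg.continuous_fderiv (by norm_num)
  have h1 : ∫ x, ((Real.log 4 - Real.log (v x)) ^ q) ^ 2 * ‖fderiv ℝ (fun x => η x ^ s) x‖ ^ 2 ≤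
      s ^ 2 * G ^ 2 * I := by
    rw [hI, ← integral_const_mul]
    refine integral_mono ?_ (hiI.const_mul _) ?_
    · refine Continuous.integrable_of_hasCompactSupport ?_ ?_
      · exact (hwq.continuous.pow 2).mul (hDζc.norm.pow 2)
      · have : HasCompactSupport (fun x => ‖fderiv ℝ (fun x => η x ^ s) x‖ ^ 2) :=
          (hζc.fderiv (𝕜 := ℝ)).comp_left (g := fun z => ‖z‖ ^ 2) (by simp)
        exact this.mul_left
    · intro x
      beta_reduce
      rw [hsq2]
      have := hDζ x
      have hw := (hwpos x).le
      calc _ ≤ (Real.log 4 - Real.log (v x)) ^ (2 * q) * (s ^ 2 * G ^ 2 * η x ^ (2 * s - 2)) := by gcongr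
        _ = _ := by ring
  have hig2 : Integrable (fun x => g x ^ 2) := by
    have c1 : HasCompactSupport (fun x => g x ^ 2) :=
      hgc.comp_left (g := fun z : ℝ => z ^ 2) (by simp)
    have c2 : Continuous (fun x => g x ^ 2) := hg.continuous.pow 2
    exact c2.integrable_of_hasCompactSupport c1
  have h2 : ∫ x, g x ^ 2 ≤ I := by
    refine integral_mono hig2 hiI ?_
    intro x
    simp only [hgdef]
    rw [mul_pow, hsq2]
    have hw := (hwpos x).le
    have : (η x ^ s) ^ 2 ≤ η x ^ (2 * s - 2) := by
      rw [← Real.rpow_natCast, ← Real.rpow_mul (hη0 x)]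
      apply Real.rpow_le_rpow_of_exponent_ge_of_imp (hη0 x) (hη1 x)
      · push_cast; linarith
      · intro _ h0; exfalso; push_cast at h0; linarith
    gcongr
  have hiDg : Integrable (fun x => ‖fderiv ℝ g x‖ ^ 2) :=
by
    have c1 : HasCompactSupport (fun x => ‖fderiv ℝ g x‖ ^ 2) :=
      (hgc.fderiv (𝕜 := ℝ)).comp_left (g := fun z => ‖z‖ ^ 2) (by simp)
    have c2 : Continuous (fun x => ‖fderiv ℝ g x‖ ^ 2) := hDg.norm.pow 2
    exact c2.integrable_of_hasCompactSupport c1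
  have h3 : ∫ x, g x ^ 2 + ‖fderiv ℝ g x‖ ^ 2 ≤
      (1 + (8 * L ^ 2 / l ^ 2 + 2) * ((N + 1) ^ 2 * G ^ 2)) * q ^ 2 * I := by
    rw [integral_add hig2 hiDg]
    have h4 : ∫ x, ‖fderiv ℝ g x‖ ^ 2 ≤ (8 * L ^ 2 / l ^ 2 + 2) * ((q * (N + 1)) ^ 2 * G ^ 2 * I) := by
      refine hE.trans ?_
      have : s ^ 2 * G ^ 2 * I ≤ (q * (N + 1)) ^ 2 * G ^ 2 * I := by gcongr
      have := h1.trans this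
      gcongr
    have h5 : I ≤ q ^ 2 * I := by
      have : 1 ≤ q ^ 2 := by nlinarith
      nlinarith
    calc _ ≤ q ^ 2 * I + (8 * L ^ 2 / l ^ 2 + 2) * ((q * (N + 1)) ^ 2 * G ^ 2 * I) :=
          add_le_add (h2.trans h5) h4
      _ = _ := by ring
  have h6 : ∫ x, (g x ^ 2) ^ κ = ∫ x, (Real.log 4 - Real.log (v x)) ^ (2 * (κ * q)) * η x ^ (2 * s * κ) := by
    refine integral_congr_ae (Eventually.of_forall fun x => ?_)
    simp only [hgdef]
    have hw := (hwpos x).le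
    have hx := hη0 x
    rw [mul_pow, Real.mul_rpow (by positivity) (by positivity), hsq2, ← Real.rpow_mul hw,
      ← Real.rpow_natCast (η x ^ s), ← Real.rpow_mul hx, ← Real.rpow_mul hx]
    congr 2
    · ring
    · push_cast; ring
  rw [← h6]
  refine (hS g hg hgc).trans ?_
  have : 0 ≤ ∫ x, g x ^ 2 + ‖fderiv ℝ g x‖ ^ 2 := integral_nonneg fun x => by positivity
  gcongr

/-- abstract iteration -/
lemma iterate {κ C K m : ℝ} (hκ : 1 < κ) (hC : 0 < C) (hK : 0 < K) :
    ∃ α : ℝ, ∀ I : ℕ → ℝ, (∀ k, 0 ≤ I k) → I 0 ≤ m →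
      (∀ k, I (k+1) ≤ C * (K * (κ ^ k) ^ 2 * I k) ^ κ) →
      ∀ k, I k ≤ Real.exp (κ ^ k * α) := by
  have hκ0 : 0 < κ := by linarith
  have hκ1 : 0 < κ - 1 := by linarith
  set b := 2 * Real.log κ with hb
  have hb0 : 0 ≤ b := by have := Real.log_nonneg hκ.le; positivity
  set a := |Real.log K| + |Real.log C| with ha
  have ha0 : 0 ≤ a := by positivity
  set β := κ * b / (κ - 1) with hβ
  have hβ0 : 0 ≤ β := by positivity
  set γ := (β + κ * a) / (κ - 1) with hγ
  have hγ0 : 0 ≤ γ := by positivity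
  set α := Real.log (max m 1) + γ with hα
  refine ⟨α, fun I hI0 hIm hI => ?_⟩
  have key : ∀ k : ℕ, I k ≤ Real.exp (κ ^ k * α - β * k - γ) := by
    intro k
    induction k with
    | zero =>
      simp [hα]
      rw [Real.exp_log (by positivity)]
      exact hIm.trans (le_max_left _ _)
    | succ k ih =>
      refine (hI k).trans ?_
      have e1 : (κ ^ k) ^ 2 = Real.exp (b * k) := by
        rw [hb, ← Real.exp_log (show 0 < (κ ^ k) ^ 2 by positivity)]
        congr 1
        rw [Real.log_pow, Real.log_pow]; push_cast; ring
      have e2 : K ≤ Real.exp |Real.log K| := by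
        conv_lhs => rw [← Real.exp_log hK]
        exact Real.exp_le_exp.2 (le_abs_self _)
      have e3 : C ≤ Real.exp (κ * |Real.log C|) := by
        conv_lhs => rw [← Real.exp_log hC]
        apply Real.exp_le_exp.2
        have := le_abs_self (Real.log C)
        nlinarith [abs_nonneg (Real.log C)]
      have h0 := hI0 k
      have e4 : (K * (κ ^ k) ^ 2 * I k) ^ κ ≤
          Real.exp (κ * (|Real.log K| + b * k + (κ ^ k * α - β * k - γ))) := by
        rw [mul_comm κ, Real.exp_mul, Real.exp_add, Real.exp_add, ← e1]
        gcongr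
      calc _ ≤ Real.exp (κ * |Real.log C|) *
          Real.exp (κ * (|Real.log K| + b * k + (κ ^ k * α - β * k - γ))) := by gcongr
        _ = Real.exp (κ * |Real.log C| + κ * (|Real.log K| + b * k + (κ ^ k * α - β * k - γ))) := by
          rw [Real.exp_add]
        _ ≤ _ := by
          apply Real.exp_le_exp.2
          have f1 : κ * (β - b) = β := by rw [hβ]; field_simp; ring
          have f2 : κ * (γ - a) = β + γ := by rw [hγ]; field_simp; ring
          push_cast
          apply le_of_eq
          have f3 : κ * a = κ * |Real.log K| + κ * |Real.log C| := by rw [ha]; ring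
          rw [pow_succ]
          linear_combination (-(k:ℝ)) * f1 - f2 - f3
  intro k
  refine (key k).trans (Real.exp_le_exp.2 ?_)
  have : 0 ≤ β * k := by positivity
  linarith

end PDE
end PartC

section PartD
open MeasureTheory Set Filter Topology Metric
open scoped ENNReal

section PDE
variable {E : Type*} [NormedAddCommGroup E] [InnerProductSpace ℝ E] [FiniteDimensional ℝ E]
  [MeasurableSpace E] [BorelSpace E]

lemma moser_sup {l L : ℝ} (hl : 0 < l) (hL : 0 ≤ L) (hn : 2 ≤ Module.finrank ℝ E)
    {η : E → ℝ} (hη : ContDiff ℝ 1 η) (hηc : HasCompactSupport η) (hη0 : ∀ x, 0 ≤ η x)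
    (hη1 : ∀ x, η x ≤ 1) (m : ℝ) :
    ∃ C : ℝ, ∀ (v : E → ℝ) (a : E → E), IsSol l L v a → (∀ x, v x ∈ Ioo (0:ℝ) 3) →
      ∫ x, (Real.log 4 - Real.log (v x)) ^ (2:ℝ) * η x ^ (2:ℝ) ≤ m →
      ∀ x, (∀ᶠ y in 𝓝 x, η y = 1) → Real.log 4 - Real.log (v x) ≤ C := by
  obtain ⟨N, hN⟩ : ∃ N : ℝ, N = (Module.finrank ℝ E : ℝ) := ⟨_, rfl⟩
  have hN2 : (2:ℝ) ≤ N := by rw [hN]; exact_mod_cast hn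
  have hκ : Real.HolderConjugate N (Real.conjExponent N) :=
    Real.HolderConjugate.conjExponent (by linarith)
  set κ := Real.conjExponent N
  have hκ1 : 1 < κ := hκ.symm.lt
  have hκ0 : 0 < κ := by linarith
  obtain ⟨G, hG⟩ := (hηc.fderiv (𝕜 := ℝ)).exists_bound_of_continuous
    (hη.continuous_fderiv (by norm_num))
  obtain ⟨C, hC, hstep⟩ := moser_step hl hL hN hκ hη hηc hη0 hη1 hG
  obtain ⟨α, hα⟩ := iterate (m := m) hκ1 hC
    (show 0 < 1 + (8 * L ^ 2 / l ^ 2 + 2) * ((N + 1) ^ 2 * G ^ 2) by positivity)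
  refine ⟨Real.exp (α / 2), fun v a h hv hm x hx => ?_⟩
  have hwpos : ∀ x, 0 < Real.log 4 - Real.log (v x) := fun x => logw_pos (hv x)
  have hk1 : ∀ k : ℕ, 1 ≤ κ ^ k := fun k => one_le_pow₀ hκ1.le
  have hI := hα (fun k => ∫ x, (Real.log 4 - Real.log (v x)) ^ (2 * κ ^ k) *
    η x ^ (2 * κ ^ k * (N + 1) - 2 * N))
    (fun k => integral_nonneg fun x => by have := hwpos x; have := hη0 x; positivity)
    (by
      refine le_trans (le_of_eq ?_) hm
      simp only [pow_zero, mul_one]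
      congr 1; ext x; congr 2; ring)
    (fun k => by
      have := hstep v a h hv (κ ^ k) (hk1 k)
      simpa only [pow_succ'] using this)
  by_contra! hlt
  obtain ⟨c, hc1, hc2⟩ := exists_between hlt
  have hc0 : 0 < c := (Real.exp_pos _).trans hc1
  have hwc : Continuous (fun x => Real.log 4 - Real.log (v x)) := by
    simpa using (wpow_contDiff hv h.smooth 1).continuous
  have hU : ∀ᶠ y in 𝓝 x, c < Real.log 4 - Real.log (v y) ∧ η y = 1 :=
    (hwc.continuousAt.eventually (lt_mem_nhds hc2)).and hx
  obtain ⟨r, hr, hrU⟩ := Metric.eventually_nhds_iff_ball.1 hU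
  set μ0 := (volume (ball x r)).toReal with hμ0
  have hμpos : 0 < μ0 :=
    ENNReal.toReal_pos (measure_ball_pos _ _ hr).ne' measure_ball_lt_top.ne
  have hlow : ∀ k : ℕ, μ0 * (c ^ 2) ^ (κ ^ k) ≤ Real.exp α ^ (κ ^ k) := by
    intro k
    have h1 := hI k
    rw [mul_comm (κ ^ k) α, Real.exp_mul] at h1
    refine le_trans ?_ h1
    have hIntg := moser_int hv h.smooth hη hηc (2 * κ ^ k) (p := 2 * κ ^ k * (N + 1) - 2 * N)
      (by nlinarith [hk1 k])
    have h2 : ∫ y in ball x r, (c ^ 2) ^ (κ ^ k) ≤ ∫ y in ball x r,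
        (Real.log 4 - Real.log (v y)) ^ (2 * κ ^ k) * η y ^ (2 * κ ^ k * (N + 1) - 2 * N) := by
      refine setIntegral_mono_on (integrableOn_const measure_ball_lt_top.ne) hIntg.integrableOn
        measurableSet_ball ?_
      intro y hy
      obtain ⟨hy1, hy2⟩ := hrU y hy
      rw [hy2, Real.one_rpow, mul_one, Real.rpow_mul (hwpos y).le]
      have : ((Real.log 4 - Real.log (v y)) ^ (2:ℝ)) = (Real.log 4 - Real.log (v y)) ^ 2 := by
        norm_cast
      rw [this]
      gcongr
    rw [setIntegral_const, smul_eq_mul] at h2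
    refine h2.trans (setIntegral_le_integral hIntg (Eventually.of_forall fun x => ?_))
    have := hwpos x; have := hη0 x
    simp only [Pi.zero_apply]
    positivity
  have hratio : Real.exp α / c ^ 2 < 1 := by
    rw [div_lt_one (by positivity)]
    have : Real.exp α = Real.exp (α / 2) ^ 2 := by
      rw [← Real.exp_nat_mul]; congr 1; push_cast; ring
    rw [this]
    gcongr
  have hlow2 : ∀ k : ℕ, μ0 ≤ (Real.exp α / c ^ 2) ^ (κ ^ k) := by
    intro k
    rw [Real.div_rpow (Real.exp_pos _).le (by positivity), le_div_iff₀ (by positivity)]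
    exact hlow k
  have hr0 : 0 < Real.exp α / c ^ 2 := by positivity
  have hlim : Tendsto (fun k : ℕ => (Real.exp α / c ^ 2) ^ (κ ^ k)) atTop (𝓝 0) :=
    (tendsto_rpow_atTop_of_base_lt_one _ (by linarith) hratio).comp
      (tendsto_pow_atTop_atTop_of_one_lt hκ1)
  have := ge_of_tendsto' hlim hlow2
  linarith

lemma subst_bound {B : Set E} (hB : Convex ℝ B) (hBm : MeasurableSet B) {H : E → ℝ≥0∞}
    (hH : Measurable H) {t : ℝ} (ht : 1 / 2 ≤ t) (ht1 : t ≤ 1) {x : E} (hx : x ∈ B) :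
    ∫⁻ y in B, H ((1 - t) • x + t • y) ≤ 2 ^ (Module.finrank ℝ E) * ∫⁻ z in B, H z := by
  have ht0 : 0 < t := by linarith
  have hBH : Measurable (B.indicator H) := hH.indicator hBm
  calc ∫⁻ y in B, H ((1 - t) • x + t • y)
      ≤ ∫⁻ y, B.indicator H ((1 - t) • x + t • y) := by
        rw [← lintegral_indicator hBm]
        refine lintegral_mono fun y => ?_
        by_cases hy : y ∈ B
        · rw [indicator_of_mem hy, indicator_of_mem]
          exact hB hx hy (by linarith) ht0.le (by ring)
        · rw [indicator_of_notMem hy]; exact zero_le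
    _ = ∫⁻ z, B.indicator H ((1 - t) • x + z) ∂(Measure.map (fun y : E => t • y) volume) := by
        have hm : Measurable (fun z => B.indicator H ((1 - t) • x + z)) :=
          hBH.comp (measurable_const_add _)
        rw [lintegral_map hm (measurable_const_smul t)]
    _ = ENNReal.ofReal |(t ^ (Module.finrank ℝ E))⁻¹| * ∫⁻ z, B.indicator H z := by
        have := Measure.map_addHaar_smul (volume : Measure E) ht0.ne'
        rw [this, lintegral_smul_measure, lintegral_add_left_eq_self (μ := volume)]
        rfl
    _ ≤ _ := by
        rw [lintegral_indicator hBm]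
        gcongr
        rw [abs_of_pos (by positivity)]
        have : (2:ℝ≥0∞) ^ (Module.finrank ℝ E) = ENNReal.ofReal (2 ^ (Module.finrank ℝ E)) := by
          rw [ENNReal.ofReal_pow (by norm_num)]; simp
        rw [this]
        apply ENNReal.ofReal_le_ofReal
        rw [← inv_pow]
        gcongr
        rw [inv_le_comm₀ ht0 (by norm_num)]
        linarith

lemma seg_bound {g : E → ℝ} (hg : ContDiff ℝ 1 g) (x y : E) :
    ENNReal.ofReal ((g y - g x) ^ 2) ≤ ENNReal.ofReal (‖y - x‖ ^ 2) *
      ∫⁻ t in Ioc (0:ℝ) 1, ENNReal.ofReal (‖fderiv ℝ g ((1 - t) • x + t • y)‖ ^ 2) := by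
  have hDg := hg.continuous_fderiv (by norm_num)
  have hpath : Continuous (fun t : ℝ => (1 - t) • x + t • y) := by fun_prop
  set f : ℝ → ℝ := fun t => fderiv ℝ g ((1 - t) • x + t • y) (y - x) with hf
  have hfc : Continuous f := (hDg.comp hpath).clm_apply continuous_const
  have hF : ∫ t in (0:ℝ)..1, f t = g y - g x := by
    have hd : ∀ t ∈ uIcc (0:ℝ) 1, HasDerivAt (fun t : ℝ => g ((1 - t) • x + t • y)) (f t) t := by
      intro t _
      have e1 : HasDerivAt (fun t : ℝ => (1 - t) • x + t • y) (y - x) t := by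
        have := (((hasDerivAt_id t).const_sub 1).smul_const x).add ((hasDerivAt_id t).smul_const y)
        refine this.congr_deriv ?_
        simp; abel
      exact ((hg.differentiable (by norm_num) _).hasFDerivAt).comp_hasDerivAt t e1
    rw [intervalIntegral.integral_eq_sub_of_hasDerivAt hd (hfc.intervalIntegrable _ _)]
    simp
  set M := ∫ t in (0:ℝ)..1, f t with hM
  have hJ : M ^ 2 ≤ ∫ t in (0:ℝ)..1, f t ^ 2 := by
    have h0 : 0 ≤ ∫ t in (0:ℝ)..1, (f t - M) ^ 2 :=
      intervalIntegral.integral_nonneg (by norm_num) fun t _ => sq_nonneg _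
    have e : ∫ t in (0:ℝ)..1, (f t - M) ^ 2 = (∫ t in (0:ℝ)..1, f t ^ 2) - M ^ 2 := by
      have : ∀ t, (f t - M) ^ 2 = f t ^ 2 - (2 * M * f t - M ^ 2) := fun t => by ring
      simp_rw [this]
      rw [intervalIntegral.integral_sub, intervalIntegral.integral_sub,
        intervalIntegral.integral_const_mul, ← hM]
      · simp; ring
      · exact (continuous_const.mul hfc).intervalIntegrable _ _
      · exact continuous_const.intervalIntegrable _ _
      · exact (hfc.pow 2).intervalIntegrable _ _
      · exact ((continuous_const.mul hfc).sub continuous_const).intervalIntegrable _ _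
    linarith
  have hb : ∀ t, f t ^ 2 ≤ ‖y - x‖ ^ 2 * ‖fderiv ℝ g ((1 - t) • x + t • y)‖ ^ 2 := by
    intro t
    have := (fderiv ℝ g ((1 - t) • x + t • y)).le_opNorm (y - x)
    rw [← sq_abs]
    calc |f t| ^ 2 ≤ (‖fderiv ℝ g ((1 - t) • x + t • y)‖ * ‖y - x‖) ^ 2 := by
          gcongr; exact this
      _ = _ := by ring
  have hcD : Continuous (fun t : ℝ => ‖fderiv ℝ g ((1 - t) • x + t • y)‖ ^ 2) :=
    (hDg.comp hpath).norm.pow 2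
  have h1 : (g y - g x) ^ 2 ≤ ‖y - x‖ ^ 2 *
      ∫ t in (0:ℝ)..1, ‖fderiv ℝ g ((1 - t) • x + t • y)‖ ^ 2 := by
    rw [← hF]
    refine hJ.trans ?_
    rw [← intervalIntegral.integral_const_mul]
    exact intervalIntegral.integral_mono_on (by norm_num) ((hfc.pow 2).intervalIntegrable _ _)
      ((continuous_const.mul hcD).intervalIntegrable _ _) fun t _ => hb t
  refine (ENNReal.ofReal_le_ofReal h1).trans ?_
  rw [ENNReal.ofReal_mul (by positivity), intervalIntegral.integral_of_le (by norm_num)]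
  gcongr
  rw [ofReal_integral_eq_lintegral_ofReal]
  · exact (hcD.integrableOn_Icc (a := 0) (b := 1)).mono_set Ioc_subset_Icc_self
  · exact Eventually.of_forall fun t => by positivity

lemma poincare_double {g : E → ℝ} (hg : ContDiff ℝ 1 g) :
    ∫⁻ x in ball (0:E) 1, ∫⁻ y in ball (0:E) 1, ENNReal.ofReal ((g y - g x) ^ 2) ≤
      4 * (2 ^ (Module.finrank ℝ E) * (∫⁻ z in ball (0:E) 1, ENNReal.ofReal (‖fderiv ℝ g z‖ ^ 2)) *
        volume (ball (0:E) 1)) := by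
  set B := ball (0:E) 1 with hB
  have hBm : MeasurableSet B := measurableSet_ball
  have hBc : Convex ℝ B := convex_ball _ _
  have hDg := hg.continuous_fderiv (by norm_num)
  set H : E → ℝ≥0∞ := fun z => ENNReal.ofReal (‖fderiv ℝ g z‖ ^ 2) with hH
  have hHc : Continuous H := ENNReal.continuous_ofReal.comp (hDg.norm.pow 2)
  have hHm : Measurable H := hHc.measurable
  have hmeas : Measurable (fun p : (E × ℝ) × E => H ((1 - p.1.2) • p.1.1 + p.1.2 • p.2)) :=
    (hHc.comp (by fun_prop : Continuous (fun p : (E × ℝ) × E =>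
      (1 - p.1.2) • p.1.1 + p.1.2 • p.2))).measurable
  have hslice : ∀ t ∈ Ioc (0:ℝ) 1, ∫⁻ x in B, ∫⁻ y in B, H ((1 - t) • x + t • y) ≤
      2 ^ (Module.finrank ℝ E) * (∫⁻ z in B, H z) * volume B := by
    intro t ht
    by_cases h2 : 1 / 2 ≤ t
    · calc _ ≤ ∫⁻ x in B, 2 ^ (Module.finrank ℝ E) * (∫⁻ z in B, H z) :=
            setLIntegral_mono' hBm fun x hx => subst_bound hBc hBm hHm h2 ht.2 hx
        _ = _ := by rw [setLIntegral_const]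
    · rw [lintegral_lintegral_swap]
      · calc _ ≤ ∫⁻ y in B, 2 ^ (Module.finrank ℝ E) * (∫⁻ z in B, H z) := by
              refine setLIntegral_mono' hBm fun y hy => ?_
              have := subst_bound hBc hBm hHm (t := 1 - t) (by linarith) (by linarith [ht.1]) hy
              refine le_trans (le_of_eq ?_) this
              congr 1; ext x; congr 1; rw [add_comm]; simp
          _ = _ := by rw [setLIntegral_const]
      · exact (hHc.comp (by fun_prop : Continuous (fun p : E × E =>
          (1 - t) • p.1 + t • p.2))).measurable.aemeasurable
  calc _ ≤ ∫⁻ x in B, ∫⁻ y in B, 4 * ∫⁻ t in Ioc (0:ℝ) 1, H ((1 - t) • x + t • y) := by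
        refine setLIntegral_mono' hBm fun x hx => setLIntegral_mono' hBm fun y hy => ?_
        refine (seg_bound hg x y).trans ?_
        have : ‖y - x‖ ≤ 2 := by
          have h1 := mem_ball_zero_iff.1 hx
          have h2 := mem_ball_zero_iff.1 hy
          linarith [norm_sub_le y x]
        gcongr
        rw [show (4:ℝ≥0∞) = ENNReal.ofReal 4 by simp]
        apply ENNReal.ofReal_le_ofReal
        nlinarith [norm_nonneg (y - x)]
    _ = 4 * ∫⁻ x in B, ∫⁻ y in B, ∫⁻ t in Ioc (0:ℝ) 1, H ((1 - t) • x + t • y) := by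
        simp_rw [lintegral_const_mul' 4 _ (by norm_num)]
    _ = 4 * ∫⁻ x in B, ∫⁻ t in Ioc (0:ℝ) 1, ∫⁻ y in B, H ((1 - t) • x + t • y) := by
        congr 2; ext x
        rw [lintegral_lintegral_swap]
        exact (hHc.comp (by fun_prop : Continuous (fun p : E × ℝ =>
          (1 - p.2) • x + p.2 • p.1))).measurable.aemeasurable
    _ = 4 * ∫⁻ t in Ioc (0:ℝ) 1, ∫⁻ x in B, ∫⁻ y in B, H ((1 - t) • x + t • y) := by
        congr 1
        rw [lintegral_lintegral_swap]
        exact (hmeas.lintegral_prod_right' (ν := volume.restrict B)).aemeasurable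
    _ ≤ 4 * ∫⁻ t in Ioc (0:ℝ) 1, 2 ^ (Module.finrank ℝ E) * (∫⁻ z in B, H z) * volume B := by
        gcongr 4 * ?_
        exact setLIntegral_mono' measurableSet_Ioc hslice
    _ = _ := by rw [setLIntegral_const]; simp

lemma poincare {g : E → ℝ} (hg : ContDiff ℝ 1 g) (hg0 : ∀ x, 0 ≤ g x) {c : ℝ}
    {S : Set E} (hSm : MeasurableSet S) (hSB : S ⊆ ball 0 1)
    (hS : volume (ball (0:E) 1) ≤ 2 * volume S) (hgS : ∀ x ∈ S, g x ≤ c) :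
    ∫⁻ x in ball (0:E) 1, ENNReal.ofReal (g x ^ 2) ≤
      16 * (2 ^ (Module.finrank ℝ E) * (∫⁻ z in ball (0:E) 1, ENNReal.ofReal (‖fderiv ℝ g z‖ ^ 2)))
        + ENNReal.ofReal (2 * c ^ 2) * volume (ball (0:E) 1) := by
  have hd := poincare_double hg
  set B := ball (0:E) 1 with hB
  set D := ∫⁻ z in B, ENNReal.ofReal (‖fderiv ℝ g z‖ ^ 2)
  have hBpos : 0 < volume B := measure_ball_pos _ _ (by norm_num)
  have hBfin : volume B < ⊤ := measure_ball_lt_top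
  have hSfin : volume S ≠ ⊤ := ((measure_mono hSB).trans_lt hBfin).ne
  have hSpos : volume S ≠ 0 := by
    intro h0; rw [h0] at hS; simp at hS; exact hBpos.ne' hS
  have hgc := hg.continuous
  have h1 : (∫⁻ x in B, ENNReal.ofReal (g x ^ 2)) * volume S ≤
      2 * (4 * (2 ^ (Module.finrank ℝ E) * D * volume B)) +
        ENNReal.ofReal (2 * c ^ 2) * volume B * volume S := by
    calc _ = ∫⁻ x in B, ∫⁻ y in S, ENNReal.ofReal (g x ^ 2) := by
          rw [← lintegral_mul_const' _ _ hSfin]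
          simp_rw [setLIntegral_const]
      _ ≤ ∫⁻ x in B, ∫⁻ y in S, (2 * ENNReal.ofReal ((g y - g x) ^ 2) + ENNReal.ofReal (2 * c ^ 2)) := by
          refine lintegral_mono fun x => setLIntegral_mono' hSm fun y hy => ?_
          rw [show (2:ℝ≥0∞) = ENNReal.ofReal 2 by simp, ← ENNReal.ofReal_mul (by norm_num),
            ← ENNReal.ofReal_add (by positivity) (by positivity)]
          apply ENNReal.ofReal_le_ofReal
          have := hgS y hy
          have := hg0 y
          have h3 : g y ^ 2 ≤ c ^ 2 := by gcongr
          nlinarith [sq_nonneg (2 * g y - g x)]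
      _ ≤ ∫⁻ x in B, (2 * (∫⁻ y in B, ENNReal.ofReal ((g y - g x) ^ 2)) +
            ENNReal.ofReal (2 * c ^ 2) * volume S) := by
          refine lintegral_mono fun x => ?_
          rw [lintegral_add_right _ measurable_const, lintegral_const_mul' _ _ (by norm_num),
            setLIntegral_const]
          gcongr
      _ = 2 * (∫⁻ x in B, ∫⁻ y in B, ENNReal.ofReal ((g y - g x) ^ 2)) +
            ENNReal.ofReal (2 * c ^ 2) * volume S * volume B := by
          rw [lintegral_add_right _ measurable_const, lintegral_const_mul' _ _ (by norm_num),
            setLIntegral_const]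
      _ ≤ _ := by
          rw [mul_right_comm]
          gcongr
  have h2 : 2 * (4 * (2 ^ (Module.finrank ℝ E) * D * volume B)) ≤
      16 * (2 ^ (Module.finrank ℝ E) * D) * volume S := by
    calc _ ≤ 2 * (4 * (2 ^ (Module.finrank ℝ E) * D * (2 * volume S))) := by gcongr
      _ = _ := by ring
  have h3 : (∫⁻ x in B, ENNReal.ofReal (g x ^ 2)) * volume S ≤
      (16 * (2 ^ (Module.finrank ℝ E) * D) + ENNReal.ofReal (2 * c ^ 2) * volume B) * volume S := by
    rw [add_mul]
    exact h1.trans (by gcongr)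
  exact (ENNReal.mul_le_mul_iff_left hSpos hSfin).1 h3

end PDE
end PartD

section PartF
open MeasureTheory Set Filter Topology Metric
open scoped ENNReal

section PDE
variable {E : Type*} [NormedAddCommGroup E] [InnerProductSpace ℝ E] [FiniteDimensional ℝ E]
  [MeasurableSpace E] [BorelSpace E]

lemma growth {l L : ℝ} (hl : 0 < l) (hL : 0 ≤ L) (hn : 2 ≤ Module.finrank ℝ E) :
    ∃ c : ℝ, 0 < c ∧ ∀ (v : E → ℝ) (a : E → E), IsSol l L v a → (∀ x, v x ∈ Ioo (0:ℝ) 3) →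
      volume (ball (0:E) 1) ≤ 2 * volume (ball (0:E) 1 ∩ {x | 1 / 2 ≤ v x}) →
      ∀ x ∈ ball (0:E) (1 / 2), c ≤ v x := by
  let η₁ : ContDiffBump (0:E) := ⟨1, 2, by norm_num, by norm_num⟩
  let η₂ : ContDiffBump (0:E) := ⟨1 / 2, 1, by norm_num, by norm_num⟩
  have hη₁ : ContDiff ℝ 1 (η₁ : E → ℝ) := η₁.contDiff
  have hη₂ : ContDiff ℝ 1 (η₂ : E → ℝ) := η₂.contDiff
  set A : ℝ := 4 * L ^ 2 / l ^ 2 * ∫ x, (1:ℝ) ^ 2 * ‖fderiv ℝ (η₁ : E → ℝ) x‖ ^ 2 with hA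
  set c₀ : ℝ := Real.log 4 - Real.log (1 / 2) with hc₀
  set X : ℝ≥0∞ := 16 * (2 ^ (Module.finrank ℝ E) * ENNReal.ofReal A) +
    ENNReal.ofReal (2 * c₀ ^ 2) * volume (ball (0:E) 1) with hX
  have hXtop : X ≠ ⊤ := by
    rw [hX]
    refine ENNReal.add_ne_top.2 ⟨?_, ENNReal.mul_ne_top ENNReal.ofReal_ne_top
      measure_ball_lt_top.ne⟩
    exact ENNReal.mul_ne_top (by norm_num)
      (ENNReal.mul_ne_top (ENNReal.pow_ne_top (by norm_num)) ENNReal.ofReal_ne_top)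
  obtain ⟨C, hC⟩ := moser_sup (E := E) hl hL hn hη₂ η₂.hasCompactSupport
    (fun x => η₂.nonneg) (fun x => η₂.le_one) X.toReal
  refine ⟨Real.exp (Real.log 4 - C), Real.exp_pos _, ?_⟩
  intro v a h hv hvol x hx
  have hwc : ContDiff ℝ 1 (fun x => Real.log 4 - Real.log (v x)) := by
    simpa using wpow_contDiff hv h.smooth 1
  have hDw : ∀ x, ‖fderiv ℝ (fun x => Real.log 4 - Real.log (v x)) x‖ ^ 2 =
      (1 / v x) ^ 2 * ‖fderiv ℝ v x‖ ^ 2 := by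
    intro x
    have := wpow_hasFDerivAt (hv x) (h.smooth.differentiable (by norm_num) x) 1
    simp only [Real.rpow_one, sub_self, Real.rpow_zero, mul_one] at this
    rw [this.fderiv, norm_smul, mul_pow, Real.norm_eq_abs, sq_abs, neg_sq]
  have hen := energy hl hL h (b := 3) hv (P := fun t => -(t⁻¹)) (P' := fun t => (1 / t) ^ 2)
    (Y := fun t => 1 / t) (T := fun _ => 1)
    (fun t ht => by
      refine ((hasDerivAt_inv ht.1.ne').neg).congr_deriv ?_
      field_simp)
    ((continuousOn_const.div continuousOn_id (fun t ht => ht.1.ne')).pow 2)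
    (continuousOn_const.div continuousOn_id (fun t ht => ht.1.ne'))
    continuousOn_const (fun _ _ => zero_le_one)
    (fun t ht => by have := ht.1; positivity) (fun _ _ => le_rfl)
    (fun t ht => by
      have := ht.1
      rw [abs_neg, abs_of_pos (by positivity)]; simp) hη₁ η₁.hasCompactSupport
  rw [← hA] at hen
  have hDv : Continuous (fderiv ℝ v) := h.smooth.continuous_fderiv (by norm_num)
  have hi1 : Integrable (fun x => η₁ x ^ 2 * ((1 / v x) ^ 2 * ‖fderiv ℝ v x‖ ^ 2)) := by
    refine Continuous.integrable_of_hasCompactSupport ?_ ?_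
    · exact (hη₁.continuous.pow 2).mul (((continuous_const.div
        h.smooth.continuous (fun x => (hv x).1.ne')).pow 2).mul (hDv.norm.pow 2))
    · have : HasCompactSupport (fun x => η₁ x ^ 2) :=
        η₁.hasCompactSupport.comp_left (g := fun z : ℝ => z ^ 2) (by simp)
      exact this.mul_right
  have hD : ∫⁻ z in ball (0:E) 1, ENNReal.ofReal
      (‖fderiv ℝ (fun x => Real.log 4 - Real.log (v x)) z‖ ^ 2) ≤ ENNReal.ofReal A := by
    refine le_trans ?_ (ENNReal.ofReal_le_ofReal hen)
    rw [ofReal_integral_eq_lintegral_ofReal hi1 (Eventually.of_forall fun x => by positivity)]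
    calc _ ≤ ∫⁻ z in ball (0:E) 1,
          ENNReal.ofReal (η₁ z ^ 2 * ((1 / v z) ^ 2 * ‖fderiv ℝ v z‖ ^ 2)) := by
          refine setLIntegral_mono' measurableSet_ball fun z hz => ?_
          have : η₁ z = 1 := η₁.one_of_mem_closedBall (ball_subset_closedBall hz)
          rw [hDw, this]; simp
      _ ≤ _ := setLIntegral_le_lintegral _ _
  have hSm : MeasurableSet (ball (0:E) 1 ∩ {x | 1 / 2 ≤ v x}) :=
    measurableSet_ball.inter (isClosed_le continuous_const h.smooth.continuous).measurableSet
  have hP := poincare hwc (fun x => (logw_pos (hv x)).le) (c := c₀) hSm inter_subset_left hvol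
    (fun x hx => by
      have h2 : (1:ℝ) / 2 ≤ v x := hx.2
      have := Real.log_le_log (by norm_num) h2
      rw [hc₀]; linarith)
  have hPX : ∫⁻ x in ball (0:E) 1, ENNReal.ofReal ((Real.log 4 - Real.log (v x)) ^ 2) ≤ X := by
    refine hP.trans ?_
    rw [hX]; gcongr
  have hm : ∫ x, (Real.log 4 - Real.log (v x)) ^ (2:ℝ) * η₂ x ^ (2:ℝ) ≤ X.toReal := by
    have hIntg := moser_int hv h.smooth hη₂ η₂.hasCompactSupport 2 (p := 2) (by norm_num)
    rw [integral_eq_lintegral_of_nonneg_ae (Eventually.of_forall fun x => ?_)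
      hIntg.aestronglyMeasurable]
    · apply ENNReal.toReal_mono hXtop
      refine le_trans ?_ hPX
      rw [← lintegral_indicator measurableSet_ball]
      refine lintegral_mono fun y => ?_
      by_cases hy : y ∈ ball (0:E) 1
      · rw [indicator_of_mem hy]
        apply ENNReal.ofReal_le_ofReal
        have e1 : (0:ℝ) ≤ η₂ y := η₂.nonneg
        have e2 : η₂ y ≤ 1 := η₂.le_one
        norm_cast
        have e3 : η₂ y ^ 2 ≤ 1 := by nlinarith
        nlinarith [sq_nonneg (Real.log 4 - Real.log (v y))]
      · have : η₂ y = 0 := η₂.zero_of_le_dist (by simpa using hy)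
        rw [this]; simp
    · have := logw_pos (hv x)
      have := η₂.nonneg' x
      simp only [Pi.zero_apply]
      positivity
  have := hC v a h hv hm x (η₂.eventuallyEq_one_of_mem_ball hx)
  rw [← Real.exp_log (hv x).1]
  apply Real.exp_le_exp.2
  linarith

lemma IsSol.affine {l L : ℝ} {v : E → ℝ} {a : E → E} (h : IsSol l L v a) (r d : ℝ) :
    IsSol l L (fun x => r * v x + d) (fun x => r • a x) := by
  have hD : ∀ x, fderiv ℝ (fun x => r * v x + d) x = r • fderiv ℝ v x := by
    intro x
    exact (((h.smooth.differentiable (by norm_num) x).hasFDerivAt.const_mul r).add_const d).fderiv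
  refine ⟨(contDiff_const.mul h.smooth).add contDiff_const, h.cont.const_smul r, ?_, ?_, ?_⟩
  · intro x
    rw [hD, norm_smul, mul_pow, Real.norm_eq_abs, sq_abs]
    simp only [ContinuousLinearMap.smul_apply, map_smul, smul_eq_mul]
    have := mul_le_mul_of_nonneg_left (h.ell x) (sq_nonneg r)
    linarith
  · intro x
    rw [hD, norm_smul, norm_smul]
    have := mul_le_mul_of_nonneg_left (h.bdd x) (norm_nonneg r)
    linarith
  · intro φ h1 h2
    simp only [map_smul, smul_eq_mul]
    rw [integral_const_mul, h.weak φ h1 h2, mul_zero]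

lemma IsSol.scale {l L : ℝ} {v : E → ℝ} {a : E → E} (h : IsSol l L v a) {r : ℝ} (hr : r ≠ 0) :
    IsSol l L (fun x => v (r • x)) (fun x => r • a (r • x)) := by
  have hD : ∀ (f : E → ℝ), ContDiff ℝ 1 f → ∀ x, fderiv ℝ (fun x => f (r • x)) x =
      r • fderiv ℝ f (r • x) := by
    intro f hf x
    have e1 : HasFDerivAt (fun x : E => r • x) (r • ContinuousLinearMap.id ℝ E) x :=
      (hasFDerivAt_id x).const_smul r
    have e2 := ((hf.differentiable (by norm_num) (r • x)).hasFDerivAt).comp x e1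
    have e3 : fderiv ℝ (fun x => f (r • x)) x = _ := e2.fderiv
    rw [e3]
    ext y; simp
  have hs : ContDiff ℝ 1 (fun x : E => r • x) := contDiff_const_smul r
  refine ⟨h.smooth.comp hs, (h.cont.comp hs.continuous).const_smul r, ?_, ?_, ?_⟩
  · intro x
    rw [hD v h.smooth, norm_smul, mul_pow, Real.norm_eq_abs, sq_abs]
    simp only [ContinuousLinearMap.smul_apply, map_smul, smul_eq_mul]
    have := mul_le_mul_of_nonneg_left (h.ell (r • x)) (sq_nonneg r)
    linarith
  · intro x
    rw [hD v h.smooth, norm_smul, norm_smul]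
    have := mul_le_mul_of_nonneg_left (h.bdd (r • x)) (norm_nonneg r)
    linarith
  · intro φ h1 h2
    have hs' : ContDiff ℝ 1 (fun x : E => r⁻¹ • x) := contDiff_const_smul r⁻¹
    set ψ : E → ℝ := fun x => φ (r⁻¹ • x) with hψ
    have hψ1 : ContDiff ℝ 1 ψ := h1.comp hs'
    have hψ2 : HasCompactSupport ψ := h2.comp_smul (inv_ne_zero hr)
    have hφψ : φ = fun x => ψ (r • x) := by
      ext x; simp [hψ, smul_smul, inv_mul_cancel₀ hr]
    have : ∀ x, fderiv ℝ φ x (r • a (r • x)) =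
        (fun z => r ^ 2 * fderiv ℝ ψ z (a z)) (r • x) := by
      intro x
      rw [hφψ, hD ψ hψ1]
      simp only [ContinuousLinearMap.smul_apply, map_smul, smul_eq_mul]
      ring
    simp_rw [this]
    rw [Measure.integral_comp_smul volume (fun z => r ^ 2 * fderiv ℝ ψ z (a z)) r,
      integral_const_mul, h.weak ψ hψ1 hψ2]
    simp

theorem liouville {l L : ℝ} (hl : 0 < l) (hL : 0 ≤ L) (hn : 2 ≤ Module.finrank ℝ E)
    {v : E → ℝ} {a : E → E} (h : IsSol l L v a) {M : ℝ} (hM : ∀ x, |v x| ≤ M) (x y : E) :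
    v x = v y := by
  obtain ⟨c, hc, hgrow⟩ := growth (E := E) hl hL hn
  -- alternative for normalized solutions
  have key : ∀ (v : E → ℝ) (a : E → E), IsSol l L v a → (∀ x, v x ∈ Icc (0:ℝ) 1) →
      ∀ r : ℝ, 0 < r →
      volume (ball (0:E) 1) ≤ 2 * volume (ball (0:E) 1 ∩ {x | 1 / 2 ≤ v (r • x)}) →
      ∀ x ∈ ball (0:E) (r / 2), c ≤ v x := by
    intro v a h hv r hr hvol x hx
    apply le_of_forall_pos_le_add
    intro ε hε
    set δ := min ε 1 with hδ
    have hδ0 : 0 < δ := by positivity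
    have h1 := (h.scale hr.ne').affine 1 δ
    have h2 := hgrow _ _ h1 (fun x => by
      have := hv (r • x)
      have hδ1 : δ ≤ 1 := min_le_right _ _
      constructor
      · linarith [this.1]
      · linarith [this.2]) (by
        refine hvol.trans ?_
        gcongr
        linarith) (r⁻¹ • x) (by
          rw [mem_ball_zero_iff] at hx ⊢
          rw [norm_smul, norm_inv, Real.norm_of_nonneg hr.le, inv_mul_lt_iff₀ hr]
          linarith)
    rw [smul_smul, mul_inv_cancel₀ hr.ne', one_smul, one_mul] at h2
    exact h2.trans (by gcongr; exact min_le_left _ _)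
  by_contra hne
  have hbA : BddAbove (range v) := ⟨M, by rintro _ ⟨z, rfl⟩; exact (abs_le.1 (hM z)).2⟩
  have hbB : BddBelow (range v) := ⟨-M, by rintro _ ⟨z, rfl⟩; exact (abs_le.1 (hM z)).1⟩
  set s := sSup (range v)
  set i := sInf (range v)
  have hsv : ∀ z, v z ≤ s := fun z => le_csSup hbA ⟨z, rfl⟩
  have hiv : ∀ z, i ≤ v z := fun z => csInf_le hbB ⟨z, rfl⟩
  have his : 0 < s - i := by
    rcases lt_or_gt_of_ne hne with h1 | h1
    · linarith [hsv y, hiv x]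
    · linarith [hsv x, hiv y]
  set v₁ : E → ℝ := fun z => (s - i)⁻¹ * v z + (-(s - i)⁻¹ * i) with hv₁
  set v₂ : E → ℝ := fun z => (-(s - i)⁻¹) * v z + ((s - i)⁻¹ * s) with hv₂
  have hs1 : IsSol l L v₁ _ := h.affine _ _
  have hs2 : IsSol l L v₂ _ := h.affine _ _
  have hsum : ∀ z, v₁ z + v₂ z = 1 := by
    intro z; simp only [hv₁, hv₂]; field_simp; ring
  have hv₁0 : ∀ z, 0 ≤ v₁ z := by
    intro z
    have : v₁ z = (s - i)⁻¹ * (v z - i) := by simp only [hv₁]; ring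
    rw [this]; have := hiv z
    exact mul_nonneg (by positivity) (by linarith)
  have hv₂0 : ∀ z, 0 ≤ v₂ z := by
    intro z
    have : v₂ z = (s - i)⁻¹ * (s - v z) := by simp only [hv₂]; ring
    rw [this]; have := hsv z
    exact mul_nonneg (by positivity) (by linarith)
  have hv₁I : ∀ z, v₁ z ∈ Icc (0:ℝ) 1 := fun z => ⟨hv₁0 z, by linarith [hsum z, hv₂0 z]⟩
  have hv₂I : ∀ z, v₂ z ∈ Icc (0:ℝ) 1 := fun z => ⟨hv₂0 z, by linarith [hsum z, hv₁0 z]⟩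
  have halt : ∀ r : ℝ, 0 < r → (∀ x ∈ ball (0:E) (r / 2), c ≤ v₁ x) ∨
      (∀ x ∈ ball (0:E) (r / 2), c ≤ v₂ x) := by
    intro r hr
    by_cases hA : volume (ball (0:E) 1) ≤ 2 * volume (ball (0:E) 1 ∩ {x | 1 / 2 ≤ v₁ (r • x)})
    · exact Or.inl (key v₁ _ hs1 hv₁I r hr hA)
    · refine Or.inr (key v₂ _ hs2 hv₂I r hr ?_)
      by_contra hB
      push Not at hA hB
      have hcov : ball (0:E) 1 ⊆ (ball (0:E) 1 ∩ {x | 1 / 2 ≤ v₁ (r • x)}) ∪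
          (ball (0:E) 1 ∩ {x | 1 / 2 ≤ v₂ (r • x)}) := by
        intro z hz
        by_cases h1 : 1 / 2 ≤ v₁ (r • z)
        · exact Or.inl ⟨hz, h1⟩
        · refine Or.inr ⟨hz, ?_⟩
          simp only [mem_setOf_eq]
          push Not at h1
          linarith [hsum (r • z)]
      have h1 := (measure_mono (μ := volume) hcov).trans (measure_union_le _ _)
      have h2 := ENNReal.add_lt_add hA hB
      rw [← mul_add, ← two_mul] at h2
      have h3 : 2 * volume (ball (0:E) 1) ≤ 2 * (volume (ball (0:E) 1 ∩ {x | 1 / 2 ≤ v₁ (r • x)}) +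
        volume (ball (0:E) 1 ∩ {x | 1 / 2 ≤ v₂ (r • x)})) := by gcongr
      exact absurd h2 (not_lt.2 h3)
  have hall : (∀ x, c ≤ v₁ x) ∨ (∀ x, c ≤ v₂ x) := by
    by_contra hcon
    push Not at hcon
    obtain ⟨⟨x₁, hx₁⟩, ⟨x₂, hx₂⟩⟩ := hcon
    have hp : 0 < 2 * (‖x₁‖ + ‖x₂‖ + 1) := by positivity
    rcases halt _ hp with h1 | h1
    · have := h1 x₁ (by rw [mem_ball_zero_iff]; linarith [norm_nonneg x₂])
      linarith
    · have := h1 x₂ (by rw [mem_ball_zero_iff]; linarith [norm_nonneg x₁])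
      linarith
  rcases hall with h1 | h1
  · have : i + c * (s - i) ≤ i := by
      apply le_csInf (⟨v x, mem_range_self x⟩ : (range v).Nonempty)
      rintro _ ⟨z, rfl⟩
      have := h1 z
      have e : v₁ z = (v z - i) / (s - i) := by simp only [hv₁]; field_simp; ring
      rw [e, le_div_iff₀ his] at this
      linarith
    have := mul_pos hc his
    linarith
  · have : s ≤ s - c * (s - i) := by
      apply csSup_le (⟨v x, mem_range_self x⟩ : (range v).Nonempty)
      rintro _ ⟨z, rfl⟩
      have := h1 z
      have e : v₂ z = (s - v z) / (s - i) := by simp only [hv₂]; field_simp; ring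
      rw [e, le_div_iff₀ his] at this
      linarith
    have := mul_pos hc his
    linarith

end PDE
end PartF

section Final
open MeasureTheory Set Filter Topology Metric

section Alg
variable {E : Type*} [NormedAddCommGroup E] [InnerProductSpace ℝ E]

noncomputable def Fl (p : E) : E := (√(1 - ‖p‖ ^ 2))⁻¹ • p

lemma Fl_mono {p q : E} (hp : ‖p‖ < 1) (hq : ‖q‖ < 1) :
    1 * ‖p - q‖ ^ 2 ≤ ⟪p - q, Fl p - Fl q⟫ := by
  have hp0 := norm_nonneg p
  have hq0 := norm_nonneg q
  have key : ∀ {r : E}, ‖r‖ < 1 → 0 < 1 - ‖r‖^2 := by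
    intro r hr; nlinarith [norm_nonneg r]
  have one : ∀ {r : E}, ‖r‖ < 1 → 1 ≤ (√(1 - ‖r‖ ^ 2))⁻¹ := by
    intro r hr
    rw [one_le_inv₀ (Real.sqrt_pos.2 (key hr))]
    rw [Real.sqrt_le_left zero_le_one]
    nlinarith [norm_nonneg r]
  have mono : ∀ {r t : E}, ‖r‖ < 1 → ‖t‖ < 1 → ‖r‖ ≤ ‖t‖ →
      (√(1 - ‖r‖ ^ 2))⁻¹ ≤ (√(1 - ‖t‖ ^ 2))⁻¹ := by
    intro r t hr ht hrt
    apply inv_anti₀ (Real.sqrt_pos.2 (key ht))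
    apply Real.sqrt_le_sqrt
    have := norm_nonneg r
    gcongr
  have ha := one hp
  have hb := one hq
  have hprod : 0 ≤ ((√(1 - ‖p‖ ^ 2))⁻¹ - (√(1 - ‖q‖ ^ 2))⁻¹) * (‖p‖^2 - ‖q‖^2) := by
    rcases le_total ‖p‖ ‖q‖ with h | h
    · have h1 := mono hp hq h
      have h2 : ‖p‖^2 ≤ ‖q‖^2 := by gcongr
      nlinarith
    · have h1 := mono hq hp h
      have h2 : ‖q‖^2 ≤ ‖p‖^2 := by gcongr
      nlinarith
  unfold Fl
  set α := (√(1 - ‖p‖ ^ 2))⁻¹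
  set β := (√(1 - ‖q‖ ^ 2))⁻¹
  have e1 : ⟪p - q, α • p - β • q⟫ = α * ‖p‖^2 + β * ‖q‖^2 - (α + β) * ⟪p, q⟫ := by
    simp only [inner_sub_left, inner_sub_right, real_inner_smul_right, real_inner_self_eq_norm_sq,
      real_inner_comm p q]
    ring
  have e2 := norm_sub_sq_real p q
  have e3 : 0 ≤ (α + β - 2) * ‖p - q‖^2 := mul_nonneg (by linarith) (by positivity)
  rw [e1]
  rw [e2] at e3 ⊢
  nlinarith

lemma Fl_lip {p q : E} {K : ℝ} (hK : 0 < K) (hp : K⁻¹ ≤ √(1 - ‖p‖ ^ 2))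
    (hq : K⁻¹ ≤ √(1 - ‖q‖ ^ 2)) (hp1 : ‖p‖ ≤ 1) (hq1 : ‖q‖ ≤ 1) :
    ‖Fl p - Fl q‖ ≤ (K + K ^ 3) * ‖p - q‖ := by
  unfold Fl
  have hKi : 0 < K⁻¹ := by positivity
  have hsp : √(1 - ‖p‖ ^ 2) ^ 2 = 1 - ‖p‖^2 := Real.sq_sqrt (by nlinarith [norm_nonneg p])
  have hsq : √(1 - ‖q‖ ^ 2) ^ 2 = 1 - ‖q‖^2 := Real.sq_sqrt (by nlinarith [norm_nonneg q])
  set s := √(1 - ‖p‖ ^ 2)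
  set t := √(1 - ‖q‖ ^ 2)
  have hs0 : 0 < s := by linarith
  have ht0 : 0 < t := by linarith
  have hsi : s⁻¹ ≤ K := inv_le_of_inv_le₀ hK hp
  have hti : t⁻¹ ≤ K := inv_le_of_inv_le₀ hK hq
  have e : s⁻¹ • p - t⁻¹ • q = s⁻¹ • (p - q) + (s⁻¹ - t⁻¹) • q := by
    rw [smul_sub, sub_smul]; abel
  have hpq : |‖p‖ - ‖q‖| ≤ ‖p - q‖ := abs_norm_sub_norm_le p q
  have hts : |t - s| ≤ K * ‖p - q‖ := by
    have h1 : (t - s) * (t + s) = (‖p‖ - ‖q‖) * (‖p‖ + ‖q‖) := by ring_nf; linarith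
    have h2 : |t - s| * (t + s) = |‖p‖ - ‖q‖| * (‖p‖ + ‖q‖) := by
      rw [← abs_of_pos (show 0 < t + s by linarith), ← abs_mul, h1, abs_mul,
        abs_of_nonneg (show 0 ≤ ‖p‖ + ‖q‖ by positivity)]
    have h3 : |t - s| * (2 * K⁻¹) ≤ ‖p - q‖ * 2 := by
      calc |t - s| * (2 * K⁻¹) ≤ |t - s| * (t + s) := by gcongr; linarith
        _ = _ := h2
        _ ≤ _ := by gcongr; linarith
    have h4 : |t - s| * K⁻¹ ≤ ‖p - q‖ := by linarith
    rw [← div_eq_mul_inv, div_le_iff₀ hK] at h4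
    linarith
  have hinv : |s⁻¹ - t⁻¹| ≤ K ^ 3 * ‖p - q‖ := by
    have : s⁻¹ - t⁻¹ = (t - s) * (s⁻¹ * t⁻¹) := by field_simp
    rw [this, abs_mul, abs_of_pos (show 0 < s⁻¹ * t⁻¹ by positivity)]
    calc _ ≤ (K * ‖p - q‖) * (K * K) := by gcongr
      _ = _ := by ring
  rw [e]
  calc _ ≤ ‖s⁻¹ • (p - q)‖ + ‖(s⁻¹ - t⁻¹) • q‖ := norm_add_le _ _
    _ = s⁻¹ * ‖p - q‖ + |s⁻¹ - t⁻¹| * ‖q‖ := by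
      rw [norm_smul, norm_smul, Real.norm_of_nonneg (by positivity), Real.norm_eq_abs]
    _ ≤ K * ‖p - q‖ + (K ^ 3 * ‖p - q‖) * 1 := by gcongr
    _ = _ := by ring
end Alg

variable {n : ℕ}


lemma grad_coord {u : EuclideanSpace ℝ (Fin n) → ℝ} (x : EuclideanSpace ℝ (Fin n)) (j : Fin n) :
    gradient u x j = pd u x j := by
  have : ⟪gradient u x, EuclideanSpace.single j (1:ℝ)⟫ = fderiv ℝ u x (EuclideanSpace.single j 1) :=
    inner_gradient_left
  rw [pd, ← this, EuclideanSpace.inner_single_right]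
  simp

lemma grad_norm {u : EuclideanSpace ℝ (Fin n) → ℝ} (x : EuclideanSpace ℝ (Fin n)) : ‖gradient u x‖ ^ 2 = ∑ j, pd u x j ^ 2 := by
  rw [EuclideanSpace.norm_sq_eq]
  simp [grad_coord]

lemma pd_contDiff {u : EuclideanSpace ℝ (Fin n) → ℝ} (hu : ContDiff ℝ 2 u) (j : Fin n) :
    ContDiff ℝ 1 (fun x => pd u x j) := by
  unfold pd
  exact (hu.fderiv_right (m := 1) (by norm_num)).clm_apply contDiff_const

lemma flux_coord {u : EuclideanSpace ℝ (Fin n) → ℝ} (x : EuclideanSpace ℝ (Fin n)) (j : Fin n) :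
    Fl (gradient u x) j = (√(1 - ∑ k, pd u x k ^ 2))⁻¹ * pd u x j := by
  simp [Fl, grad_norm, grad_coord]

lemma W_pos {u : EuclideanSpace ℝ (Fin n) → ℝ} (hg : ∀ x, ‖gradient u x‖ < 1) (x : EuclideanSpace ℝ (Fin n)) :
    0 < 1 - ∑ k, pd u x k ^ 2 := by
  rw [← grad_norm]
  nlinarith [hg x, norm_nonneg (gradient u x)]

lemma flux_contDiff {u : EuclideanSpace ℝ (Fin n) → ℝ} (hu : ContDiff ℝ 2 u) (hg : ∀ x, ‖gradient u x‖ < 1)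
    (j : Fin n) : ContDiff ℝ 1 (fun x => Fl (gradient u x) j) := by
  simp_rw [flux_coord]
  apply ContDiff.mul _ (pd_contDiff hu j)
  apply ContDiff.inv
  · apply ContDiff.sqrt
    · exact contDiff_const.sub (ContDiff.sum fun k _ => (pd_contDiff hu k).pow 2)
    · intro x; exact (W_pos hg x).ne'
  · intro x; exact (Real.sqrt_pos.2 (W_pos hg x)).ne'

lemma flux_div {u : EuclideanSpace ℝ (Fin n) → ℝ} (hu : ContDiff ℝ 2 u) (hg : ∀ x, ‖gradient u x‖ < 1)
    (hmax : ∀ x : EuclideanSpace ℝ (Fin n), (1 - ∑ j, pd u x j ^ 2) * (∑ j, pd2 u x j j)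
        + ∑ j, ∑ k, pd u x j * pd u x k * pd2 u x j k = 0) (x : EuclideanSpace ℝ (Fin n)) :
    ∑ j, fderiv ℝ (fun x => Fl (gradient u x) j) x (EuclideanSpace.single j 1) = 0 := by
  have hpd : ∀ k, HasFDerivAt (fun x => pd u x k) (fderiv ℝ (fun x => pd u x k) x) x := fun k =>
    ((pd_contDiff hu k).differentiable (by norm_num) x).hasFDerivAt
  have hW : HasFDerivAt (fun x => 1 - ∑ k, pd u x k ^ 2)
      (-∑ k, (2 * pd u x k) • fderiv ℝ (fun x => pd u x k) x) x := by
    apply HasFDerivAt.const_sub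
    apply HasFDerivAt.fun_sum
    intro k _
    simpa using (hpd k).pow 2
  have hWp := W_pos hg x
  have hpd2 : ∀ j k, fderiv ℝ (fun x => pd u x j) x (EuclideanSpace.single k 1) = pd2 u x j k :=
    fun j k => rfl
  have hterm : ∀ j, fderiv ℝ (fun x => Fl (gradient u x) j) x (EuclideanSpace.single j 1) =
      (√(1 - ∑ k, pd u x k ^ 2))⁻¹ * pd2 u x j j +
      (√(1 - ∑ k, pd u x k ^ 2) ^ 3)⁻¹ * ∑ k, pd u x k * pd u x j * pd2 u x k j := by
    intro j
    simp_rw [flux_coord]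
    have h0 : HasFDerivAt (fun x => (√(1 - ∑ k, pd u x k ^ 2))⁻¹) _ x :=
      (hasDerivAt_inv (Real.sqrt_pos.2 hWp).ne').comp_hasFDerivAt x (hW.sqrt hWp.ne')
    have h1 := h0.fun_mul (hpd j)
    rw [h1.fderiv]
    have hs := Real.sqrt_pos.2 hWp
    simp only [ContinuousLinearMap.add_apply, ContinuousLinearMap.smul_apply, smul_eq_mul,
      ContinuousLinearMap.neg_apply, ContinuousLinearMap.sum_apply, hpd2]
    have e : ∑ k, pd u x k * pd u x j * pd2 u x k j = pd u x j * ∑ k, pd u x k * pd2 u x k j := by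
      rw [Finset.mul_sum]; exact Finset.sum_congr rfl fun _ _ => by ring
    have e' : ∑ k, 2 * pd u x k * pd2 u x k j = 2 * ∑ k, pd u x k * pd2 u x k j := by
      rw [Finset.mul_sum]; exact Finset.sum_congr rfl fun _ _ => by ring
    rw [e, e']
    field_simp
    try ring
  simp_rw [hterm]
  rw [Finset.sum_add_distrib, ← Finset.mul_sum, ← Finset.mul_sum, Finset.sum_comm]
  have h := hmax x
  have hs := Real.sqrt_pos.2 hWp
  have hsq := Real.sq_sqrt hWp.le
  rw [← hsq] at h
  set s := √(1 - ∑ k, pd u x k ^ 2)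
  have : s⁻¹ * ∑ j, pd2 u x j j + (s^3)⁻¹ * ∑ j, ∑ k, pd u x j * pd u x k * pd2 u x j k
     = (s^3)⁻¹ * (s ^ 2 * ∑ j, pd2 u x j j + ∑ j, ∑ k, pd u x j * pd u x k * pd2 u x j k) := by
    field_simp
  rw [this, h, mul_zero]

lemma flux_weak {u : EuclideanSpace ℝ (Fin n) → ℝ} (hu : ContDiff ℝ 2 u) (hg : ∀ x, ‖gradient u x‖ < 1)
    (hmax : ∀ x : EuclideanSpace ℝ (Fin n), (1 - ∑ j, pd u x j ^ 2) * (∑ j, pd2 u x j j)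
        + ∑ j, ∑ k, pd u x j * pd u x k * pd2 u x j k = 0)
    {φ : EuclideanSpace ℝ (Fin n) → ℝ} (hφ : ContDiff ℝ 1 φ) (hc : HasCompactSupport φ) :
    Integrable (fun x => fderiv ℝ φ x (Fl (gradient u x))) ∧
    ∫ x, fderiv ℝ φ x (Fl (gradient u x)) = 0 := by
  have hF := fun j => flux_contDiff hu hg j
  have hφd : Continuous (fderiv ℝ φ) := hφ.continuous_fderiv (by norm_num)
  have hφc : HasCompactSupport (fderiv ℝ φ) := hc.fderiv (𝕜 := ℝ)
  have hφdj : ∀ j : Fin n, Continuous fun x => fderiv ℝ φ x (EuclideanSpace.single j 1) :=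
    fun j => hφd.clm_apply continuous_const
  have hφcj : ∀ j : Fin n, HasCompactSupport fun x => fderiv ℝ φ x (EuclideanSpace.single j 1) :=
    fun j => hc.fderiv_apply (𝕜 := ℝ) _
  have hFd : ∀ j : Fin n, Continuous fun x =>
      fderiv ℝ (fun x => Fl (gradient u x) j) x (EuclideanSpace.single j 1) :=
    fun j => ((hF j).continuous_fderiv (by norm_num)).clm_apply continuous_const
  have i1 : ∀ j : Fin n, Integrable fun x =>
      fderiv ℝ φ x (EuclideanSpace.single j 1) * Fl (gradient u x) j := fun j =>
    ((hφdj j).mul (hF j).continuous).integrable_of_hasCompactSupport (hφcj j).mul_right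
  have i2 : ∀ j : Fin n, Integrable fun x => φ x *
      fderiv ℝ (fun x => Fl (gradient u x) j) x (EuclideanSpace.single j 1) := fun j =>
    (hφ.continuous.mul (hFd j)).integrable_of_hasCompactSupport hc.mul_right
  have i3 : ∀ j : Fin n, Integrable fun x => φ x * Fl (gradient u x) j := fun j =>
    (hφ.continuous.mul (hF j).continuous).integrable_of_hasCompactSupport hc.mul_right
  have hexp : ∀ x, fderiv ℝ φ x (Fl (gradient u x)) =
      ∑ j, fderiv ℝ φ x (EuclideanSpace.single j 1) * Fl (gradient u x) j := by
    intro x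
    have : Fl (gradient u x) = ∑ j, Fl (gradient u x) j • EuclideanSpace.single j (1:ℝ) := by
      ext k
      simp [Pi.single_apply]
    conv_lhs => rw [this]
    rw [map_sum]
    simp [mul_comm]
  simp_rw [hexp]
  refine ⟨integrable_finset_sum _ fun j _ => i1 j, ?_⟩
  rw [integral_finset_sum _ fun j _ => i1 j]
  have hj : ∀ j : Fin n, ∫ x, fderiv ℝ φ x (EuclideanSpace.single j 1) * Fl (gradient u x) j =
      - ∫ x, φ x * fderiv ℝ (fun x => Fl (gradient u x) j) x (EuclideanSpace.single j 1) := by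
    intro j
    rw [integral_mul_fderiv_eq_neg_fderiv_mul_of_integrable (i1 j) (i2 j) (i3 j)
      (fun x _ => hφ.differentiable (by norm_num) x)
      (fun x _ => (hF j).differentiable (by norm_num) x), neg_neg]
  simp_rw [hj]
  rw [Finset.sum_neg_distrib, ← integral_finset_sum _ fun j _ => i2 j]
  simp_rw [← Finset.mul_sum, flux_div hu hg hmax]
  simp

lemma flux_isSol {u : EuclideanSpace ℝ (Fin n) → ℝ} (hu : ContDiff ℝ 2 u) (hg : ∀ x, ‖gradient u x‖ < 1)
    {M : ℝ} (hM1 : M < 1) (hM : ∀ x, ‖gradient u x‖ ≤ M)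
    (hmax : ∀ x : EuclideanSpace ℝ (Fin n), (1 - ∑ j, pd u x j ^ 2) * (∑ j, pd2 u x j j)
        + ∑ j, ∑ k, pd u x j * pd u x k * pd2 u x j k = 0) :
    ∃ L : ℝ, 0 ≤ L ∧ ∀ h : EuclideanSpace ℝ (Fin n), IsSol 1 L (fun x => u (x + h) - u x)
      (fun x => Fl (gradient u (x + h)) - Fl (gradient u x)) := by
  have hM0 : 0 ≤ M := (norm_nonneg _).trans (hM 0)
  have hMp : 0 < √(1 - M ^ 2) := Real.sqrt_pos.2 (by nlinarith)
  set K := (√(1 - M ^ 2))⁻¹ with hK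
  have hK0 : 0 < K := by positivity
  refine ⟨K + K ^ 3, by positivity, fun h => ?_⟩
  have hud : Differentiable ℝ u := hu.differentiable (by norm_num)
  have hfd : ∀ x w, fderiv ℝ u x w = ⟪gradient u x, w⟫ := fun x w => inner_gradient_left.symm
  have hv : ∀ x, fderiv ℝ (fun x => u (x + h) - u x) x = fderiv ℝ u (x + h) - fderiv ℝ u x := by
    intro x
    have hu1 : Differentiable ℝ (fun x => u (x + h)) := hud.comp (by fun_prop)
    rw [fderiv_fun_sub (hu1 x) (hud x), fderiv_comp_add_right]
  have hvn : ∀ x, fderiv ℝ (fun x => u (x + h) - u x) x =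
      innerSL ℝ (gradient u (x + h) - gradient u x) := by
    intro x
    rw [hv]
    ext w
    rw [innerSL_apply_apply, inner_sub_left, ContinuousLinearMap.sub_apply, hfd, hfd]
  have hFc : Continuous fun x => Fl (gradient u x) := by
    have : (fun x => Fl (gradient u x)) = fun x => WithLp.toLp 2 (fun j => Fl (gradient u x) j) := by
      ext x j; rfl
    rw [this]
    exact (PiLp.continuous_toLp 2 _).comp
      (continuous_pi fun j => (flux_contDiff hu hg j).continuous)
  have hKs : ∀ x, K⁻¹ ≤ √(1 - ‖gradient u x‖ ^ 2) := by
    intro x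
    rw [hK, inv_inv]
    apply Real.sqrt_le_sqrt
    have := hM x
    gcongr
  refine ⟨?_, ?_, ?_, ?_, ?_⟩
  · have hu1 : ContDiff ℝ 1 u := hu.of_le (by norm_num)
    exact (hu1.comp (contDiff_id.add contDiff_const)).sub hu1
  · exact (hFc.comp (by fun_prop)).sub hFc
  · intro x
    rw [hvn, innerSL_apply_norm, innerSL_apply_apply]
    exact Fl_mono (hg _) (hg _)
  · intro x
    rw [hvn, innerSL_apply_norm]
    exact Fl_lip hK0 (hKs _) (hKs _) (hg _).le (hg _).le
  · intro φ hφ hc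
    have h1 := flux_weak hu hg hmax hφ hc
    have hφ' : ContDiff ℝ 1 (fun x => φ (x - h)) := hφ.comp (contDiff_id.sub contDiff_const)
    have hc' : HasCompactSupport (fun x => φ (x - h)) :=
      hc.comp_homeomorph (Homeomorph.subRight h)
    have h2 := flux_weak hu hg hmax hφ' hc'
    have e : ∀ x, fderiv ℝ (fun x => φ (x - h)) x = fderiv ℝ φ (x - h) := fun x =>
      by
      simp_rw [sub_eq_add_neg]
      exact fderiv_comp_add_right (-h)
    simp_rw [e] at h2
    have h3 := h2.1.comp_add_right h
    have h4 := integral_add_right_eq_self (μ := (volume : Measure (EuclideanSpace ℝ (Fin n))))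
      (fun x => fderiv ℝ φ (x - h) (Fl (gradient u x))) h
    simp only [add_sub_cancel_right] at h3 h4
    simp only [map_sub]
    rw [integral_sub h3 h1.1, h4, h2.2, h1.2, sub_zero]

lemma affine_of_const {u : EuclideanSpace ℝ (Fin n) → ℝ} (hu : ContDiff ℝ 2 u)
    (hc : ∀ x, gradient u x = gradient u 0) (x : EuclideanSpace ℝ (Fin n)) : u x = ⟪gradient u 0, x⟫ + u 0 := by
  have hud : Differentiable ℝ u := hu.differentiable (by norm_num)
  have hd : ∀ x, HasFDerivAt (fun x => u x - ⟪gradient u 0, x⟫) (0 : EuclideanSpace ℝ (Fin n) →L[ℝ] ℝ) x := by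
    intro x
    have h1 := (hud x).hasFDerivAt.sub ((innerSL ℝ (gradient u 0)).hasFDerivAt (x := x))
    have h2 : fderiv ℝ u x - innerSL ℝ (gradient u 0) = 0 := by
      ext w
      have : fderiv ℝ u x w = ⟪gradient u x, w⟫ := inner_gradient_left.symm
      rw [ContinuousLinearMap.sub_apply, innerSL_apply_apply, this, hc x, sub_self]
      rfl
    rw [h2] at h1
    exact h1
  have := is_const_of_fderiv_eq_zero (𝕜 := ℝ) (fun x => (hd x).differentiableAt)
    (fun x => (hd x).fderiv) x 0
  simp only [inner_zero_right, sub_zero] at this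
  linarith

lemma grad_const {u : EuclideanSpace ℝ (Fin n) → ℝ} (hu : ContDiff ℝ 2 u) (hg : ∀ x, ‖gradient u x‖ < 1)
    {M : ℝ} (hM1 : M < 1) (hM : ∀ x, ‖gradient u x‖ ≤ M)
    (hmax : ∀ x : EuclideanSpace ℝ (Fin n), (1 - ∑ j, pd u x j ^ 2) * (∑ j, pd2 u x j j)
        + ∑ j, ∑ k, pd u x j * pd u x k * pd2 u x j k = 0) (x : EuclideanSpace ℝ (Fin n)) :
    gradient u x = gradient u 0 := by
  have hud : Differentiable ℝ u := hu.differentiable (by norm_num)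
  rcases Nat.lt_or_ge n 2 with hn | hn
  · have hz : ∀ y : EuclideanSpace ℝ (Fin n), ∀ j k : Fin n, pd2 u y j k = 0 := by
      intro y j k
      have hn1 : n = 1 := by have := j.pos; omega
      subst hn1
      have := hmax y
      simp at this
      rw [Subsingleton.elim j 0, Subsingleton.elim k 0]
      nlinarith
    ext j
    rw [grad_coord, grad_coord]
    refine is_const_of_fderiv_eq_zero (𝕜 := ℝ) (f := fun x => pd u x j)
      ((pd_contDiff hu j).differentiable (by norm_num)) (fun y => ?_) x 0
    apply ContinuousLinearMap.coe_injective
    refine (EuclideanSpace.basisFun (Fin n) ℝ).toBasis.ext fun k => ?_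
    have := hz y j k
    simpa [pd2, pd] using this
  · obtain ⟨L, hL, hsol⟩ := flux_isSol hu hg hM1 hM hmax
    have hnorm : ∀ x, ‖fderiv ℝ u x‖ ≤ 1 := by
      intro x
      have : fderiv ℝ u x = innerSL ℝ (gradient u x) := by
        ext w; simpa using inner_gradient_left.symm
      rw [this, innerSL_apply_norm]
      exact (hg x).le
    have hconst : ∀ h y : EuclideanSpace ℝ (Fin n), u (y + h) - u y = u (0 + h) - u 0 := by
      intro h y
      refine liouville one_pos hL (by simpa using hn) (hsol h) (M := 1 * ‖h‖) ?_ y 0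
      intro z
      have := (convex_univ (𝕜 := ℝ) (E := EuclideanSpace ℝ (Fin n))).norm_image_sub_le_of_norm_fderiv_le (𝕜 := ℝ) (f := u)
        (fun y _ => hud y) (fun y _ => hnorm y) (mem_univ z) (mem_univ (z + h))
      simpa using this
    have hf : (fun y => u (y + x)) = fun y => u y + (u (0 + x) - u 0) := by
      ext y; have := hconst x y; linarith
    have h1 : fderiv ℝ (fun y => u (y + x)) 0 = fderiv ℝ u 0 := by
      rw [hf, fderiv_add_const]
    rw [fderiv_comp_add_right, zero_add] at h1
    unfold gradient
    rw [h1]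

end Final

/-- **Calabi (n ≤ 4), Cheng–Yau (all n)**: an entire `C²` solution of the maximal surface
equation `div(Du/√(1−|Du|²)) = 0` (equivalently
`(1−|Du|²)·Δu + Σ_{j,k} u_{x_j} u_{x_k} u_{x_j x_k} = 0`) with `|Du| < 1` pointwise and
`sup |Du| < 1` is affine linear, with `|a| < 1` for the linear part `a`. -/
theorem bernstein_maximal_surface (n : ℕ)
    (u : EuclideanSpace ℝ (Fin n) → ℝ) (hu : ContDiff ℝ 2 u)
    (hgrad : ∀ x : EuclideanSpace ℝ (Fin n), ‖gradient u x‖ < 1)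
    (hsup : ∃ M : ℝ, M < 1 ∧ ∀ x : EuclideanSpace ℝ (Fin n), ‖gradient u x‖ ≤ M)
    (hmax : ∀ x : EuclideanSpace ℝ (Fin n),
      (1 - ∑ j, pd u x j ^ 2) * (∑ j, pd2 u x j j)
        + ∑ j, ∑ k, pd u x j * pd u x k * pd2 u x j k = 0) :
    ∃ (a : EuclideanSpace ℝ (Fin n)) (c : ℝ), ‖a‖ < 1 ∧
      ∀ x : EuclideanSpace ℝ (Fin n), u x = ⟪a, x⟫ + c := by
  obtain ⟨M, hM1, hM⟩ := hsup
  exact ⟨gradient u 0, u 0, hgrad 0,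
    affine_of_const hu (grad_const hu hgrad hM1 hM hmax)⟩
end

section
/- Every C² function u : ℝ² → ℝ satisfying the ∞-Laplace equation u_x²·u_xx + 2·u_x·u_y·u_xy + u_y²·u_yy = 0 at every point of ℝ² is affine linear, i.e. u(x,y) = a·x + b·y + c for some a, b, c ∈ ℝ. In other words, the equation L_{1,0}[u] = 0 has the Bernstein property. -/
open Filter Topology Set


lemma cinner (a b : ℂ) : inner ℝ a b = a.re * b.re + a.im * b.im := by
  rw [Complex.inner]; simp; try ring

lemma cnormsq (a : ℂ) : ‖a‖ ^ 2 = a.re * a.re + a.im * a.im := by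
  rw [← Complex.normSq_eq_norm_sq, Complex.normSq_apply]

/-- second derivative test (necessary condition) -/
lemma second_test {g g' : ℝ → ℝ} {a : ℝ} (h : ∀ᶠ t in 𝓝 (0 : ℝ), HasDerivAt g (g' t) t)
    (h2 : HasDerivAt g' a 0) (hmin : IsLocalMin g 0) : 0 ≤ a := by
  by_contra hneg
  push Not at hneg
  have e1 : deriv g =ᶠ[𝓝 0] g' := h.mono fun t ht => ht.deriv
  have e2 : deriv (deriv g) 0 = a := by rw [e1.deriv_eq]; exact h2.deriv
  have hd0 : deriv g 0 = 0 := hmin.deriv_eq_zero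
  have hc : ContinuousAt g 0 := h.self_of_nhds.continuousAt
  have hmax : IsLocalMax g 0 := isLocalMax_of_deriv_deriv_neg (by rw [e2]; exact hneg) hd0 hc
  have heq : g =ᶠ[𝓝 0] fun _ => g 0 := by
    filter_upwards [hmin, hmax] with t h1 h2
    exact le_antisymm h2 h1
  have e3 : deriv g =ᶠ[𝓝 0] fun _ => 0 := by
    have := heq.deriv
    simpa using this
  have : deriv (deriv g) 0 = 0 := by rw [e3.deriv_eq]; simp
  rw [e2] at this
  linarith

lemma second_test_max {g g' : ℝ → ℝ} {a : ℝ} (h : ∀ᶠ t in 𝓝 (0 : ℝ), HasDerivAt g (g' t) t)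
    (h2 : HasDerivAt g' a 0) (hmax : IsLocalMax g 0) : a ≤ 0 := by
  have := second_test (g := fun t => - g t) (g' := fun t => - g' t) (a := -a)
    (h.mono fun t ht => ht.neg) h2.neg hmax.neg
  linarith

/-- product rule at a zero of one factor, with mere continuity of the other factor -/
lemma hasDerivAt_inner_zero {a b : ℝ → ℂ} {b' : ℂ} (ha : ContinuousAt a 0)
    (hb : HasDerivAt b b' 0) (hb0 : b 0 = 0) :
    HasDerivAt (fun t => inner ℝ (a t) (b t)) (inner ℝ (a 0) b') 0 := by
  rw [hasDerivAt_iff_tendsto_slope_zero] at hb ⊢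
  have ha' : Tendsto (fun t : ℝ => a (0 + t)) (𝓝[≠] 0) (𝓝 (a 0)) := by
    simp only [zero_add]
    exact ha.tendsto.mono_left nhdsWithin_le_nhds
  have := ha'.inner (𝕜 := ℝ) hb
  refine this.congr fun t => ?_
  simp only [zero_add, hb0, sub_zero, inner_smul_right, inner_zero_right, smul_eq_mul]

lemma hasDerivAt_mul_zero {a b : ℝ → ℝ} {b' : ℝ} (ha : ContinuousAt a 0)
    (hb : HasDerivAt b b' 0) (hb0 : b 0 = 0) :
    HasDerivAt (fun t => a t * b t) (a 0 * b') 0 := by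
  rw [hasDerivAt_iff_tendsto_slope_zero] at hb ⊢
  have ha' : Tendsto (fun t : ℝ => a (0 + t)) (𝓝[≠] 0) (𝓝 (a 0)) := by
    simp only [zero_add]
    exact ha.tendsto.mono_left nhdsWithin_le_nhds
  have := ha'.mul hb
  refine this.congr fun t => ?_
  simp [hb0]; ring

/-- derivative of a line -/
lemma line_deriv (x ξ : ℂ) (t : ℝ) : HasDerivAt (fun t : ℝ => x + t • ξ) ξ t := by
  simpa using ((hasDerivAt_id t).smul_const ξ).const_add x

lemma along {w : ℂ → ℝ} {W : ℂ → ℂ} (hw : ∀ z, HasFDerivAt w (innerSL ℝ (W z)) z) (x ξ : ℂ) (t : ℝ) :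
    HasDerivAt (fun t : ℝ => w (x + t • ξ)) (inner ℝ (W (x + t • ξ)) ξ) t := by
  exact ((hw (x + t • ξ)).comp_hasDerivAt t (line_deriv x ξ t)).congr_deriv (by rw [innerSL_apply_apply])

/-- Setup: `V = D²u Du` -/
lemma expansion {G : ℂ → ℂ} (hG : ContDiff ℝ 1 G)
    (heq : ∀ z, inner ℝ (fderiv ℝ G z (G z)) (G z) = 0) (x : ℂ) (c : ℝ) :
    HasDerivAt (fun t : ℝ => inner ℝ (fderiv ℝ G (x + t • (c • G x)) (G (x + t • (c • G x)))) (c • G x))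
      (- (c ^ 2 * ‖fderiv ℝ G x (G x)‖ ^ 2)) 0 := by
  have hGd : Differentiable ℝ G := hG.differentiable (by norm_num)
  have hVc : Continuous fun z => fderiv ℝ G z (G z) :=
    (hG.continuous_fderiv (by norm_num)).clm_apply hG.continuous
  have hb : HasDerivAt (fun t : ℝ => c • (G x - G (x + t • (c • G x)))) (-(c ^ 2) • fderiv ℝ G x (G x)) 0 := by
    have h1 := ((hGd (x + (0 : ℝ) • (c • G x))).hasFDerivAt.comp_hasDerivAt 0 (line_deriv x (c • G x) 0))
    have h2 := (h1.const_sub (G x)).const_smul c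
    refine h2.congr_deriv ?_
    simp only [zero_smul, add_zero, map_smul, smul_neg, smul_smul, neg_smul, pow_two, zero_mul]
  have ha : ContinuousAt (fun t : ℝ => fderiv ℝ G (x + t • (c • G x)) (G (x + t • (c • G x)))) 0 :=
    (hVc.comp (by fun_prop : Continuous fun t : ℝ => x + t • (c • G x))).continuousAt
  have := hasDerivAt_inner_zero ha hb (by simp)
  have e : (fun t : ℝ => inner ℝ (fderiv ℝ G (x + t • (c • G x)) (G (x + t • (c • G x)))) (c • G x)) =
      fun t : ℝ => inner ℝ (fderiv ℝ G (x + t • (c • G x)) (G (x + t • (c • G x))))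
        (c • (G x - G (x + t • (c • G x)))) := by
    funext t
    have := heq (x + t • (c • G x))
    rw [smul_sub, inner_sub_right, inner_smul_right (y := G (x + t • (c • G x))), this]
    simp only [mul_zero, sub_zero]
  rw [e]
  refine this.congr_deriv ?_
  · simp only [zero_smul, add_zero]
    rw [inner_smul_right, real_inner_self_eq_norm_sq]; ring

lemma hasFDerivAt_energy {G : ℂ → ℂ} (hG : ContDiff ℝ 1 G)
    (hsym : ∀ z a b, inner ℝ (fderiv ℝ G z a) b = inner ℝ a (fderiv ℝ G z b)) (z : ℂ) :
    HasFDerivAt (fun z => ‖G z‖ ^ 2 / 2) (innerSL ℝ (fderiv ℝ G z (G z))) z := by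
  have hGd : Differentiable ℝ G := hG.differentiable (by norm_num)
  have h1 := ((hGd z).hasFDerivAt.norm_sq).mul_const (2⁻¹ : ℝ)
  have e : (fun z => ‖G z‖ ^ 2 / 2) = fun z => ‖G z‖ ^ 2 * 2⁻¹ := by
    funext z; rw [div_eq_mul_inv]
  rw [e]
  refine h1.congr_fderiv ?_
  ext1 a
  have h3 := hsym z (G z) a
  rw [innerSL_apply_apply, h3]
  simp only [smul_apply, ContinuousLinearMap.comp_apply, innerSL_apply_apply,
    smul_eq_mul, nsmul_eq_mul]
  push_cast
  ring

/-- the gradient of a nonconstant solution never vanishes -/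
lemma nonvanish {G : ℂ → ℂ} (hG : ContDiff ℝ 1 G)
    (hsym : ∀ z a b, inner ℝ (fderiv ℝ G z a) b = inner ℝ a (fderiv ℝ G z b))
    (heq : ∀ z, inner ℝ (fderiv ℝ G z (G z)) (G z) = 0) (c : ℂ) (hc : G c ≠ 0) (x₁ : ℂ) :
    G x₁ ≠ 0 := by
  intro hx1
  set V : ℂ → ℂ := fun z => fderiv ℝ G z (G z) with hV
  set v : ℂ → ℝ := fun z => ‖G z‖ ^ 2 / 2 with hv
  have hvd : ∀ z, HasFDerivAt v (innerSL ℝ (V z)) z := hasFDerivAt_energy hG hsym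
  have hvc : Continuous v := continuous_iff_continuousAt.2 fun z => (hvd z).continuousAt
  -- a ball on which v is bounded below
  obtain ⟨m, hm, δ, hδ, hball⟩ : ∃ m > 0, ∃ δ > 0, ∀ z, ‖z - c‖ ≤ δ → m ≤ v z := by
    have hvpos : 0 < v c := by positivity
    refine ⟨v c / 2, by positivity, ?_⟩
    have : ∀ᶠ z in 𝓝 c, v c / 2 < v z := hvc.continuousAt.eventually (lt_mem_nhds (by linarith))
    obtain ⟨δ, hδ, h⟩ := Metric.eventually_nhds_iff.1 this
    refine ⟨δ / 2, by positivity, fun z hz => (h ?_).le⟩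
    rw [dist_eq_norm]; linarith
  set k : ℝ := 1 / δ ^ 2 with hk
  have hkpos : 0 < k := by positivity
  set R : ℝ := ‖x₁ - c‖ + δ with hR
  set f : ℝ → ℝ := fun s => m * (Real.exp (-(k * s)) - Real.exp (-(k * R ^ 2))) with hf
  have hfd : ∀ s, HasDerivAt f (-(m * k * Real.exp (-(k * s)))) s := by
    intro s
    have h1 : HasDerivAt (fun s : ℝ => -(k * s)) (-k) s := by
      exact ((hasDerivAt_id s).const_mul k).neg.congr_deriv (by simp)
    have h2 := ((h1.exp).sub_const (Real.exp (-(k * R ^ 2)))).const_mul m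
    exact h2.congr_deriv (by ring)
  have hfc : Continuous f := by fun_prop
  have hRpos : 0 < R := by positivity
  set K : Set ℂ := Metric.closedBall c R ∩ {z | δ ≤ ‖z - c‖} with hK
  have hKc : IsCompact K := (isCompact_closedBall c R).inter_right
    (isClosed_le continuous_const (by fun_prop))
  have hvx1 : v x₁ = 0 := by simp [hv, hx1]
  have hx1K : x₁ ∈ K := by
    refine ⟨?_, ?_⟩
    · rw [Metric.mem_closedBall, dist_eq_norm]; linarith
    · by_contra h
      have := hball x₁ (not_le.1 h).le
      linarith
  have hFc : Continuous fun z => v z - f (‖z - c‖ ^ 2) := by fun_prop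
  obtain ⟨y, hyK, hymin⟩ := hKc.exists_isMinOn ⟨x₁, hx1K⟩ hFc.continuousOn
  have hfx1 : 0 < f (‖x₁ - c‖ ^ 2) := by
    have : Real.exp (-(k * R ^ 2)) < Real.exp (-(k * ‖x₁ - c‖ ^ 2)) := by
      apply Real.exp_lt_exp.2
      have : ‖x₁ - c‖ ^ 2 < R ^ 2 := by
        have := norm_nonneg (x₁ - c)
        nlinarith
      nlinarith
    have := mul_pos hm (sub_pos.2 this)
    exact this
  have hlt : v y < f (‖y - c‖ ^ 2) := by
    have := hymin hx1K
    simp only [mem_ofPred_eq] at this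
    linarith
  have hvnn : 0 ≤ v y := by positivity
  have hy1 : ‖y - c‖ < R := by
    have h1 := hyK.1
    rw [Metric.mem_closedBall, dist_eq_norm] at h1
    rcases h1.lt_or_eq with h | h
    · exact h
    · exfalso
      rw [h] at hlt
      simp [hf] at hlt
      linarith
  have hy2 : δ < ‖y - c‖ := by
    have h1 : δ ≤ ‖y - c‖ := hyK.2
    rcases h1.lt_or_eq with h | h
    · exact h
    · exfalso
      have h2 := hball y h.symm.le
      have : f (‖y - c‖ ^ 2) ≤ m := by
        have e1 : Real.exp (-(k * ‖y - c‖ ^ 2)) ≤ 1 := Real.exp_le_one_iff.2 (by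
          have : 0 ≤ k * ‖y - c‖ ^ 2 := by positivity
          linarith)
        have e2 := Real.exp_pos (-(k * R ^ 2))
        simp only [hf]; nlinarith
      linarith
  have hloc : IsLocalMin (fun z => v z - f (‖z - c‖ ^ 2)) y := by
    refine hymin.isLocalMin ?_
    have o1 : IsOpen {z : ℂ | ‖z - c‖ < R} := isOpen_lt (by fun_prop) continuous_const
    have o2 : IsOpen {z : ℂ | δ < ‖z - c‖} := isOpen_lt continuous_const (by fun_prop)
    filter_upwards [o1.mem_nhds hy1, o2.mem_nhds hy2] with z h1 h2
    refine ⟨?_, le_of_lt h2⟩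
    rw [Metric.mem_closedBall, dist_eq_norm]; exact le_of_lt h1
  set E : ℝ := m * k * Real.exp (-(k * ‖y - c‖ ^ 2)) with hE
  have hEpos : 0 < E := by positivity
  have hVy : V y = (-(2 * E)) • (y - c) := by
    have h1 : HasFDerivAt (fun z : ℂ => ‖z - c‖ ^ 2) (2 • (innerSL ℝ (y - c)).comp (ContinuousLinearMap.id ℝ ℂ)) y :=
      ((hasFDerivAt_id y).sub_const c).norm_sq
    have h2 := (hvd y).sub ((hfd (‖y - c‖ ^ 2)).comp_hasFDerivAt y h1)
    have h3 := hloc.hasFDerivAt_eq_zero h2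
    apply ext_inner_right ℝ
    intro ξ
    have h4 := DFunLike.congr_fun h3 ξ
    simp [← hE] at h4
    rw [inner_smul_left]
    simp
    linarith
  have horth : inner ℝ (y - c) (G y) = 0 := by
    have := heq y
    change inner ℝ (V y) (G y) = 0 at this
    rw [hVy, inner_smul_left] at this
    simpa [hEpos.ne'] using this
  -- second order
  have hs : ∀ t : ℝ, ‖y + t • G y - c‖ ^ 2 = ‖y - c‖ ^ 2 + t ^ 2 * ‖G y‖ ^ 2 := by
    intro t
    rw [show y + t • G y - c = (y - c) + t • G y by ring, norm_add_sq_real, inner_smul_right, horth,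
      norm_smul, mul_pow]
    simp
  have d1 : ∀ t : ℝ, HasDerivAt (fun t : ℝ => v (y + t • G y) - f (‖y - c‖ ^ 2 + t ^ 2 * ‖G y‖ ^ 2))
      (inner ℝ (V (y + t • G y)) (G y)
        - (-(m * k * Real.exp (-(k * (‖y - c‖ ^ 2 + t ^ 2 * ‖G y‖ ^ 2)))) * (2 * t * ‖G y‖ ^ 2))) t := by
    intro t
    have e1 : HasDerivAt (fun t : ℝ => ‖y - c‖ ^ 2 + t ^ 2 * ‖G y‖ ^ 2) (2 * t * ‖G y‖ ^ 2) t := by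
      simpa using ((hasDerivAt_pow 2 t).mul_const (‖G y‖ ^ 2)).const_add (‖y - c‖ ^ 2)
    exact (along hvd y (G y) t).sub ((hfd _).comp t e1)
  have d2 : HasDerivAt (fun t : ℝ => (inner ℝ (V (y + t • G y)) (G y)
        - (-(m * k * Real.exp (-(k * (‖y - c‖ ^ 2 + t ^ 2 * ‖G y‖ ^ 2)))) * (2 * t * ‖G y‖ ^ 2))))
      (-(‖V y‖ ^ 2) - (-E * (2 * ‖G y‖ ^ 2))) 0 := by
    have e1 := expansion hG heq y 1
    simp only [one_smul, one_pow, one_mul] at e1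
    have e2 : HasDerivAt (fun t : ℝ => 2 * t * ‖G y‖ ^ 2) (2 * ‖G y‖ ^ 2) 0 := by
      simpa using ((hasDerivAt_id (0:ℝ)).const_mul 2).mul_const (‖G y‖ ^ 2)
    have e3 := hasDerivAt_mul_zero (a := fun t : ℝ => -(m * k * Real.exp (-(k * (‖y - c‖ ^ 2 + t ^ 2 * ‖G y‖ ^ 2)))))
      (by fun_prop) e2 (by simp)
    refine (e1.sub e3).congr_deriv ?_
    simp [hE, hV]
  have hmin1 : IsLocalMin (fun t : ℝ => v (y + t • G y) - f (‖y - c‖ ^ 2 + t ^ 2 * ‖G y‖ ^ 2)) 0 := by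
    have hcont : Tendsto (fun t : ℝ => y + t • G y) (𝓝 0) (𝓝 y) := by
      have : Continuous (fun t : ℝ => y + t • G y) := by fun_prop
      simpa using this.tendsto 0
    have := hcont.eventually hloc
    filter_upwards [this] with t ht
    rw [hs] at ht
    simpa using ht
  have key := second_test (Eventually.of_forall d1) d2 hmin1
  have hVn : ‖V y‖ ^ 2 = 4 * E ^ 2 * ‖y - c‖ ^ 2 := by
    rw [hVy, norm_smul, mul_pow, Real.norm_eq_abs, sq_abs]; ring
  rw [hVn] at key
  have hvy : v y = ‖G y‖ ^ 2 / 2 := rfl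
  have k1 : E * ‖y - c‖ ^ 2 ≤ v y := by
    rw [hvy]
    by_contra h
    push Not at h
    nlinarith
  have k2 : 1 ≤ k * ‖y - c‖ ^ 2 := by
    rw [hk, div_mul_eq_mul_div, one_mul, le_div_iff₀ (by positivity), one_mul]
    gcongr
  have k3 : f (‖y - c‖ ^ 2) ≤ E * ‖y - c‖ ^ 2 := by
    have e2 := Real.exp_pos (-(k * R ^ 2))
    have e3 := Real.exp_pos (-(k * ‖y - c‖ ^ 2))
    simp only [hf, hE]
    have := mul_le_mul_of_nonneg_left k2 (mul_pos hm e3).le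
    nlinarith
  linarith


lemma log_grad {G : ℂ → ℂ} (hG : ContDiff ℝ 1 G)
    (hsym : ∀ z a b, inner ℝ (fderiv ℝ G z a) b = inner ℝ a (fderiv ℝ G z b))
    (hnz : ∀ z, G z ≠ 0) (z : ℂ) :
    HasFDerivAt (fun z => Real.log (‖G z‖ ^ 2 / 2) / 2)
      (innerSL ℝ ((‖G z‖ ^ 2)⁻¹ • fderiv ℝ G z (G z))) z := by
  have hn : 0 < ‖G z‖ := norm_pos_iff.2 (hnz z)
  have h1 := ((hasFDerivAt_energy hG hsym z).log (by positivity)).mul_const (2⁻¹ : ℝ)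
  have e : (fun z => Real.log (‖G z‖ ^ 2 / 2) / 2) = fun z => Real.log (‖G z‖ ^ 2 / 2) * 2⁻¹ := by
    funext z; rw [div_eq_mul_inv]
  rw [e]
  refine h1.congr_fderiv ?_
  ext1 a
  simp only [smul_apply, innerSL_apply_apply, smul_eq_mul, inner_smul_left]
  simp only [conj_trivial]
  field_simp

lemma log_expansion {G : ℂ → ℂ} (hG : ContDiff ℝ 1 G)
    (heq : ∀ z, inner ℝ (fderiv ℝ G z (G z)) (G z) = 0)
    (hnz : ∀ z, G z ≠ 0) {W : ℂ → ℂ} (hW : W = fun z => (‖G z‖ ^ 2)⁻¹ • fderiv ℝ G z (G z))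
    (x : ℂ) (l : ℝ) :
    HasDerivAt (fun t : ℝ => inner ℝ (W (x + t • (l • (Complex.I * W x)))) (l • (Complex.I * W x)))
      (-(l ^ 2 * ‖W x‖ ^ 4)) 0 := by
  have hn : ∀ z, 0 < ‖G z‖ := fun z => norm_pos_iff.2 (hnz z)
  have horth : inner ℝ (W x) (G x) = 0 := by
    simp only [hW, inner_smul_left, heq, mul_zero]
  by_cases h0 : W x = 0
  · simp only [h0, mul_zero, smul_zero, add_zero, inner_zero_right, norm_zero]
    simpa using hasDerivAt_const (0 : ℝ) (0 : ℝ)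
  -- I * W is a multiple of G
  obtain ⟨c, hc⟩ : ∃ c : ℝ, Complex.I * W x = c • G x := by
    have hg := cnormsq (G x)
    have hg' : (G x).re * (G x).re + (G x).im * (G x).im ≠ 0 := by
      rw [← hg]; exact (pow_pos (hn x) 2).ne'
    rw [cinner] at horth
    refine ⟨((W x).re * (G x).im - (W x).im * (G x).re) / ((G x).re * (G x).re + (G x).im * (G x).im), ?_⟩
    apply Complex.ext
    · rw [Complex.smul_re, smul_eq_mul, Complex.I_mul_re, div_mul_eq_mul_div, eq_div_iff hg']
      linear_combination -(G x).im * horth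
    · rw [Complex.smul_im, smul_eq_mul, Complex.I_mul_im, div_mul_eq_mul_div, eq_div_iff hg']
      linear_combination (G x).re * horth
  have hnorm : ‖W x‖ ^ 2 = c ^ 2 * ‖G x‖ ^ 2 := by
    have := congrArg norm hc
    rw [norm_mul, Complex.norm_I, one_mul, norm_smul] at this
    rw [this, mul_pow, Real.norm_eq_abs, sq_abs]
  have hVn : ‖fderiv ℝ G x (G x)‖ ^ 2 = ‖G x‖ ^ 4 * ‖W x‖ ^ 2 := by
    have h1 : fderiv ℝ G x (G x) = (‖G x‖ ^ 2) • W x := by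
      rw [hW]; simp only [smul_smul]
      rw [mul_inv_cancel₀ (pow_pos (hn x) 2).ne', one_smul]
    rw [h1, norm_smul, mul_pow]
    simp
    left; ring
  have h1 := expansion hG heq x (l * c)
  have ha : ContinuousAt (fun t : ℝ => (‖G (x + t • ((l * c) • G x))‖ ^ 2)⁻¹) 0 := by
    have : Continuous (fun t : ℝ => (‖G (x + t • ((l * c) • G x))‖ ^ 2)⁻¹) := by
      have hGc := hG.continuous
      refine Continuous.inv₀ (by fun_prop) fun t => (pow_pos (hn _) 2).ne'
    exact this.continuousAt
  have h2 := hasDerivAt_mul_zero ha h1 (by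
    simp only [zero_smul, add_zero, inner_smul_right, heq, mul_zero])
  rw [hc, smul_smul]
  have e : (fun t : ℝ => inner ℝ (W (x + t • ((l * c) • G x))) ((l * c) • G x)) =
    fun t : ℝ => (‖G (x + t • ((l * c) • G x))‖ ^ 2)⁻¹ *
      inner ℝ (fderiv ℝ G (x + t • ((l * c) • G x)) (G (x + t • ((l * c) • G x)))) ((l * c) • G x) := by
    funext t
    rw [hW]
    simp only [inner_smul_left, conj_trivial]
  rw [e]
  refine h2.congr_deriv ?_
  rw [hVn]
  simp only [zero_smul, add_zero]
  have e4 : ‖W x‖ ^ 4 = c ^ 2 * ‖G x‖ ^ 2 * ‖W x‖ ^ 2 := by rw [← hnorm]; ring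
  rw [e4]
  have := (hn x).ne'
  field_simp

lemma scal1 {r β D g σ τ ε : ℝ} {t : ℝ} (hq : 0 < r ^ 2 + 2 * t * β + t ^ 2 * D) :
    HasDerivAt (fun t : ℝ => √(r ^ 2 + 2 * t * β + t ^ 2 * D) / 2 + 2 * (r ^ 2 + 2 * t * β + t ^ 2 * D)
        + ε * (g + 2 * t * σ + t ^ 2 * τ) * √(r ^ 2 + 2 * t * β + t ^ 2 * D))
      ((1 / 2 + ε * (g + 2 * t * σ + t ^ 2 * τ)) * ((β + t * D) * (√(r ^ 2 + 2 * t * β + t ^ 2 * D))⁻¹)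
        + 4 * (β + t * D) + ε * (2 * σ + 2 * t * τ) * √(r ^ 2 + 2 * t * β + t ^ 2 * D)) t := by
  have quad : ∀ a b c : ℝ, HasDerivAt (fun t : ℝ => a + 2 * t * b + t ^ 2 * c) (2 * b + 2 * t * c) t := by
    intro a b c
    have h1 := ((((hasDerivAt_id t).const_mul 2).mul_const b).const_add a).add
      ((hasDerivAt_pow 2 t).mul_const c)
    refine h1.congr_deriv ?_
    simp
  have h1 := quad (r ^ 2) β D
  have h2 := quad g σ τ
  have h3 := h1.sqrt hq.ne'
  have h4 := ((h3.div_const 2).add (h1.const_mul 2)).add ((h2.const_mul ε).mul h3)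
  refine h4.congr_deriv ?_
  have : √(r ^ 2 + 2 * t * β + t ^ 2 * D) ≠ 0 := (Real.sqrt_pos.2 hq).ne'
  generalize √(r ^ 2 + 2 * t * β + t ^ 2 * D) = S at this
  field_simp
  ring

lemma scal2 {r β D g σ τ ε : ℝ} (hr : 0 < r) :
    HasDerivAt (fun t : ℝ =>
      ((1 / 2 + ε * (g + 2 * t * σ + t ^ 2 * τ)) * ((β + t * D) * (√(r ^ 2 + 2 * t * β + t ^ 2 * D))⁻¹)
        + 4 * (β + t * D) + ε * (2 * σ + 2 * t * τ) * √(r ^ 2 + 2 * t * β + t ^ 2 * D)))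
      ((1 / 2 + ε * g) * (D / r - β ^ 2 / r ^ 3) + 4 * D + 4 * ε * σ * (β / r) + 2 * ε * τ * r) 0 := by
  have quad : ∀ a b c : ℝ, HasDerivAt (fun t : ℝ => a + 2 * t * b + t ^ 2 * c) (2 * b) 0 := by
    intro a b c
    have h1 := ((((hasDerivAt_id (0:ℝ)).const_mul 2).mul_const b).const_add a).add
      ((hasDerivAt_pow 2 (0:ℝ)).mul_const c)
    refine h1.congr_deriv ?_
    simp
  have hr2 : r ^ 2 + 2 * 0 * β + 0 ^ 2 * D ≠ 0 := by simp [hr.ne']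
  have e0 : √(r ^ 2 + 2 * 0 * β + 0 ^ 2 * D) = r := by simp [Real.sqrt_sq hr.le]
  have h1 := (quad (r ^ 2) β D).sqrt hr2
  have h2 := ((quad g σ τ).const_mul ε).const_add (1 / 2)
  have h3 : HasDerivAt (fun t : ℝ => β + t * D) D 0 := by
    exact (((hasDerivAt_id (0:ℝ)).mul_const D).const_add β).congr_deriv (by simp)
  have h4 : HasDerivAt (fun t : ℝ => ε * (2 * σ + 2 * t * τ)) (ε * (2 * τ)) 0 := by
    exact (((((hasDerivAt_id (0:ℝ)).const_mul 2).mul_const τ).const_add (2 * σ)).const_mul ε).congr_deriv (by simp)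
  have h5 := ((h2.mul (h3.mul (h1.inv (by rw [e0]; exact hr.ne')))).add (h3.const_mul 4)).add (h4.mul h1)
  refine h5.congr_deriv ?_
  simp only [Pi.mul_apply, Pi.inv_apply, e0]
  field_simp
  ring

noncomputable def Phi (ε : ℝ) (x y : ℂ) : ℝ :=
  ‖x - y‖ / 2 + 2 * ‖x - y‖ ^ 2 + ε * (‖x‖ ^ 2 + ‖y‖ ^ 2) * ‖x - y‖

lemma Phi_line (ε : ℝ) (x y ξ η : ℂ) (t : ℝ) : Phi ε (x + t • ξ) (y + t • η) =
    √(‖x - y‖ ^ 2 + 2 * t * inner ℝ (x - y) (ξ - η) + t ^ 2 * ‖ξ - η‖ ^ 2) / 2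
      + 2 * (‖x - y‖ ^ 2 + 2 * t * inner ℝ (x - y) (ξ - η) + t ^ 2 * ‖ξ - η‖ ^ 2)
      + ε * ((‖x‖ ^ 2 + ‖y‖ ^ 2) + 2 * t * (inner ℝ x ξ + inner ℝ y η) + t ^ 2 * (‖ξ‖ ^ 2 + ‖η‖ ^ 2))
        * √(‖x - y‖ ^ 2 + 2 * t * inner ℝ (x - y) (ξ - η) + t ^ 2 * ‖ξ - η‖ ^ 2) := by
  have gen : ∀ a b : ℂ, ‖a + t • b‖ ^ 2 = ‖a‖ ^ 2 + 2 * t * inner ℝ a b + t ^ 2 * ‖b‖ ^ 2 := by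
    intro a b
    rw [norm_add_sq_real, inner_smul_right, norm_smul, mul_pow, Real.norm_eq_abs, sq_abs]; ring
  have e1 : (x + t • ξ) - (y + t • η) = (x - y) + t • (ξ - η) := by
    rw [smul_sub]; abel
  have e2 : √(‖x - y‖ ^ 2 + 2 * t * inner ℝ (x - y) (ξ - η) + t ^ 2 * ‖ξ - η‖ ^ 2)
      = ‖(x + t • ξ) - (y + t • η)‖ := by
    rw [← gen, ← e1, Real.sqrt_sq (norm_nonneg _)]
  rw [e2, ← gen, ← e1, Phi, gen x ξ, gen y η]
  ring

/-- first and second order conditions at an interior maximum -/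
lemma max_conditions {w : ℂ → ℝ} {W : ℂ → ℂ} (hw : ∀ z, HasFDerivAt w (innerSL ℝ (W z)) z)
    {ε : ℝ} {x y : ℂ} (hxy : x ≠ y)
    (hmax : ∀ᶠ z in 𝓝 (x, y), w z.1 - w z.2 - Phi ε z.1 z.2 ≤ w x - w y - Phi ε x y) (ξ η : ℂ) :
    (inner ℝ (W x) ξ - inner ℝ (W y) η =
      (1 / 2 + ε * (‖x‖ ^ 2 + ‖y‖ ^ 2)) * (inner ℝ (x - y) (ξ - η) / ‖x - y‖)
        + 4 * inner ℝ (x - y) (ξ - η) + 2 * ε * (inner ℝ x ξ + inner ℝ y η) * ‖x - y‖) ∧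
    ∀ a b : ℝ, HasDerivAt (fun t : ℝ => inner ℝ (W (x + t • ξ)) ξ) a 0 →
      HasDerivAt (fun t : ℝ => inner ℝ (W (y + t • η)) η) b 0 →
      a - b ≤ (1 / 2 + ε * (‖x‖ ^ 2 + ‖y‖ ^ 2)) *
        (‖ξ - η‖ ^ 2 / ‖x - y‖ - inner ℝ (x - y) (ξ - η) ^ 2 / ‖x - y‖ ^ 3) + 4 * ‖ξ - η‖ ^ 2
        + 4 * ε * (inner ℝ x ξ + inner ℝ y η) * (inner ℝ (x - y) (ξ - η) / ‖x - y‖)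
        + 2 * ε * (‖ξ‖ ^ 2 + ‖η‖ ^ 2) * ‖x - y‖ := by
  have hr : 0 < ‖x - y‖ := norm_pos_iff.2 (sub_ne_zero.2 hxy)
  set r := ‖x - y‖ with hrdef
  set β := inner ℝ (x - y) (ξ - η) with hβ
  set D := ‖ξ - η‖ ^ 2 with hD
  set g := ‖x‖ ^ 2 + ‖y‖ ^ 2 with hg
  set σ := inner ℝ x ξ + inner ℝ y η with hσ
  set τ := ‖ξ‖ ^ 2 + ‖η‖ ^ 2 with hτ
  have hloc : IsLocalMax (fun t : ℝ => w (x + t • ξ) - w (y + t • η) -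
      (√(r ^ 2 + 2 * t * β + t ^ 2 * D) / 2 + 2 * (r ^ 2 + 2 * t * β + t ^ 2 * D)
        + ε * (g + 2 * t * σ + t ^ 2 * τ) * √(r ^ 2 + 2 * t * β + t ^ 2 * D))) 0 := by
    have hc : Tendsto (fun t : ℝ => (x + t • ξ, y + t • η)) (𝓝 0) (𝓝 (x, y)) := by
      have : Continuous (fun t : ℝ => (x + t • ξ, y + t • η)) := by fun_prop
      simpa using this.tendsto 0
    filter_upwards [hc.eventually hmax] with t ht
    have h0 := Phi_line ε x y ξ η 0
    have h1 := Phi_line ε x y ξ η t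
    rw [← h0, ← h1]
    simpa using ht
  have hqpos : ∀ᶠ t in 𝓝 (0:ℝ), 0 < r ^ 2 + 2 * t * β + t ^ 2 * D := by
    have : ContinuousAt (fun t : ℝ => r ^ 2 + 2 * t * β + t ^ 2 * D) 0 := by fun_prop
    refine this.eventually (lt_mem_nhds ?_)
    simp; positivity
  have hd : ∀ᶠ t in 𝓝 (0:ℝ), HasDerivAt (fun t : ℝ => w (x + t • ξ) - w (y + t • η) -
      (√(r ^ 2 + 2 * t * β + t ^ 2 * D) / 2 + 2 * (r ^ 2 + 2 * t * β + t ^ 2 * D)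
        + ε * (g + 2 * t * σ + t ^ 2 * τ) * √(r ^ 2 + 2 * t * β + t ^ 2 * D)))
      (inner ℝ (W (x + t • ξ)) ξ - inner ℝ (W (y + t • η)) η -
        ((1 / 2 + ε * (g + 2 * t * σ + t ^ 2 * τ)) * ((β + t * D) * (√(r ^ 2 + 2 * t * β + t ^ 2 * D))⁻¹)
        + 4 * (β + t * D) + ε * (2 * σ + 2 * t * τ) * √(r ^ 2 + 2 * t * β + t ^ 2 * D))) t := by
    filter_upwards [hqpos] with t ht
    exact ((along hw x ξ t).sub (along hw y η t)).sub (scal1 ht)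
  constructor
  · have h1 := hloc.hasDerivAt_eq_zero hd.self_of_nhds
    simp only [zero_smul, add_zero, mul_zero, zero_mul, ne_eq, OfNat.ofNat_ne_zero,
      not_false_eq_true, zero_pow, Real.sqrt_sq hr.le] at h1
    rw [div_eq_mul_inv β r]
    linarith
  · intro a b ha hb
    have h2 := second_test_max hd ((ha.sub hb).sub (scal2 hr)) hloc
    linarith


set_option maxHeartbeats 1000000 in
/-- pure arithmetic behind the contradiction -/
lemma arith {N ε r X Y δ σ β τ g : ℝ} (hN : N = 10 ^ 7) (hε : ε = 2 / N ^ 2) (hr0 : 0 < r) (hr1 : r ≤ 1)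
    (hX0 : 0 ≤ X) (hY0 : 0 ≤ Y) (hX : X ≤ 2) (hY : Y ≤ 2) (hXY : X ≤ Y + 8 / N * r) (hYlow : 49 / 100 ≤ Y)
    (hδ0 : 0 ≤ δ) (hδ : δ ≤ (8 / N + 2 / 1000) * r) (hβ : |β| ≤ r * δ) (hσ : |σ| ≤ 5 * N)
    (hτ : τ ≤ 13) (hg0 : 0 ≤ g) (hg : ε * g ≤ 3 / 2)
    (key : -X ^ 4 - (-((1 + r / 1000) ^ 2 * Y ^ 4)) ≤ (1 / 2 + ε * g) * (δ ^ 2 / r - β ^ 2 / r ^ 3)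
      + 4 * δ ^ 2 + 4 * ε * σ * (β / r) + 2 * ε * τ * r) : False := by
  have hε0 : 0 < ε := by rw [hε, hN]; positivity
  have hδ' : δ ≤ (21 / 10000) * r := by
    refine hδ.trans ?_
    rw [hN]; gcongr; norm_num
  have hd2 : δ ^ 2 ≤ (21 / 10000) ^ 2 * r ^ 2 := by
    rw [← mul_pow]; gcongr
  have t1 : (1 / 2 + ε * g) * (δ ^ 2 / r - β ^ 2 / r ^ 3) ≤ 2 * ((21 / 10000) ^ 2 * r) := by
    have a1 : δ ^ 2 / r - β ^ 2 / r ^ 3 ≤ (21 / 10000) ^ 2 * r := by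
      have : δ ^ 2 / r ≤ (21 / 10000) ^ 2 * r := by
        rw [div_le_iff₀ hr0]; nlinarith
      have : 0 ≤ β ^ 2 / r ^ 3 := by positivity
      linarith
    have a0 : 0 ≤ 1 / 2 + ε * g := by positivity
    calc _ ≤ (1 / 2 + ε * g) * ((21 / 10000) ^ 2 * r) := by gcongr
      _ ≤ _ := by gcongr; linarith
  have t2 : 4 * δ ^ 2 ≤ 4 * ((21 / 10000) ^ 2 * r) := by nlinarith
  have t3 : 4 * ε * σ * (β / r) ≤ 1 / 10 ^ 7 * r := by
    have b1 : |β / r| ≤ (21 / 10000) * r := by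
      rw [abs_div, abs_of_pos hr0, div_le_iff₀ hr0]
      nlinarith
    calc 4 * ε * σ * (β / r) ≤ |4 * ε * σ * (β / r)| := le_abs_self _
      _ = 4 * ε * |σ| * |β / r| := by rw [abs_mul, abs_mul, abs_of_pos (by positivity : 0 < 4 * ε)]
      _ ≤ 4 * ε * (5 * N) * ((21 / 10000) * r) := by gcongr
      _ ≤ 1 / 10 ^ 7 * r := by
        rw [hε, hN]; norm_num; nlinarith
  have t4 : 2 * ε * τ * r ≤ 1 / 10 ^ 7 * r := by
    calc 2 * ε * τ * r ≤ 2 * ε * 13 * r := by gcongr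
      _ ≤ _ := by rw [hε, hN]; norm_num; nlinarith
  -- lower bound
  have hY4 : 1 / 20 ≤ Y ^ 4 := by
    have : (49 / 100 : ℝ) ^ 4 ≤ Y ^ 4 := by gcongr
    norm_num at this ⊢
    linarith
  have l1 : X ^ 4 - Y ^ 4 ≤ 256 / N * r := by
    rw [hN] at hXY ⊢
    have e : X ^ 4 - Y ^ 4 = (X - Y) * ((X + Y) * (X ^ 2 + Y ^ 2)) := by ring
    have p0 : 0 ≤ (X + Y) * (X ^ 2 + Y ^ 2) := by positivity
    have p1 : (X + Y) * (X ^ 2 + Y ^ 2) ≤ 4 * 8 := by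
      have : X ^ 2 + Y ^ 2 ≤ 8 := by nlinarith
      gcongr
      linarith
    rw [e]
    calc _ ≤ (8 / 10 ^ 7 * r) * ((X + Y) * (X ^ 2 + Y ^ 2)) := by gcongr; linarith
      _ ≤ (8 / 10 ^ 7 * r) * (4 * 8) := by gcongr
      _ = _ := by ring
  have l2 : Y ^ 4 + 2 * (r / 1000) * (1 / 20) ≤ (1 + r / 1000) ^ 2 * Y ^ 4 := by
    nlinarith [mul_le_mul_of_nonneg_left hY4 hr0.le, mul_nonneg (sq_nonneg r) (by positivity : 0 ≤ Y ^ 4)]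
  rw [hN] at l1
  linarith

set_option maxHeartbeats 2000000 in
lemma doubling {w : ℂ → ℝ} {W : ℂ → ℂ} (hw : ∀ z, HasFDerivAt w (innerSL ℝ (W z)) z)
    (hP : ∀ (x : ℂ) (l : ℝ),
      HasDerivAt (fun t : ℝ => inner ℝ (W (x + t • (l • (Complex.I * W x)))) (l • (Complex.I * W x)))
      (-(l ^ 2 * ‖W x‖ ^ 4)) 0) {N : ℝ} (hN : N = 10 ^ 7)
    (h0 : ‖W 0‖ = 1) (hb : ∀ z, ‖z‖ ≤ N → ‖W z‖ ≤ 2) : False := by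
  obtain ⟨ε, hε⟩ : ∃ ε : ℝ, ε = 2 / N ^ 2 := ⟨_, rfl⟩
  have hNpos : 0 < N := by rw [hN]; positivity
  have hεpos : 0 < ε := by rw [hε]; positivity
  have hwc : Continuous w := continuous_iff_continuousAt.2 fun z => (hw z).continuousAt
  have hΦc : Continuous fun z : ℂ × ℂ => w z.1 - w z.2 - Phi ε z.1 z.2 := by
    unfold Phi; fun_prop
  set K : Set (ℂ × ℂ) := Metric.closedBall 0 N ×ˢ Metric.closedBall 0 N with hK
  have hKc : IsCompact K := (isCompact_closedBall _ _).prod (isCompact_closedBall _ _)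
  have h0K : ((0 : ℂ), (0 : ℂ)) ∈ K := by simp [hK, hNpos.le]
  obtain ⟨⟨x, y⟩, hxyK, hmaxK⟩ := hKc.exists_isMaxOn ⟨_, h0K⟩ hΦc.continuousOn
  have hxN : ‖x‖ ≤ N := by simpa using hxyK.1
  have hyN : ‖y‖ ≤ N := by simpa using hxyK.2
  -- positivity of the maximum
  have hpos : 0 < w x - w y - Phi ε x y := by
    have hd : HasDerivAt (fun t : ℝ => w (0 + t • W 0) - w 0 - t / 2 - (2 + ε) * t ^ 2) (1 / 2) 0 := by
      have := (((along hw 0 (W 0) 0).sub_const (w 0)).sub ((hasDerivAt_id (0:ℝ)).div_const 2)).sub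
        ((hasDerivAt_pow 2 (0:ℝ)).const_mul (2 + ε))
      refine this.congr_deriv ?_
      simp only [zero_smul, add_zero, real_inner_self_eq_norm_sq, h0]
      norm_num
    have hsl := hasDerivAt_iff_tendsto_slope_zero.1 hd
    have hev : ∀ᶠ t in 𝓝[>] (0:ℝ), 0 < t⁻¹ • ((w (0 + (0 + t) • W 0) - w 0 - (0 + t) / 2 - (2 + ε) * (0 + t) ^ 2)
        - (w (0 + (0:ℝ) • W 0) - w 0 - (0:ℝ) / 2 - (2 + ε) * 0 ^ 2)) :=
      (hsl.mono_left (nhdsWithin_mono _ fun t ht => ne_of_gt ht)).eventually (lt_mem_nhds (by norm_num))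
    have hev2 : ∀ᶠ t in 𝓝[>] (0:ℝ), t < 1 := nhdsWithin_le_nhds (gt_mem_nhds (by norm_num))
    obtain ⟨t, ht, ht1, ht0⟩ := (hev.and (hev2.and self_mem_nhdsWithin)).exists
    have ht0 : 0 < t := ht0
    simp only [zero_add, zero_smul, sub_self, zero_div, smul_eq_mul] at ht
    have ht2 := (mul_pos_iff_of_pos_left (inv_pos.2 ht0)).1 ht
    norm_num at ht2
    have hmem : ((t • W 0), (0 : ℂ)) ∈ K := by
      simp only [hK, mem_prod, Metric.mem_closedBall, dist_zero_right, norm_smul, h0, norm_zero]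
      refine ⟨?_, hNpos.le⟩
      rw [Real.norm_eq_abs, abs_of_pos ht0, hN]; linarith
    have h3 := hmaxK hmem
    simp only [mem_ofPred_eq] at h3
    refine lt_of_lt_of_le ?_ h3
    simp only [Phi, sub_zero, norm_smul, h0, norm_zero, Real.norm_eq_abs, abs_of_pos ht0]
    have ht3 : ε * t ^ 3 ≤ ε * t ^ 2 := by
      gcongr ?_ * ?_
      nlinarith [sq_nonneg t]
    have : (t • W 0 : ℂ) = ↑t * W 0 := by simp
    rw [this]
    nlinarith
  have hxy : x ≠ y := by
    rintro rfl
    simp [Phi] at hpos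
  set r := ‖x - y‖ with hrdef
  have hr : 0 < r := norm_pos_iff.2 (sub_ne_zero.2 hxy)
  set g := ‖x‖ ^ 2 + ‖y‖ ^ 2 with hg
  have hg0 : 0 ≤ g := by positivity
  have hlip : w x - w y ≤ 2 * r := by
    have := (convex_closedBall (0:ℂ) N).norm_image_sub_le_of_norm_hasFDerivWithin_le (f := w) (C := 2)
      (f' := fun z => innerSL ℝ (W z))
      (fun z _ => (hw z).hasFDerivWithinAt)
      (fun z hz => by rw [innerSL_apply_norm]; exact hb z (by simpa using hz))
      hxyK.2 hxyK.1
    exact (le_abs_self _).trans this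
  have hbound : 2 * r + ε * g < 3 / 2 := by
    simp only [Phi, ← hrdef, ← hg] at hpos
    by_contra h
    push Not at h
    nlinarith
  have hεg : ε * g ≤ 3 / 2 := by linarith
  have hgN : g < N ^ 2 := by
    have : ε * g < ε * N ^ 2 := by
      rw [show ε * N ^ 2 = 2 by rw [hε]; field_simp]
      linarith
    exact lt_of_mul_lt_mul_left this hεpos.le
  have hxN' : ‖x‖ < N := lt_of_pow_lt_pow_left₀ 2 hNpos.le (by nlinarith [sq_nonneg ‖y‖])
  have hyN' : ‖y‖ < N := lt_of_pow_lt_pow_left₀ 2 hNpos.le (by nlinarith [sq_nonneg ‖x‖])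
  have hr1 : r ≤ 1 := by nlinarith [mul_nonneg hεpos.le hg0]
  have hmax : ∀ᶠ z in 𝓝 (x, y), w z.1 - w z.2 - Phi ε z.1 z.2 ≤ w x - w y - Phi ε x y := by
    have hn : K ∈ 𝓝 (x, y) := prod_mem_nhds
      (Metric.closedBall_mem_nhds_of_mem (by simpa using hxN'))
      (Metric.closedBall_mem_nhds_of_mem (by simpa using hyN'))
    filter_upwards [hn] with z hz
    exact hmaxK hz
  have cond := max_conditions hw hxy hmax
  simp only [← hrdef, ← hg] at cond
  set Λ := (1 / 2 + ε * g) / r + 4 with hΛ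
  have hX : W x = Λ • (x - y) + (2 * ε * r) • x := by
    apply ext_inner_right ℝ
    intro ξ
    have := (cond ξ 0).1
    simp only [sub_zero, inner_zero_right, add_zero] at this
    rw [this, inner_add_left, inner_smul_left, inner_smul_left]
    simp only [conj_trivial, hΛ]
    ring
  have hY : W y = Λ • (x - y) - (2 * ε * r) • y := by
    apply ext_inner_right ℝ
    intro η
    have := (cond 0 η).1
    simp only [zero_sub, inner_zero_right, zero_add, inner_neg_right] at this
    rw [inner_sub_left, inner_smul_left, inner_smul_left]
    simp only [conj_trivial, hΛ]
    have h2 := neg_eq_iff_eq_neg.1 this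
    rw [h2]
    ring
  have hεN : ε * N = 2 / N := by rw [hε]; field_simp
  have hdiff : ‖W x - W y‖ ≤ 8 / N * r := by
    have e : W x - W y = (2 * ε * r) • (x + y) := by
      rw [hX, hY, smul_add]; abel
    rw [e, norm_smul, Real.norm_eq_abs, abs_of_pos (by positivity)]
    calc 2 * ε * r * ‖x + y‖ ≤ 2 * ε * r * (N + N) := by
          gcongr; exact (norm_add_le _ _).trans (add_le_add hxN hyN)
      _ = 4 * (ε * N) * r := by ring
      _ = _ := by rw [hεN]; ring
  have hXn : ‖W x‖ ≤ 2 := hb x hxN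
  have hYn : ‖W y‖ ≤ 2 := hb y hyN
  have hYlow : 49 / 100 ≤ ‖W y‖ := by
    have h1 : ‖Λ • (x - y)‖ - ‖(2 * ε * r) • y‖ ≤ ‖W y‖ := by rw [hY]; exact norm_sub_norm_le _ _
    have hΛpos : 0 < Λ := by positivity
    rw [norm_smul, norm_smul, Real.norm_eq_abs, Real.norm_eq_abs, abs_of_pos hΛpos,
      abs_of_pos (by positivity), ← hrdef] at h1
    have h2 : 1 / 2 ≤ Λ * r := by
      rw [hΛ, add_mul, div_mul_cancel₀ _ hr.ne']
      have := mul_nonneg hεpos.le hg0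
      linarith
    have h3 : 2 * ε * r * ‖y‖ ≤ 2 * ε * 1 * N := by gcongr
    have h4 : 2 * ε * 1 * N = 4 / N := by rw [mul_one, mul_assoc, hεN]; ring
    rw [h4, hN] at h3
    norm_num at h3
    linarith
  set l : ℝ := 1 + r / 1000 with hl
  have hl0 : 0 < l := by positivity
  set ξ : ℂ := (1 : ℝ) • (Complex.I * W x) with hξ
  set η : ℂ := l • (Complex.I * W y) with hη
  have key := (cond ξ η).2 _ _ (hP x 1) (hP y l)
  have hξn : ‖ξ‖ = ‖W x‖ := by rw [hξ, one_smul, norm_mul, Complex.norm_I, one_mul]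
  have hηn : ‖η‖ = l * ‖W y‖ := by
    rw [hη, norm_smul, norm_mul, Complex.norm_I, one_mul, Real.norm_eq_abs, abs_of_pos hl0]
  have hξ2 : ‖ξ‖ ≤ 2 := by rw [hξn]; exact hXn
  have hη3 : ‖η‖ ≤ 3 := by rw [hηn]; nlinarith [norm_nonneg (W y)]
  have hδ : ‖ξ - η‖ ≤ (8 / N + 2 / 1000) * r := by
    have e : ξ - η = Complex.I * (W x - W y) - (r / 1000) • (Complex.I * W y) := by
      rw [hξ, hη, hl, add_smul, one_smul, one_smul]; ring
    rw [e]
    refine (norm_sub_le _ _).trans ?_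
    rw [norm_smul, norm_mul, norm_mul, Complex.norm_I, one_mul, one_mul, Real.norm_eq_abs,
      abs_of_pos (by positivity)]
    have h5 : r / 1000 * ‖W y‖ ≤ r / 1000 * 2 := by gcongr
    rw [add_mul]
    linarith
  refine arith (X := ‖W x‖) (Y := ‖W y‖) (δ := ‖ξ - η‖) (σ := inner ℝ x ξ + inner ℝ y η)
    (β := inner ℝ (x - y) (ξ - η)) (τ := ‖ξ‖ ^ 2 + ‖η‖ ^ 2) (g := g) hN hε hr hr1
    (norm_nonneg _) (norm_nonneg _) hXn hYn ?_ hYlow (norm_nonneg _) hδ ?_ ?_ ?_ hg0 hεg ?_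
  · have := norm_sub_norm_le (W x) (W y)
    linarith
  · exact abs_real_inner_le_norm _ _
  · have h1 := abs_real_inner_le_norm x ξ
    have h2 := abs_real_inner_le_norm y η
    have h3 : ‖x‖ * ‖ξ‖ ≤ N * 2 := by gcongr
    have h4 : ‖y‖ * ‖η‖ ≤ N * 3 := by gcongr
    have := abs_add_le (inner ℝ x ξ) (inner ℝ y η)
    linarith
  · have h3 : ‖ξ‖ ^ 2 ≤ 2 ^ 2 := by gcongr
    have h4 : ‖η‖ ^ 2 ≤ 3 ^ 2 := by gcongr
    linarith
  · simpa using key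


lemma W_zero {w : ℂ → ℝ} {W : ℂ → ℂ} (hw : ∀ z, HasFDerivAt w (innerSL ℝ (W z)) z)
    (hWc : Continuous W)
    (hP : ∀ (x : ℂ) (l : ℝ),
      HasDerivAt (fun t : ℝ => inner ℝ (W (x + t • (l • (Complex.I * W x)))) (l • (Complex.I * W x)))
      (-(l ^ 2 * ‖W x‖ ^ 4)) 0) (x₀ : ℂ) : W x₀ = 0 := by
  by_contra hne
  have hm : 0 < ‖W x₀‖ := norm_pos_iff.2 hne
  obtain ⟨N, hN⟩ : ∃ N : ℝ, N = 10 ^ 7 := ⟨_, rfl⟩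
  have hNpos : 0 < N := by rw [hN]; positivity
  set R := 2 * N / ‖W x₀‖ with hR
  have hRpos : 0 < R := by positivity
  have hfc : Continuous fun z => (R - ‖z - x₀‖) * ‖W z‖ := by fun_prop
  obtain ⟨z₀, hz₀, hmax⟩ := (isCompact_closedBall x₀ R).exists_isMaxOn
    ⟨x₀, Metric.mem_closedBall_self hRpos.le⟩ hfc.continuousOn
  set M := ‖W z₀‖ with hM
  set d := R - ‖z₀ - x₀‖ with hd
  have hMd : 2 * N ≤ d * M := by
    have := hmax (Metric.mem_closedBall_self hRpos.le)
    simp only [mem_ofPred_eq, sub_self, norm_zero, sub_zero] at this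
    rwa [hR, div_mul_cancel₀ _ hm.ne'] at this
  have hd0 : 0 ≤ d := by
    rw [Metric.mem_closedBall, dist_eq_norm] at hz₀
    linarith
  have hM0 : 0 ≤ M := norm_nonneg _
  have hMpos : 0 < M := by
    rcases hM0.lt_or_eq with h | h
    · exact h
    · rw [← h] at hMd; linarith
  have hdpos : 0 < d := by
    rcases hd0.lt_or_eq with h | h
    · exact h
    · rw [← h] at hMd; linarith
  have hball : ∀ z, ‖z - z₀‖ ≤ d / 2 → ‖W z‖ ≤ 2 * M := by
    intro z hz
    have h1 : ‖z - x₀‖ ≤ ‖z - z₀‖ + ‖z₀ - x₀‖ := by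
      simpa using norm_add_le (z - z₀) (z₀ - x₀)
    have hzb : z ∈ Metric.closedBall x₀ R := by
      rw [Metric.mem_closedBall, dist_eq_norm]; linarith
    have h2 := hmax hzb
    simp only [mem_ofPred_eq] at h2
    have h3 : d / 2 * ‖W z‖ ≤ (R - ‖z - x₀‖) * ‖W z‖ := by
      gcongr; linarith
    have h4 : d / 2 * ‖W z‖ ≤ d / 2 * (2 * M) := by
      calc _ ≤ d * M := h3.trans h2
        _ = _ := by ring
    exact le_of_mul_le_mul_left h4 (by positivity)
  refine doubling (w := fun z => w (z₀ + M⁻¹ • z)) (W := fun z => M⁻¹ • W (z₀ + M⁻¹ • z)) ?_ ?_ hN ?_ ?_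
  · intro z
    have h1 : HasFDerivAt (fun z : ℂ => z₀ + M⁻¹ • z) (M⁻¹ • ContinuousLinearMap.id ℝ ℂ) z :=
      ((hasFDerivAt_id z).const_smul M⁻¹).const_add z₀
    refine ((hw (z₀ + M⁻¹ • z)).comp z h1).congr_fderiv ?_
    ext1 a
    simp only [ContinuousLinearMap.comp_apply, smul_apply, ContinuousLinearMap.id_apply,
      innerSL_apply_apply, inner_smul_left, inner_smul_right, conj_trivial]
  · intro x l
    have h := hP (z₀ + M⁻¹ • x) (l * M⁻¹ * M⁻¹)
    have e : (fun t : ℝ => inner ℝ (M⁻¹ • W (z₀ + M⁻¹ • (x + t • (l • (Complex.I * (M⁻¹ • W (z₀ + M⁻¹ • x)))))))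
        (l • (Complex.I * (M⁻¹ • W (z₀ + M⁻¹ • x))))) =
        fun t : ℝ => inner ℝ (W (z₀ + M⁻¹ • x + t • ((l * M⁻¹ * M⁻¹) • (Complex.I * W (z₀ + M⁻¹ • x)))))
          ((l * M⁻¹ * M⁻¹) • (Complex.I * W (z₀ + M⁻¹ • x))) := by
      funext t
      have e1 : z₀ + M⁻¹ • (x + t • (l • (Complex.I * (M⁻¹ • W (z₀ + M⁻¹ • x))))) =
        z₀ + M⁻¹ • x + t • ((l * M⁻¹ * M⁻¹) • (Complex.I * W (z₀ + M⁻¹ • x))) := by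
        rw [mul_smul_comm]
        module
      rw [e1, mul_smul_comm, inner_smul_left, inner_smul_right, inner_smul_right, inner_smul_right]
      simp only [conj_trivial]
      ring
    rw [e]
    refine h.congr_deriv ?_
    rw [norm_smul, Real.norm_eq_abs, abs_of_pos (inv_pos.2 hMpos)]
    ring
  · simp only [smul_zero, add_zero]
    rw [norm_smul, Real.norm_eq_abs, abs_of_pos (inv_pos.2 hMpos)]
    exact inv_mul_cancel₀ hMpos.ne'
  · intro z hz
    rw [norm_smul, Real.norm_eq_abs, abs_of_pos (inv_pos.2 hMpos), inv_mul_le_iff₀ hMpos]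
    rw [mul_comm]
    refine hball _ ?_
    rw [add_sub_cancel_left, norm_smul, Real.norm_eq_abs, abs_of_pos (inv_pos.2 hMpos),
      inv_mul_le_iff₀ hMpos]
    linarith

lemma straight {G : ℂ → ℂ} (hG : ContDiff ℝ 1 G) (hV : ∀ z, fderiv ℝ G z (G z) = 0) (x : ℂ) (s : ℝ) :
    G (x + s • G x) = G x := by
  have hGd : Differentiable ℝ G := hG.differentiable (by norm_num)
  have hHc : Continuous fun t : ℝ => ‖fderiv ℝ G (x + t • (s • G x))‖ :=
    ((hG.continuous_fderiv (by norm_num)).comp (by fun_prop)).norm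
  obtain ⟨K, hK⟩ := (isCompact_Icc (a := (0:ℝ)) (b := 1)).bddAbove_image hHc.continuousOn
  have hF : ∀ t : ℝ, HasDerivAt (fun t : ℝ => G (x + t • (s • G x)) - G x)
      (fderiv ℝ G (x + t • (s • G x)) (s • G x)) t := fun t =>
    ((hGd (x + t • (s • G x))).hasFDerivAt.comp_hasDerivAt t (line_deriv x (s • G x) t)).sub_const _
  have := eq_zero_of_abs_deriv_le_mul_abs_self_of_eq_zero_right (K := |s| * K) (a := 0) (b := 1)
    (f := fun t : ℝ => G (x + t • (s • G x)) - G x)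
    (f' := fun t => fderiv ℝ G (x + t • (s • G x)) (s • G x))
    (fun t _ => (hF t).continuousAt.continuousWithinAt)
    (fun t _ => (hF t).hasDerivWithinAt) (by simp)
    (fun t ht => by
      have e : fderiv ℝ G (x + t • (s • G x)) (s • G x)
        = (-s) • fderiv ℝ G (x + t • (s • G x)) (G (x + t • (s • G x)) - G x) := by
        rw [map_sub, hV, map_smul, zero_sub, smul_neg, neg_smul, neg_neg]
      rw [e, norm_smul, norm_neg, Real.norm_eq_abs, mul_assoc]
      gcongr
      refine (ContinuousLinearMap.le_opNorm _ _).trans ?_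
      gcongr
      exact hK ⟨t, ⟨ht.1, ht.2.le⟩, rfl⟩)
    1 (by simp)
  simp only [one_smul] at this
  exact sub_eq_zero.1 this

lemma rigidity {U : ℂ → ℝ} {G : ℂ → ℂ} (hG : ContDiff ℝ 1 G)
    (hU : ∀ z, HasFDerivAt U (innerSL ℝ (G z)) z)
    (hV : ∀ z, fderiv ℝ G z (G z) = 0) {p : ℝ} (hp : ∀ z, ‖G z‖ = p) (x y : ℂ) : G x = G y := by
  have hp0 : 0 ≤ p := by rw [← hp x]; exact norm_nonneg _
  have hlin : ∀ (x : ℂ) (s : ℝ), U (x + s • G x) = U x + s * p ^ 2 := by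
    intro x s
    have hd : ∀ t : ℝ, HasDerivAt (fun t : ℝ => U (x + t • G x) - t * p ^ 2) 0 t := by
      intro t
      refine ((along hU x (G x) t).sub ((hasDerivAt_id t).mul_const (p ^ 2))).congr_deriv ?_
      rw [straight hG hV, real_inner_self_eq_norm_sq, hp]; ring
    have := is_const_of_deriv_eq_zero (fun t => (hd t).differentiableAt) (fun t => (hd t).deriv) s 0
    simp only [zero_smul, add_zero, zero_mul, sub_zero] at this
    linarith
  have hlip : ∀ a b, U a - U b ≤ p * ‖a - b‖ := by
    intro a b
    have := convex_univ.norm_image_sub_le_of_norm_hasFDerivWithin_le (f := U) (C := p)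
      (f' := fun z => innerSL ℝ (G z))
      (fun z _ => (hU z).hasFDerivWithinAt)
      (fun z hz => by rw [innerSL_apply_norm, hp])
      (mem_univ b) (mem_univ a)
    exact (le_abs_self _).trans this
  rcases hp0.eq_or_lt with h | hpos
  · have h1 := hp x
    have h2 := hp y
    rw [← h, norm_eq_zero] at h1 h2
    rw [h1, h2]
  have hall : ∀ t : ℝ, 0 ≤ t → t * (2 * p ^ 2 - p * ‖G x + G y‖) ≤ p * ‖x - y‖ + U y - U x := by
    intro t ht
    have h1 := hlip (x + t • G x) (y + (-t) • G y)
    rw [hlin, hlin] at h1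
    have h2 : ‖x + t • G x - (y + (-t) • G y)‖ ≤ ‖x - y‖ + t * ‖G x + G y‖ := by
      have e : x + t • G x - (y + (-t) • G y) = (x - y) + t • (G x + G y) := by module
      rw [e]
      refine (norm_add_le _ _).trans ?_
      rw [norm_smul, Real.norm_eq_abs, abs_of_nonneg ht]
    have h3 := mul_le_mul_of_nonneg_left h2 hp0
    linarith
  have hle : 2 * p ^ 2 - p * ‖G x + G y‖ ≤ 0 := by
    by_contra hcon
    push Not at hcon
    have h0 := hall 0 le_rfl
    rw [zero_mul] at h0
    have h1 := hall ((p * ‖x - y‖ + U y - U x + 1) / (2 * p ^ 2 - p * ‖G x + G y‖)) (by positivity)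
    rw [div_mul_cancel₀ _ hcon.ne'] at h1
    linarith
  have h2 : 2 * p ≤ ‖G x + G y‖ := by
    have : p * (2 * p) ≤ p * ‖G x + G y‖ := by linarith
    exact le_of_mul_le_mul_left this hpos
  have h3 := parallelogram_law_with_norm ℝ (G x) (G y)
  rw [hp, hp] at h3
  have h4 : ‖G x - G y‖ = 0 := by
    have : ‖G x - G y‖ * ‖G x - G y‖ ≤ 0 := by nlinarith
    nlinarith [norm_nonneg (G x - G y)]
  exact sub_eq_zero.1 (norm_eq_zero.1 h4)

lemma core {U : ℂ → ℝ} {G : ℂ → ℂ} (hG : ContDiff ℝ 1 G)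
    (hU : ∀ z, HasFDerivAt U (innerSL ℝ (G z)) z)
    (hsym : ∀ z a b, inner ℝ (fderiv ℝ G z a) b = inner ℝ a (fderiv ℝ G z b))
    (heq : ∀ z, inner ℝ (fderiv ℝ G z (G z)) (G z) = 0) (x y : ℂ) : G x = G y := by
  by_cases hall : ∀ z, G z = 0
  · rw [hall, hall]
  push Not at hall
  obtain ⟨c, hc⟩ := hall
  have hnz : ∀ z, G z ≠ 0 := nonvanish hG hsym heq c hc
  have hWc : Continuous fun z => (‖G z‖ ^ 2)⁻¹ • fderiv ℝ G z (G z) := by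
    have h1 := hG.continuous
    have hVc : Continuous fun z => fderiv ℝ G z (G z) :=
      (hG.continuous_fderiv (by norm_num)).clm_apply hG.continuous
    have h2 : Continuous fun z => (‖G z‖ ^ 2)⁻¹ :=
      Continuous.inv₀ (by fun_prop) fun z => pow_ne_zero 2 (norm_ne_zero_iff.2 (hnz z))
    exact h2.smul hVc
  have hW := W_zero (log_grad hG hsym hnz) hWc (log_expansion hG heq hnz rfl)
  have hV : ∀ z, fderiv ℝ G z (G z) = 0 := by
    intro z
    have := hW z
    rcases smul_eq_zero.1 this with h | h
    · exact absurd h (inv_ne_zero (pow_ne_zero 2 (norm_ne_zero_iff.2 (hnz z))))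
    · exact h
  have hconst : ∀ z, ‖G z‖ = ‖G 0‖ := by
    intro z
    have hd := hasFDerivAt_energy hG hsym
    have := is_const_of_fderiv_eq_zero (𝕜 := ℝ) (fun z => (hd z).differentiableAt)
      (fun z => by rw [(hd z).fderiv, hV, map_zero]) z 0
    have h2 : ‖G z‖ ^ 2 = ‖G 0‖ ^ 2 := by linarith
    exact (pow_left_inj₀ (norm_nonneg _) (norm_nonneg _) two_ne_zero).1 h2
  exact rigidity hG hU hV hconst x y

lemma clm_prod (L : ℝ × ℝ →L[ℝ] ℝ) (a b : ℝ) : L (a, b) = a * L (1, 0) + b * L (0, 1) := by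
  have : ((a, b) : ℝ × ℝ) = a • (1, 0) + b • (0, 1) := by simp
  rw [this, map_add, map_smul, map_smul]; simp

/-- **Aronsson**: every entire `C²` solution of the `∞`-Laplace equation
`u_x²u_xx + 2u_xu_yu_xy + u_y²u_yy = 0` over `ℝ²` is affine linear; i.e. the equation
`L_{1,0}[u] = 0` has the Bernstein property. -/
theorem aronsson_infinity_laplace_bernstein (u : ℝ × ℝ → ℝ) (hu : ContDiff ℝ 2 u)
    (hinf : ∀ p : ℝ × ℝ,
      ux u p ^ 2 * uxx u p + 2 * ux u p * uy u p * uxy u p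
        + uy u p ^ 2 * uyy u p = 0) :
    ∃ a b c : ℝ, ∀ x y : ℝ, u (x, y) = a * x + b * y + c := by
  have hud : Differentiable ℝ u := hu.differentiable (by norm_num)
  have hDu : ContDiff ℝ 1 (fderiv ℝ u) := hu.fderiv_right (by norm_num)
  have hDud : Differentiable ℝ (fderiv ℝ u) := hDu.differentiable (by norm_num)
  have hux : ContDiff ℝ 1 (ux u) := hDu.clm_apply contDiff_const
  have huy : ContDiff ℝ 1 (uy u) := hDu.clm_apply contDiff_const
  have huxd : Differentiable ℝ (ux u) := hux.differentiable (by norm_num)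
  have huyd : Differentiable ℝ (uy u) := huy.differentiable (by norm_num)
  have fx : ∀ p a, fderiv ℝ (ux u) p a = fderiv ℝ (fderiv ℝ u) p a (1, 0) := by
    intro p a
    have h := ((hDud p).hasFDerivAt.clm_apply (hasFDerivAt_const ((1 : ℝ), (0 : ℝ)) p))
    have h2 : HasFDerivAt (ux u) _ p := h
    rw [h2.fderiv]; simp
  have fy : ∀ p a, fderiv ℝ (uy u) p a = fderiv ℝ (fderiv ℝ u) p a (0, 1) := by
    intro p a
    have h := ((hDud p).hasFDerivAt.clm_apply (hasFDerivAt_const ((0 : ℝ), (1 : ℝ)) p))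
    have h2 : HasFDerivAt (uy u) _ p := h
    rw [h2.fderiv]; simp
  have hyx : ∀ p, fderiv ℝ (uy u) p (1, 0) = uxy u p := by
    intro p
    have hs : IsSymmSndFDerivAt ℝ u p := hu.contDiffAt.isSymmSndFDerivAt (by simp)
    rw [uxy, fx, fy]
    exact hs.eq _ _
  set L := Complex.equivRealProdCLM with hL
  have hLap : ∀ z : ℂ, L z = (z.re, z.im) := fun z => rfl
  set G : ℂ → ℂ := fun z => L.symm (ux u (L z), uy u (L z)) with hGdef
  have hG : ContDiff ℝ 1 G := by
    refine L.symm.contDiff.comp ?_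
    exact (hux.comp L.contDiff).prodMk (huy.comp L.contDiff)
  have hGre : ∀ z, (G z).re = ux u (L z) := fun z => rfl
  have hGim : ∀ z, (G z).im = uy u (L z) := fun z => rfl
  have hGf : ∀ z a, fderiv ℝ G z a = L.symm (fderiv ℝ (ux u) (L z) (L a), fderiv ℝ (uy u) (L z) (L a)) := by
    intro z a
    have h1 := (huxd (L z)).hasFDerivAt.comp z L.hasFDerivAt
    have h2 := (huyd (L z)).hasFDerivAt.comp z L.hasFDerivAt
    have h3 : HasFDerivAt G _ z := L.symm.hasFDerivAt.comp z (h1.prodMk h2)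
    rw [h3.fderiv]
    rfl
  have hre : ∀ z a, (fderiv ℝ G z a).re = a.re * uxx u (L z) + a.im * uxy u (L z) := by
    intro z a
    rw [hGf]
    change fderiv ℝ (ux u) (L z) (L a) = _
    rw [hLap a, clm_prod]; rfl
  have him : ∀ z a, (fderiv ℝ G z a).im = a.re * uxy u (L z) + a.im * uyy u (L z) := by
    intro z a
    rw [hGf]
    change fderiv ℝ (uy u) (L z) (L a) = _
    rw [hLap a, clm_prod, hyx]; rfl
  have hU : ∀ z, HasFDerivAt (fun z => u (L z)) (innerSL ℝ (G z)) z := by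
    intro z
    refine ((hud (L z)).hasFDerivAt.comp z L.hasFDerivAt).congr_fderiv ?_
    ext1 a
    rw [innerSL_apply_apply, cinner]
    change fderiv ℝ u (L z) (L a) = _
    rw [hLap a, clm_prod, hGre, hGim, ux, uy]; ring
  have hsym : ∀ z a b, inner ℝ (fderiv ℝ G z a) b = inner ℝ a (fderiv ℝ G z b) := by
    intro z a b
    rw [cinner, cinner, hre, him, hre, him]; ring
  have heq : ∀ z, inner ℝ (fderiv ℝ G z (G z)) (G z) = 0 := by
    intro z
    rw [cinner, hre, him, hGre, hGim]
    linear_combination hinf (L z)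
  have hconst := core hG hU hsym heq
  refine ⟨ux u (0, 0), uy u (0, 0), u (0, 0), fun x y => ?_⟩
  have hder : ∀ p : ℝ × ℝ, HasFDerivAt (fun p : ℝ × ℝ => u p - (ux u (0, 0) * p.1 + uy u (0, 0) * p.2))
      (0 : ℝ × ℝ →L[ℝ] ℝ) p := by
    intro p
    have h1 := (hud p).hasFDerivAt.sub (((hasFDerivAt_fst (𝕜 := ℝ) (p := p)).const_mul (ux u (0, 0))).add
      ((hasFDerivAt_snd (𝕜 := ℝ) (p := p)).const_mul (uy u (0, 0))))
    refine h1.congr_fderiv ?_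
    have e := hconst (L.symm p) 0
    have e1 : ux u p = ux u (0, 0) := by
      have := congrArg Complex.re e
      rw [hGre, hGre, L.apply_symm_apply, map_zero] at this
      exact this
    have e2 : uy u p = uy u (0, 0) := by
      have := congrArg Complex.im e
      rw [hGim, hGim, L.apply_symm_apply, map_zero] at this
      exact this
    refine ContinuousLinearMap.ext fun a => ?_
    obtain ⟨a1, a2⟩ := a
    have := clm_prod (fderiv ℝ u p) a1 a2
    change fderiv ℝ u p (a1, a2) - (ux u (0, 0) * a1 + uy u (0, 0) * a2) = 0
    rw [this, ← e1, ← e2, ux, uy]; ring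
  have := is_const_of_fderiv_eq_zero (𝕜 := ℝ) (fun z => (hder z).differentiableAt)
    (fun z => (hder z).fderiv) (x, y) (0, 0)
  simp only [mul_zero, add_zero, sub_zero] at this
  linarith
end
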